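/- Let K be a finite dimensional compact metric space and σ: K^ℤ → K^ℤ the full shift on the alphabet K. Then for every n ≥ 1, (dim Kⁿ − 1)/n ≤ mdim(K^ℤ, σ) ≤ (dim Kⁿ)/n. -/

import Mathlib

open Filter Set
open scoped ENNReal

namespace MeanDimPaper

variable {X : Type*} [TopologicalSpace X]

/-- `α` is an open cover of `X`. -/
def IsOpenCover (α : Set (Set X)) : Prop :=
  (∀ U ∈ α, IsOpen U) ∧ ⋃₀ α = Set.univ

/-- The order of a cover `α`: the maximum `n ≥ 0` such that there exist `n + 1`
pairwise distinct members of `α` with nonempty common intersection. -/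
noncomputable def ord (α : Set (Set X)) : ℕ∞ :=
  ⨆ n ∈ {n : ℕ | ∃ f : Fin (n + 1) → Set X,
      Function.Injective f ∧ (∀ i, f i ∈ α) ∧ (⋂ i, f i).Nonempty}, (n : ℕ∞)

/-- `β` refines `α`: every member of `β` is contained in some member of `α`. -/
def Refines (β α : Set (Set X)) : Prop := ∀ V ∈ β, ∃ U ∈ α, V ⊆ U

/-- `D(α)`: the minimum of `ord β` over open covers `β` refining `α`. -/
noncomputable def covD (α : Set (Set X)) : ℕ∞ :=
  ⨅ β ∈ {β : Set (Set X) | IsOpenCover β ∧ Refines β α}, ord β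

/-- Topological (covering) dimension: the supremum of `D(α)` over open covers `α`. -/
noncomputable def topDim (X : Type*) [TopologicalSpace X] : ℕ∞ :=
  ⨆ α ∈ {α : Set (Set X) | IsOpenCover α}, covD α

/-- Diameter of a set with respect to a distance function `d`. -/
noncomputable def diamD (d : X → X → ℝ) (U : Set X) : ℝ :=
  sSup {r | ∃ x ∈ U, ∃ y ∈ U, r = d x y}

/-- Mesh of a cover: the supremum of the diameters of its members. -/
noncomputable def mesh (d : X → X → ℝ) (α : Set (Set X)) : ℝ :=
  sSup (diamD d '' α)

/-- `widim_ε(X, d)`: the minimum of `D(α)` over open covers `α` with `mesh(α, d) < ε`. -/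
noncomputable def widim (ε : ℝ) (d : X → X → ℝ) : ℕ∞ :=
  ⨅ α ∈ {α : Set (Set X) | IsOpenCover α ∧ mesh d α < ε}, covD α

/-- `d` is a metric on `X` compatible with the topology of `X`. -/
structure IsCompatMetric {X : Type*} [TopologicalSpace X] (d : X → X → ℝ) : Prop where
  refl : ∀ x, d x x = 0
  eq_of : ∀ x y, d x y = 0 → x = y
  symm : ∀ x y, d x y = d y x
  triangle : ∀ x y z, d x z ≤ d x y + d y z
  isOpen_iff : ∀ U : Set X, IsOpen U ↔ ∀ x ∈ U, ∃ ε > 0, ∀ y, d x y < ε → y ∈ U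

/-- The dynamical distance `d_n(x, y) = max_{0 ≤ i < n} d(Tⁱ x, Tⁱ y)`. -/
noncomputable def dynDist (d : X → X → ℝ) (T : X → X) (n : ℕ) (x y : X) : ℝ :=
  sSup {r | ∃ i < n, r = d (T^[i] x) (T^[i] y)}

/-- Mean dimension `mdim(X, T)` computed with the metric `d`:
`lim_{ε → 0} lim_{n → ∞} widim_ε(X, d_n) / n`.  The inner limit exists (by
subadditivity of `n ↦ widim_ε(X, d_n)`) so it coincides with the liminf, and the inner
quantity is monotone as `ε` decreases, so the limit as `ε → 0` is the supremum over
`ε > 0`. -/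
noncomputable def mdim (T : X → X) (d : X → X → ℝ) : ℝ≥0∞ :=
  ⨆ (ε : ℝ) (_ : 0 < ε),
    Filter.liminf (fun n : ℕ => (widim ε (dynDist d T n) : ℝ≥0∞) / (n : ℝ≥0∞)) Filter.atTop

/-- The full shift `σ` on the alphabet `K`: `σ((xₙ)ₙ) = (xₙ₊₁)ₙ`. -/
def shift (K : Type*) : (ℤ → K) → ℤ → K := fun x n => x (n + 1)

/-!
Write `m = dim Kⁿ`. For the upper bound, Ostrand's construction covers a space mapped to `k` copies
of an `m`-dimensional space by sets small in every copy, with order at most `k m`; a window of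
length `N` in `K^ℤ` is `N / n` blocks in `Kⁿ`, up to a bounded number.

For the lower bound, dimension at least `m` yields an essential map of a closed subset `S` of `Kⁿ`
to a simplex, and by Hopf's extension theorem a nonzero integral Alexander–Spanier class of degree
`m` of a pair `(S, A)`. Integral classes may die in products, but either this class survives with
rational coefficients, or some multiple of it is killed by a prime `p` and is thus the Bockstein of
a nonzero class mod `p`, one degree lower; so there is a nonzero class over a field, in degree
`q ≥ m - 1`. Over a field cross products of nonzero classes are nonzero, so `S^k` carries a nonzero
class of degree `k q` detected at a scale independent of `k`, which forces fine open covers of `S^k`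
to have order at least `k q`. As `S^k` embeds in a window of length `k n`, this gives
`(m - 1) / n ≤ mdim`.

Cohomology is defined through cochains on lists of points of mutual distance less than a scale `ε`,
a class being essential if it does not become a coboundary at any smaller scale.
-/

/-- Chains of the augmented ordered complex on a vertex set `V`: formal integral combinations of
lists of vertices. A list of length `q + 1` is a `q`-simplex, and the empty list spans the
augmentation degree. -/
abbrev OrderedChain (V : Type*) := FreeAbelianGroup (List V)

namespace OrderedChain

open FreeAbelianGroup

section Boundary

variable {V B : Type*} [AddCommGroup B]

/-- The cone operator: join every simplex of a chain with the vertex `v`, placed first. -/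
def cone (v : V) : OrderedChain V →+ OrderedChain V := FreeAbelianGroup.map (List.cons v)

@[simp]
theorem cone_of (v : V) (l : List V) : cone v (of l) = of (v :: l) := by simp [cone]

/-- The alternating sum of the faces of a single ordered simplex. -/
def faceSum : List V → OrderedChain V
  | [] => 0
  | v :: t => of t - cone v (faceSum t)

/-- The boundary operator of the augmented ordered complex. -/
def boundary : OrderedChain V →+ OrderedChain V := lift faceSum

@[simp]
theorem boundary_of (l : List V) : boundary (of l) = faceSum l := by simp [boundary]

theorem hom_congr_of {f g : OrderedChain V →+ B} (h : ∀ l, f (of l) = g (of l))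
    (c : OrderedChain V) : f c = g c :=
  DFunLike.congr_fun (FreeAbelianGroup.lift_ext _ _ h) c

theorem boundary_cone (v : V) (c : OrderedChain V) :
    boundary (cone v c) = c - cone v (boundary c) :=
  hom_congr_of (f := boundary.comp (cone v)) (g := AddMonoidHom.id _ - (cone v).comp boundary)
    (fun l ↦ by simp [faceSum]) c

theorem boundary_faceSum (l : List V) : boundary (faceSum l) = 0 := by
  induction l with
  | nil => simp [faceSum]
  | cons v t ih => simp [faceSum, boundary_cone, ih]

theorem boundary_map {W : Type*} (f : V → W) (c : OrderedChain V) :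
    boundary (FreeAbelianGroup.map (List.map f) c) =
      FreeAbelianGroup.map (List.map f) (boundary c) := by
  have hcone (v : V) (c : OrderedChain V) : cone (f v) (FreeAbelianGroup.map (List.map f) c) =
      FreeAbelianGroup.map (List.map f) (cone v c) :=
    hom_congr_of (f := (cone (f v)).comp (FreeAbelianGroup.map (List.map f)))
      (g := (FreeAbelianGroup.map (List.map f)).comp (cone v)) (fun l ↦ by simp) c
  have hface (l : List V) :
      faceSum (l.map f) = FreeAbelianGroup.map (List.map f) (faceSum l) := by
    induction l with
    | nil => simp [faceSum]
    | cons v t ih => simp [faceSum, ih, hcone]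
  exact hom_congr_of (f := boundary.comp (FreeAbelianGroup.map (List.map f)))
    (g := (FreeAbelianGroup.map (List.map f)).comp boundary) (fun l ↦ by simp [hface]) c

/-- The subgroup of chains all of whose simplices satisfy `P`. -/
def supported (P : List V → Prop) : AddSubgroup (OrderedChain V) :=
  AddSubgroup.closure (of '' {l | P l})

variable {P Q : List V → Prop} {c : OrderedChain V}

theorem of_mem_supported {l : List V} (h : P l) : of l ∈ supported P :=
  AddSubgroup.subset_closure ⟨l, h, rfl⟩

theorem map_mem_of_mem_supported {S : AddSubgroup B} (f : OrderedChain V →+ B)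
    (h : ∀ l, P l → f (of l) ∈ S) (hc : c ∈ supported P) : f c ∈ S := by
  have hle : supported P ≤ S.comap f := by
    rw [supported, AddSubgroup.closure_le]
    rintro _ ⟨l, hl, rfl⟩
    exact h l hl
  exact hle hc

theorem hom_congr_of_mem_supported {f g : OrderedChain V →+ B}
    (h : ∀ l, P l → f (of l) = g (of l)) (hc : c ∈ supported P) : f c = g c := by
  have := map_mem_of_mem_supported (S := ⊥) (f - g) (fun l hl ↦ by simp [h l hl]) hc
  simpa [sub_eq_zero] using this

theorem supported_mono (h : ∀ l, P l → Q l) : supported P ≤ supported Q :=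
  AddSubgroup.closure_mono (Set.image_mono h)

theorem eq_zero_of_mem_supported (h : ∀ l, ¬ P l) (hc : c ∈ supported P) : c = 0 :=
  hom_congr_of_mem_supported (f := AddMonoidHom.id _) (g := 0) (fun l hl ↦ (h l hl).elim) hc

theorem faceSum_mem_supported (l : List V) :
    faceSum l ∈ supported fun s ↦ s.length + 1 = l.length ∧ s.Sublist l := by
  induction l with
  | nil => exact zero_mem _
  | cons v t ih =>
    refine sub_mem (of_mem_supported ⟨rfl, List.sublist_cons_self v t⟩) ?_
    refine map_mem_of_mem_supported (cone v) ?_ ih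
    rintro s ⟨hlen, hsub⟩
    rw [cone_of]
    exact of_mem_supported ⟨by simp [hlen], hsub.cons_cons v⟩

theorem hom_faceSum_mem {f : OrderedChain V →+ B} {S : AddSubgroup B} {v : V} {t : List V}
    (h : ∀ s : List V, s.length = t.length → s.Sublist (v :: t) → f (of s) ∈ S) :
    f (faceSum (v :: t)) ∈ S :=
  map_mem_of_mem_supported f (fun s hs ↦ h s (by simpa using hs.1) hs.2)
    (faceSum_mem_supported (v :: t))

theorem hom_faceSum_congr {f g : OrderedChain V →+ B} {v : V} {t : List V}
    (h : ∀ s : List V, s.length = t.length → s.Sublist (v :: t) → f (of s) = g (of s)) :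
    f (faceSum (v :: t)) = g (faceSum (v :: t)) :=
  hom_congr_of_mem_supported (fun s hs ↦ h s (by simpa using hs.1) hs.2)
    (faceSum_mem_supported (v :: t))

theorem face_induction {motive : List V → Prop} (nil : motive [])
    (cons : ∀ v t, (∀ s : List V, s.length = t.length → s.Sublist (v :: t) → motive s) →
      motive (v :: t)) (l : List V) : motive l := by
  induction hn : l.length generalizing l with
  | zero => exact List.length_eq_zero_iff.1 hn ▸ nil
  | succ n ih =>
    obtain ⟨v, t, rfl⟩ := List.exists_cons_of_length_eq_add_one hn
    exact cons v t fun s hs _ ↦ ih s (hs.trans (by simpa using hn))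

end Boundary

section BoundaryRec

variable {V B : Type*} [AddCommGroup B] (base : B) (step : V → List V → B → B)

/-- `boundaryRec` on simplices, by recursion on a bound for the number of vertices. -/
def boundaryRecAux : ℕ → List V → B
  | 0, _ => base
  | _ + 1, [] => base
  | n + 1, v :: t => step v t (lift (boundaryRecAux n) (faceSum (v :: t)))

/-- The additive map whose value on a simplex is `step` applied to its value on the boundary of that
simplex, with value `base` on the empty simplex: the recursion behind the method of acyclic
models. -/
def boundaryRec : OrderedChain V →+ B := lift fun l ↦ boundaryRecAux base step l.length l

@[simp]
theorem boundaryRec_nil : boundaryRec base step (of []) = base := by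
  simp [boundaryRec, boundaryRecAux]

theorem boundaryRec_cons (v : V) (t : List V) :
    boundaryRec base step (of (v :: t)) =
      step v t (boundaryRec base step (faceSum (v :: t))) := by
  have h : lift (boundaryRecAux base step t.length) (faceSum (v :: t)) =
      boundaryRec base step (faceSum (v :: t)) :=
    hom_faceSum_congr fun s hs _ ↦ by simp [boundaryRec, hs]
  rw [← h]
  simp [boundaryRec, boundaryRecAux]

end BoundaryRec

section Homotopy

variable {V : Type*} (Ψ : OrderedChain V →+ OrderedChain V)

/-- A chain homotopy from a chain map `Ψ` to the identity, built by coning off. -/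
def coneHomotopy : OrderedChain V →+ OrderedChain V :=
  boundaryRec 0 fun v t c ↦ cone v (of (v :: t) - Ψ (of (v :: t)) - c)

variable {Ψ}

theorem boundary_coneHomotopy (hΨ : ∀ c, boundary (Ψ c) = Ψ (boundary c))
    (hnil : Ψ (of []) = of []) (c : OrderedChain V) :
    boundary (coneHomotopy Ψ c) + coneHomotopy Ψ (boundary c) = c - Ψ c := by
  refine hom_congr_of (f := boundary.comp (coneHomotopy Ψ) + (coneHomotopy Ψ).comp boundary)
    (g := AddMonoidHom.id _ - Ψ) (fun l ↦ ?_) c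
  induction l using face_induction with
  | nil => simp [coneHomotopy, faceSum, hnil]
  | cons v t ih =>
    have hface : boundary (coneHomotopy Ψ (faceSum (v :: t))) =
        faceSum (v :: t) - Ψ (faceSum (v :: t)) := by
      simpa [boundary_faceSum] using hom_faceSum_congr ih
    have hcycle : boundary (of (v :: t) - Ψ (of (v :: t)) -
        coneHomotopy Ψ (faceSum (v :: t))) = 0 := by
      rw [map_sub, map_sub, hΨ, boundary_of, hface, sub_self]
    have hcons : coneHomotopy Ψ (of (v :: t)) = cone v (of (v :: t) - Ψ (of (v :: t)) -
        coneHomotopy Ψ (faceSum (v :: t))) := boundaryRec_cons ..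
    simp only [AddMonoidHom.add_apply, AddMonoidHom.comp_apply, AddMonoidHom.sub_apply,
      AddMonoidHom.id_apply, boundary_of, hcons, boundary_cone, hcycle, map_zero, sub_zero,
      sub_add_cancel]

theorem coneHomotopy_mem_supported {K : List V → Set V}
    (hmono : ∀ s l : List V, s.Sublist l → K s ⊆ K l) (hself : ∀ l : List V, ∀ x ∈ l, x ∈ K l)
    (hΨ : ∀ l, Ψ (of l) ∈ supported fun s ↦ s.length = l.length ∧ ∀ x ∈ s, x ∈ K l)
    (l : List V) :
    coneHomotopy Ψ (of l) ∈ supported fun s ↦ s.length = l.length + 1 ∧ ∀ x ∈ s, x ∈ K l := by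
  induction l using face_induction with
  | nil => simp [coneHomotopy, zero_mem]
  | cons v t ih =>
    rw [coneHomotopy, boundaryRec_cons, ← coneHomotopy]
    refine map_mem_of_mem_supported
      (P := fun s ↦ s.length = (v :: t).length ∧ ∀ x ∈ s, x ∈ K (v :: t)) (cone v) ?_ ?_
    · rintro s ⟨hlen, hs⟩
      rw [cone_of]
      exact of_mem_supported
        ⟨by simp [hlen], List.forall_mem_cons.2 ⟨hself _ _ List.mem_cons_self, hs⟩⟩
    · refine sub_mem (sub_mem (of_mem_supported ⟨rfl, hself _⟩) (hΨ _)) ?_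
      refine hom_faceSum_mem fun s hlen hsub ↦ supported_mono ?_ (ih s hlen hsub)
      rintro r ⟨hr, hrK⟩
      exact ⟨by simp [hr, hlen], fun x hx ↦ hmono _ _ hsub (hrK x hx)⟩

end Homotopy

section Sorting

variable {V : Type*} [LinearOrder V]

/-- The cone operator of the oriented complex: simplices already containing `v` are sent to `0`. -/
def orientedCone (v : V) : OrderedChain V →+ OrderedChain V :=
  lift fun s ↦ if v ∈ s then 0 else of (v :: s)

@[simp]
theorem orientedCone_of (v : V) (s : List V) :
    orientedCone v (of s) = if v ∈ s then 0 else of (v :: s) := by simp [orientedCone]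

theorem orientedCone_cone (v : V) (c : OrderedChain V) : orientedCone v (cone v c) = 0 :=
  hom_congr_of (f := (orientedCone v).comp (cone v)) (g := 0) (fun l ↦ by simp) c

theorem orientedCone_faceSum {v : V} {s : List V} (hv : v ∉ s) :
    orientedCone v (faceSum s) = cone v (faceSum s) :=
  hom_congr_of_mem_supported (fun r hr ↦ by simp [mt (hr.2.subset ·) hv])
    (faceSum_mem_supported s)

theorem boundary_orientedCone {v : V} {c : OrderedChain V}
    (hc : c ∈ supported fun s ↦ s.Pairwise (· < ·) ∧ ∀ x ∈ s, v ≤ x) :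
    boundary (orientedCone v c) = c - orientedCone v (boundary c) := by
  refine hom_congr_of_mem_supported (f := boundary.comp (orientedCone v))
    (g := AddMonoidHom.id _ - (orientedCone v).comp boundary) ?_ hc
  rintro s ⟨hsorted, hle⟩
  by_cases hv : v ∈ s
  · obtain ⟨w, t, rfl⟩ := List.exists_cons_of_ne_nil (List.ne_nil_of_mem hv)
    have hlt := (List.pairwise_cons.1 hsorted).1
    obtain rfl : v = w := (List.mem_cons.1 hv).resolve_right fun h ↦
      (hle w List.mem_cons_self).not_gt (hlt v h)
    have hvt : v ∉ t := fun h ↦ lt_irrefl _ (hlt v h)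
    simp [faceSum, orientedCone_cone, hvt]
  · simp [hv, orientedCone_faceSum hv, faceSum]

/-- The smallest vertex of the nonempty list `v :: t`. -/
def leastVertex (v : V) (t : List V) : V :=
  (v :: t).minimum_of_length_pos (Nat.succ_pos _)

theorem leastVertex_mem (v : V) (t : List V) : leastVertex v t ∈ v :: t :=
  List.minimum_of_length_pos_mem _

theorem leastVertex_le {v x : V} {t : List V} (hx : x ∈ v :: t) : leastVertex v t ≤ x :=
  List.minimum_of_length_pos_le_of_mem hx _

/-- The chain map putting the vertices of every simplex in increasing order, with the sign of the
permutation, and killing the simplices with a repeated vertex. It is defined by coning boundaries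
off at the smallest vertex, so that no sign has to be written down. -/
def sort : OrderedChain V →+ OrderedChain V :=
  boundaryRec (of []) fun v t ↦ orientedCone (leastVertex v t)

@[simp]
theorem sort_nil : sort (of ([] : List V)) = of [] := boundaryRec_nil ..

theorem sort_cons (v : V) (t : List V) :
    sort (of (v :: t)) = orientedCone (leastVertex v t) (sort (faceSum (v :: t))) :=
  boundaryRec_cons ..

theorem sort_mem_supported (l : List V) :
    sort (of l) ∈ supported fun s ↦ s.length = l.length ∧ s ⊆ l ∧ s.Pairwise (· < ·) := by
  induction l using face_induction with
  | nil => exact sort_nil (V := V) ▸ of_mem_supported (by simp)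
  | cons v t ih =>
    have hface : sort (faceSum (v :: t)) ∈
        supported fun s ↦ s.length = t.length ∧ s ⊆ v :: t ∧ s.Pairwise (· < ·) := by
      refine hom_faceSum_mem fun s hlen hsub ↦ supported_mono ?_ (ih s hlen hsub)
      rintro r ⟨hr, hrs, hsorted⟩
      exact ⟨hr.trans hlen, fun x hx ↦ hsub.subset (hrs hx), hsorted⟩
    rw [sort_cons]
    refine map_mem_of_mem_supported _ ?_ hface
    rintro s ⟨hlen, hs, hsorted⟩
    rw [orientedCone_of]
    split_ifs with h
    · exact zero_mem _
    · refine of_mem_supported ⟨by simp [hlen], List.cons_subset.2 ⟨leastVertex_mem v t, hs⟩, ?_⟩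
      refine List.pairwise_cons.2 ⟨fun x hx ↦ ?_, hsorted⟩
      exact (leastVertex_le (hs hx)).lt_of_ne (ne_of_mem_of_not_mem hx h).symm

theorem boundary_sort (c : OrderedChain V) : boundary (sort c) = sort (boundary c) := by
  refine hom_congr_of (f := boundary.comp sort) (g := sort.comp boundary) (fun l ↦ ?_) c
  induction l using face_induction with
  | nil => simp [faceSum]
  | cons v t ih =>
    have hcycle : boundary (sort (faceSum (v :: t))) = 0 := by
      simpa [boundary_faceSum] using hom_faceSum_congr ih
    have hsupp : sort (faceSum (v :: t)) ∈
        supported fun s ↦ s.Pairwise (· < ·) ∧ ∀ x ∈ s, leastVertex v t ≤ x := by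
      refine hom_faceSum_mem fun s _ hsub ↦ supported_mono ?_ (sort_mem_supported s)
      rintro r ⟨-, hrs, hsorted⟩
      exact ⟨hsorted, fun x hx ↦ leastVertex_le (hsub.subset (hrs hx))⟩
    simp [sort_cons, boundary_orientedCone hsupp, hcycle]

theorem sort_eq_zero_of_card_lt {l : List V} {s : Finset V} (hs : ∀ x ∈ l, x ∈ s)
    (h : s.card < l.length) : sort (of l) = 0 := by
  refine eq_zero_of_mem_supported ?_ (sort_mem_supported l)
  rintro r ⟨hlen, hsub, hsorted⟩
  have hcard : r.toFinset.card ≤ s.card :=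
    Finset.card_le_card fun x hx ↦ hs x (hsub (List.mem_toFinset.1 hx))
  rw [List.toFinset_card_of_nodup (hsorted.imp ne_of_lt)] at hcard
  omega

theorem sort_eq_zero_of_not_nodup {l : List V} (h : ¬ l.Nodup) : sort (of l) = 0 :=
  sort_eq_zero_of_card_lt (s := l.toFinset) (fun _ ↦ List.mem_toFinset.2) <|
    (List.toFinset_card_le l).lt_of_ne fun hcard ↦
      h (Multiset.toFinset_card_eq_card_iff_nodup (m := (l : Multiset V)).1 hcard)

theorem sort_of_sorted {l : List V} (h : l.Pairwise (· < ·)) : sort (of l) = of l := by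
  induction l using face_induction with
  | nil => exact sort_nil
  | cons v t ih =>
    have hlt := (List.pairwise_cons.1 h).1
    have hv : leastVertex v t = v := by
      refine (leastVertex_le List.mem_cons_self).antisymm ?_
      rcases List.mem_cons.1 (leastVertex_mem v t) with heq | hmem
      · exact heq.ge
      · exact (hlt _ hmem).le
    have hface : sort (faceSum (v :: t)) = faceSum (v :: t) :=
      hom_faceSum_congr (g := AddMonoidHom.id _) fun s hlen hsub ↦ ih s hlen hsub (h.sublist hsub)
    have hvt : v ∉ t := fun hmem ↦ lt_irrefl _ (hlt v hmem)
    rw [sort_cons, hface, hv, faceSum, map_sub, orientedCone_cone, sub_zero, orientedCone_of,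
      if_neg hvt]

end Sorting

end OrderedChain

section Cochain

open FreeAbelianGroup OrderedChain

variable {V W F G : Type*} [AddCommGroup F] [AddCommGroup G]

/-- Precomposition of cochains with a homomorphism of chain groups; an `F`-valued cochain is encoded
by its values `List W → F` on simplices. -/
def pullback (Ψ : OrderedChain V →+ OrderedChain W) : (List W → F) →+ (List V → F) where
  toFun u l := lift u (Ψ (of l))
  map_zero' := by
    funext l
    exact hom_congr_of (f := lift (0 : List W → F)) (g := 0) (fun _ ↦ by simp) _
  map_add' u v := by
    funext l
    exact lift_add_apply u v _

theorem pullback_apply (Ψ : OrderedChain V →+ OrderedChain W) (u : List W → F) (l : List V) :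
    pullback Ψ u l = lift u (Ψ (of l)) := rfl

theorem lift_pullback (Ψ : OrderedChain V →+ OrderedChain W) (u : List W → F)
    (c : OrderedChain V) : lift (pullback Ψ u) c = lift u (Ψ c) :=
  hom_congr_of (g := (lift u).comp Ψ) (fun l ↦ by simp [pullback_apply]) c

theorem pullback_map (f : V → W) (u : List W → F) :
    pullback (FreeAbelianGroup.map (List.map f)) u = u ∘ List.map f := by
  funext l
  simp [pullback_apply]

theorem pullback_hom_comp (Ψ : OrderedChain V →+ OrderedChain W) (g : F →+ G) (u : List W → F) :
    pullback Ψ (g ∘ u) = g ∘ pullback Ψ u := by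
  funext l
  exact hom_congr_of (f := lift (g ∘ u)) (g := g.comp (lift u)) (fun l ↦ by simp) _

theorem pullback_smul {M : Type*} [Monoid M] [DistribMulAction M F]
    (Ψ : OrderedChain V →+ OrderedChain W) (a : M) (u : List W → F) :
    pullback Ψ (a • u) = a • pullback Ψ u :=
  pullback_hom_comp Ψ (DistribSMul.toAddMonoidHom F a) u

theorem pullback_congr {Ψ : OrderedChain V →+ OrderedChain W} {P : List W → Prop} {l : List V}
    {u v : List W → F} (hΨ : Ψ (of l) ∈ supported P) (h : ∀ s, P s → u s = v s) :
    pullback Ψ u l = pullback Ψ v l :=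
  hom_congr_of_mem_supported (f := lift u) (g := lift v) (fun s hs ↦ by simpa using h s hs) hΨ

theorem pullback_eq_zero {Ψ : OrderedChain V →+ OrderedChain W} {P : List W → Prop} {l : List V}
    {u : List W → F} (hΨ : Ψ (of l) ∈ supported P) (h : ∀ s, P s → u s = 0) :
    pullback Ψ u l = 0 :=
  (pullback_congr (v := 0) hΨ h).trans (congrFun (map_zero (pullback Ψ)) l)

/-- The coboundary of a cochain. -/
def coboundary : (List V → F) →+ (List V → F) := pullback boundary

theorem coboundary_apply (u : List V → F) (l : List V) : coboundary u l = lift u (faceSum l) := by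
  simp [coboundary, pullback_apply]

theorem coboundary_pullback {Ψ : OrderedChain V →+ OrderedChain W}
    (hΨ : ∀ c, boundary (Ψ c) = Ψ (boundary c)) (u : List W → F) :
    coboundary (pullback Ψ u) = pullback Ψ (coboundary u) := by
  funext l
  simp only [coboundary, pullback_apply, lift_pullback, hΨ]

theorem coboundary_coboundary (u : List V → F) : coboundary (coboundary u) = 0 := by
  funext l
  simp [coboundary, pullback_apply, lift_pullback, boundary_faceSum]

theorem coboundary_comp_map (f : V → W) (u : List W → F) :
    coboundary (u ∘ List.map f) = coboundary u ∘ List.map f := by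
  simpa only [pullback_map] using coboundary_pullback (boundary_map f) u

theorem coboundary_hom_comp (g : F →+ G) (u : List V → F) :
    coboundary (g ∘ u) = g ∘ coboundary u :=
  pullback_hom_comp boundary g u

theorem coboundary_smul {M : Type*} [Monoid M] [DistribMulAction M F] (a : M) (u : List V → F) :
    coboundary (a • u) = a • coboundary u :=
  pullback_smul boundary a u

theorem coboundary_congr {l : List V} {u v : List V → F}
    (h : ∀ s : List V, s.length + 1 = l.length → s.Sublist l → u s = v s) :
    coboundary u l = coboundary v l :=
  pullback_congr (boundary_of l ▸ faceSum_mem_supported l) fun s hs ↦ h s hs.1 hs.2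

theorem coboundary_eq_zero {l : List V} {u : List V → F}
    (h : ∀ s : List V, s.length + 1 = l.length → s.Sublist l → u s = 0) : coboundary u l = 0 :=
  pullback_eq_zero (boundary_of l ▸ faceSum_mem_supported l) fun s hs ↦ h s hs.1 hs.2

theorem coboundary_nil (u : List V → F) : coboundary u [] = 0 := by
  simp [coboundary_apply, faceSum]

theorem coboundary_cons (u : List V → F) (v : V) (t : List V) :
    coboundary u (v :: t) = u t - coboundary (fun s ↦ u (v :: s)) t := by
  have hcone : lift u (cone v (faceSum t)) = lift (fun s ↦ u (v :: s)) (faceSum t) :=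
    hom_congr_of (f := (lift u).comp (cone v)) (fun s ↦ by simp) _
  simp [coboundary_apply, faceSum, hcone]

theorem coboundary_pullback_coneHomotopy {Ψ : OrderedChain V →+ OrderedChain V}
    (hΨ : ∀ c, boundary (Ψ c) = Ψ (boundary c)) (hnil : Ψ (of []) = of []) (u : List V → F) :
    pullback (coneHomotopy Ψ) (coboundary u) + coboundary (pullback (coneHomotopy Ψ) u) =
      u - pullback Ψ u := by
  funext l
  have h := congrArg (lift u) (boundary_coneHomotopy hΨ hnil (of l))
  simpa [coboundary, pullback_apply, lift_pullback] using h

end Cochain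

section CoverOrder

variable {X : Type*}

theorem ord_le_iff {α : Set (Set X)} {n : ℕ} :
    ord α ≤ n ↔ ∀ s : Finset (Set X), (s : Set (Set X)) ⊆ α → (∃ x, ∀ V ∈ s, x ∈ V) →
      s.card ≤ n + 1 := by
  constructor
  · intro h s hs hx
    by_contra! hcard
    obtain ⟨t, hts, ht⟩ := Finset.exists_subset_card_eq (Nat.succ_le_of_lt hcard)
    have hmem : n + 1 ∈ {k : ℕ | ∃ f : Fin (k + 1) → Set X,
        Function.Injective f ∧ (∀ i, f i ∈ α) ∧ (⋂ i, f i).Nonempty} := by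
      refine ⟨fun i ↦ (t.equivFinOfCardEq ht).symm i,
        Subtype.val_injective.comp (t.equivFinOfCardEq ht).symm.injective,
        fun i ↦ hs (hts (Subtype.prop _)), ?_⟩
      obtain ⟨x, hx⟩ := hx
      exact ⟨x, Set.mem_iInter.2 fun i ↦ hx _ (hts (Subtype.prop _))⟩
    have hle : ((n + 1 : ℕ) : ℕ∞) ≤ n := (le_iSup₂_of_le (n + 1) hmem le_rfl).trans h
    exact absurd (Nat.cast_le.1 hle) (by omega)
  · intro h
    refine iSup₂_le fun k ↦ ?_
    rintro ⟨f, hf, hfα, x, hx⟩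
    have hcard := h (Finset.univ.map ⟨f, hf⟩) (by simpa [Set.range_subset_iff] using hfα)
      ⟨x, by simpa using hx⟩
    simpa using hcard

theorem card_le_of_ord_lt {α : Set (Set X)} {q : ℕ} (h : ord α < q) {s : Finset (Set X)}
    (hs : (s : Set (Set X)) ⊆ α) {x : X} (hx : ∀ V ∈ s, x ∈ V) : s.card ≤ q := by
  obtain ⟨n, hn⟩ := ENat.ne_top_iff_exists.1 h.ne_top
  rw [← hn, Nat.cast_lt] at h
  exact (ord_le_iff.1 hn.ge s hs ⟨x, hx⟩).trans h

end CoverOrder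

section MetricCochain

open FreeAbelianGroup OrderedChain

variable {X : Type*} [PseudoMetricSpace X]

/-- The simplex `l` has diameter less than `ε`. -/
def IsSmall (ε : ℝ) (l : List X) : Prop := ∀ x ∈ l, ∀ y ∈ l, dist x y < ε

/-- The simplex `l` lies in the `ε`-ball about a point of `A`. -/
def IsNear (A : Set X) (ε : ℝ) (l : List X) : Prop := ∃ a ∈ A, ∀ x ∈ l, dist x a < ε

/-- Every vertex of `s` is `δ`-close to a vertex of `l`. -/
def IsClose (δ : ℝ) (l s : List X) : Prop := ∀ x ∈ s, ∃ y ∈ l, dist x y < δ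

variable {F : Type*} [AddCommGroup F] {A : Set X} {ε ε' ε₀ δ η : ℝ} {q : ℕ} {l s : List X}
  {u v : List X → F}

theorem IsSmall.mono (hl : IsSmall ε l) (h : ε ≤ ε') : IsSmall ε' l :=
  fun x hx y hy ↦ (hl x hx y hy).trans_le h

theorem IsNear.mono (hl : IsNear A ε l) (h : ε ≤ ε') : IsNear A ε' l :=
  let ⟨a, ha, hdist⟩ := hl
  ⟨a, ha, fun x hx ↦ (hdist x hx).trans_le h⟩

theorem IsSmall.subset (hl : IsSmall ε l) (h : s ⊆ l) : IsSmall ε s :=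
  fun x hx y hy ↦ hl x (h hx) y (h hy)

theorem IsNear.subset (hl : IsNear A ε l) (h : s ⊆ l) : IsNear A ε s :=
  let ⟨a, ha, hdist⟩ := hl
  ⟨a, ha, fun x hx ↦ hdist x (h hx)⟩

theorem IsSmall.of_isClose (hl : IsSmall ε l) (hs : IsClose δ l s) (h : ε + 2 * δ ≤ ε₀) :
    IsSmall ε₀ s := by
  intro x hx y hy
  obtain ⟨x', hx', hxx'⟩ := hs x hx
  obtain ⟨y', hy', hyy'⟩ := hs y hy
  linarith [hl x' hx' y' hy', dist_triangle4_right x y x' y']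

theorem IsNear.of_isClose (hl : IsNear A ε l) (hs : IsClose δ l s) (h : ε + δ ≤ ε₀) :
    IsNear A ε₀ s := by
  obtain ⟨a, ha, hdist⟩ := hl
  refine ⟨a, ha, fun x hx ↦ ?_⟩
  obtain ⟨y, hy, hxy⟩ := hs x hx
  linarith [hdist y hy, dist_triangle x y a]

/-- `u` is an Alexander–Spanier `q`-cocycle of the pair `(X, A)` at scale `ε`. -/
structure IsRelCocycle (A : Set X) (ε : ℝ) (q : ℕ) (u : List X → F) : Prop where
  eq_zero_of_isNear : ∀ l, l.length = q + 1 → IsNear A ε l → u l = 0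
  coboundary_eq_zero : ∀ l, l.length = q + 2 → IsSmall ε l → coboundary u l = 0

theorem IsRelCocycle.mono (hu : IsRelCocycle A ε' q u) (h : ε ≤ ε') : IsRelCocycle A ε q u where
  eq_zero_of_isNear l hl hA := hu.eq_zero_of_isNear l hl (hA.mono h)
  coboundary_eq_zero l hl hsmall := hu.coboundary_eq_zero l hl (hsmall.mono h)

variable (F A ε q) in
/-- The cochains that agree on `ε`-small `q`-simplices with the coboundary of a cochain vanishing
near `A`. -/
def relCoboundaries : AddSubgroup (List X → F) where
  carrier := {u | ∃ b : List X → F, (∀ l, l.length = q → IsNear A ε l → b l = 0) ∧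
    ∀ l, l.length = q + 1 → IsSmall ε l → u l = coboundary b l}
  zero_mem' := ⟨0, fun _ _ _ ↦ rfl, fun _ _ _ ↦ by simp⟩
  add_mem' := by
    rintro u v ⟨b, hbA, hb⟩ ⟨c, hcA, hc⟩
    refine ⟨b + c, fun l hl hA ↦ by simp [hbA l hl hA, hcA l hl hA], fun l hl hs ↦ ?_⟩
    simp [hb l hl hs, hc l hl hs]
  neg_mem' := by
    rintro u ⟨b, hbA, hb⟩
    exact ⟨-b, fun l hl hA ↦ by simp [hbA l hl hA], fun l hl hs ↦ by simp [hb l hl hs]⟩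

theorem smul_mem_relCoboundaries {M : Type*} [Monoid M] [DistribMulAction M F] (a : M)
    (hu : u ∈ relCoboundaries F A ε q) : a • u ∈ relCoboundaries F A ε q := by
  obtain ⟨b, hbA, hb⟩ := hu
  refine ⟨a • b, fun l hl hA ↦ by simp [hbA l hl hA], fun l hl hs ↦ ?_⟩
  simp [coboundary_smul, hb l hl hs]

theorem mem_relCoboundaries_of_eq_zero (h : ∀ l, l.length = q + 1 → IsSmall ε l → u l = 0) :
    u ∈ relCoboundaries F A ε q :=
  ⟨0, fun _ _ _ ↦ rfl, fun l hl hs ↦ by simp [h l hl hs]⟩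

theorem relCoboundaries_antitone (h : ε ≤ ε') :
    relCoboundaries F A ε' q ≤ relCoboundaries F A ε q :=
  fun _ ⟨b, hbA, hb⟩ ↦
    ⟨b, fun l hl hA ↦ hbA l hl (hA.mono h), fun l hl hs ↦ hb l hl (hs.mono h)⟩

/-- `u` is a coboundary at no scale, so that a cocycle `u` represents a nonzero cohomology class of
the pair `(X, A)`. -/
def IsEssential (A : Set X) (q : ℕ) (u : List X → F) : Prop :=
  ∀ ε > 0, u ∉ relCoboundaries F A ε q

variable (F A ε q) in
/-- The Alexander–Spanier cohomology group of the pair `(X, A)` in degree `q`, with coefficients in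
`F`, has a nonzero class represented by a cocycle at scale `ε`. -/
def HasEssentialClass : Prop :=
  ∃ u : List X → F, IsRelCocycle A ε q u ∧ IsEssential A q u

theorem HasEssentialClass.mono (hu : HasEssentialClass F A ε' q) (h : ε ≤ ε') :
    HasEssentialClass F A ε q :=
  let ⟨u, hu, hE⟩ := hu
  ⟨u, hu.mono h, hE⟩

/-- A chain map that moves every vertex by less than `δ` and is therefore chain homotopic to the
identity by small simplices. -/
structure IsApproxId (δ : ℝ) (Ψ : OrderedChain X →+ OrderedChain X) : Prop where
  boundary_comm : ∀ c, boundary (Ψ c) = Ψ (boundary c)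
  map_nil : Ψ (of []) = of []
  mem_supported : ∀ l, Ψ (of l) ∈ supported fun s ↦ s.length = l.length ∧ IsClose δ l s

theorem isApproxId_map {f : X → X} (hf : ∀ x, dist (f x) x < δ) :
    IsApproxId δ (FreeAbelianGroup.map (List.map f)) where
  boundary_comm := boundary_map f
  map_nil := by simp
  mem_supported l := by
    rw [FreeAbelianGroup.map_of_apply]
    exact of_mem_supported ⟨by simp, by simpa [IsClose] using fun x hx ↦ ⟨x, hx, hf x⟩⟩

theorem isApproxId_map_sort_map {W : Type*} [LinearOrder W] {θ : X → W} {r : W → X}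
    (h : ∀ x, dist (r (θ x)) x < δ) :
    IsApproxId δ (((FreeAbelianGroup.map (List.map r)).comp sort).comp
      (FreeAbelianGroup.map (List.map θ))) where
  boundary_comm c := by simp only [AddMonoidHom.comp_apply, boundary_map, boundary_sort]
  map_nil := by simp [sort_nil]
  mem_supported l := by
    simp only [AddMonoidHom.comp_apply, FreeAbelianGroup.map_of_apply]
    refine map_mem_of_mem_supported _ (fun s hs ↦ ?_) (sort_mem_supported (l.map θ))
    rw [FreeAbelianGroup.map_of_apply]
    refine of_mem_supported ⟨by simp [hs.1], fun x hx ↦ ?_⟩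
    obtain ⟨w, hw, rfl⟩ := List.mem_map.1 hx
    obtain ⟨y, hy, rfl⟩ := List.mem_map.1 (hs.2.1 hw)
    exact ⟨y, hy, h y⟩

namespace IsRelCocycle

variable {Ψ : OrderedChain X →+ OrderedChain X}

theorem pullback (hu : IsRelCocycle A ε₀ q u) (hΨ : IsApproxId δ Ψ) (hδ : 0 < δ)
    (h : ε + 2 * δ ≤ ε₀) : IsRelCocycle A ε q (pullback Ψ u) where
  eq_zero_of_isNear l hl hA := pullback_eq_zero (hΨ.mem_supported l) fun s hs ↦
    hu.eq_zero_of_isNear s (by omega) (hA.of_isClose hs.2 (by linarith))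
  coboundary_eq_zero l hl hsmall := by
    rw [coboundary_pullback hΨ.boundary_comm]
    exact pullback_eq_zero (hΨ.mem_supported l) fun s hs ↦
      hu.coboundary_eq_zero s (by omega) (hsmall.of_isClose hs.2 h)

theorem sub_pullback_mem (hu : IsRelCocycle A ε₀ q u) (hΨ : IsApproxId δ Ψ) (hδ : 0 < δ)
    (h : ε + 2 * δ ≤ ε₀) : u - MeanDimPaper.pullback Ψ u ∈ relCoboundaries F A ε q := by
  have hmem := coneHomotopy_mem_supported (Ψ := Ψ) (K := fun l ↦ {x | ∃ y ∈ l, dist x y < δ})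
    (fun s l hsl x ⟨y, hy, hxy⟩ ↦ ⟨y, hsl.subset hy, hxy⟩)
    (fun l x hx ↦ ⟨x, hx, by simpa using hδ⟩) hΨ.mem_supported
  refine ⟨MeanDimPaper.pullback (coneHomotopy Ψ) u, fun l hl hA ↦ ?_, fun l hl hsmall ↦ ?_⟩
  · exact pullback_eq_zero (hmem l) fun s hs ↦
      hu.eq_zero_of_isNear s (by omega) (hA.of_isClose hs.2 (by linarith))
  · have hzero : MeanDimPaper.pullback (coneHomotopy Ψ) (coboundary u) l = 0 :=
      pullback_eq_zero (hmem l) fun s hs ↦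
        hu.coboundary_eq_zero s (by omega) (hsmall.of_isClose hs.2 h)
    rw [← coboundary_pullback_coneHomotopy hΨ.boundary_comm hΨ.map_nil, Pi.add_apply, hzero,
      zero_add]

end IsRelCocycle

theorem IsEssential.pullback {Ψ : OrderedChain X →+ OrderedChain X} (hE : IsEssential A q u)
    (hu : IsRelCocycle A ε₀ q u) (hΨ : IsApproxId δ Ψ) (hδ : 0 < δ) (h : 2 * δ < ε₀) :
    IsEssential A q (pullback Ψ u) := by
  intro ε hε hmem
  have hpos : 0 < min ε (ε₀ - 2 * δ) := lt_min hε (by linarith)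
  have hsub := hu.sub_pullback_mem hΨ hδ (ε := min ε (ε₀ - 2 * δ))
    (by linarith [min_le_right ε (ε₀ - 2 * δ)])
  refine hE _ hpos ?_
  simpa using add_mem hsub (relCoboundaries_antitone (min_le_left _ _) hmem)

theorem HasEssentialClass.exists_normalized (h : HasEssentialClass F A ε₀ q) (hε : 0 < ε)
    (hε₀ : ε < ε₀) : ∃ u : List X → F, IsRelCocycle A ε q u ∧ IsEssential A q u ∧
      ∀ l, ¬ l.Nodup → u l = 0 := by
  obtain ⟨u, hu, hE⟩ := h
  let _ : LinearOrder X := IsWellOrder.linearOrder WellOrderingRel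
  obtain ⟨δ, hδ, hδε⟩ : ∃ δ > 0, ε + 2 * δ = ε₀ := ⟨(ε₀ - ε) / 2, by linarith, by ring⟩
  have hsort : IsApproxId δ (sort : OrderedChain X →+ OrderedChain X) :=
    { boundary_comm := boundary_sort
      map_nil := sort_nil
      mem_supported := fun l ↦ supported_mono
        (fun s hs ↦ ⟨hs.1, fun x hx ↦ ⟨x, hs.2.1 hx, by rwa [dist_self]⟩⟩)
        (sort_mem_supported l) }
  refine ⟨pullback sort u, hu.pullback hsort hδ hδε.le,
    hE.pullback hu hsort hδ (by linarith), fun l hl ↦ ?_⟩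
  simp [pullback_apply, sort_eq_zero_of_not_nodup hl]

theorem HasEssentialClass.le_ord [CompactSpace X] (h : HasEssentialClass F A ε q) (hε : 0 < ε)
    {β : Set (Set X)} (hβ : IsOpenCover β)
    (hsmall : ∀ V ∈ β, ∀ x ∈ V, ∀ y ∈ V, dist x y < ε / 3) : (q : ℕ∞) ≤ ord β := by
  obtain ⟨u, hu, hE⟩ := h
  by_contra! hord
  obtain ⟨η, hη, hball⟩ := lebesgue_number_lemma_of_metric_sUnion isCompact_univ hβ.1 hβ.2.ge
  choose θ hθβ hθ using fun x ↦ hball x (Set.mem_univ x)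
  have hself (x : X) : x ∈ θ x := hθ x (Metric.mem_ball_self hη)
  let _ : LinearOrder (Set.range θ) := IsWellOrder.linearOrder WellOrderingRel
  have hclose (x : X) :
      dist (Set.rangeSplitting θ (Set.rangeFactorization θ x)) x < ε / 3 := by
    refine hsmall _ (hθβ x) _ ?_ _ (hself x)
    have hfib := Set.apply_rangeSplitting θ (Set.rangeFactorization θ x)
    exact hfib.subset (hself _)
  have hΨ := isApproxId_map_sort_map hclose
  refine hE (min (ε / 3) η) (lt_min (by positivity) hη) ?_
  have hsub := hu.sub_pullback_mem hΨ (by positivity) (ε := ε / 3) (by linarith)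
  rw [← sub_add_cancel u (pullback _ u)]
  refine add_mem (relCoboundaries_antitone (min_le_left _ _) hsub)
    (mem_relCoboundaries_of_eq_zero fun l hl hl_small ↦ ?_)
  have hsort : sort (of (l.map (Set.rangeFactorization θ))) = 0 := by
    let vertices := (l.map (Set.rangeFactorization θ)).toFinset
    refine sort_eq_zero_of_card_lt (s := vertices) (fun _ ↦ List.mem_toFinset.2) ?_
    obtain ⟨x, hx⟩ := List.exists_mem_of_length_pos (by omega : 0 < l.length)
    have hcard := card_le_of_ord_lt hord
      (s := vertices.map (.subtype _)) (x := x)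
      (by simpa [vertices, Set.subset_def] using fun y _ ↦ hθβ y)
      (by simpa [vertices] using fun y hy ↦
        hθ y ((hl_small x hx y hy).trans_le (min_le_right _ _)))
    rw [Finset.card_map] at hcard
    rw [List.length_map]
    omega
  simp [pullback_apply, hsort]

end MetricCochain

section CupProduct

open FreeAbelianGroup OrderedChain

variable {V R : Type*} [CommRing R]

/-- The cup product of a `p`-cochain `u` with a cochain `w`: front face times back face. -/
def cup (p : ℕ) (u w : List V → R) (z : List V) : R := u (z.take (p + 1)) * w (z.drop p)

theorem cup_succ_cons (p : ℕ) (u w : List V → R) (v : V) (t : List V) :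
    cup (p + 1) u w (v :: t) = cup p (fun s ↦ u (v :: s)) w t := by
  simp [cup]

theorem coboundary_cup (w : List V → R) (p : ℕ) (u : List V → R) (z : List V)
    (hz : p + 2 ≤ z.length) :
    coboundary (cup p u w) z = coboundary u (z.take (p + 2)) * w (z.drop (p + 1)) +
      (-1) ^ p * (u (z.take (p + 1)) * coboundary w (z.drop p)) := by
  induction p generalizing u z with
  | zero =>
    match z, hz with
    | v :: v' :: t, _ =>
      have hcone : (fun s ↦ cup 0 u w (v :: s)) = u [v] • fun s ↦ w (v :: s) := by
        funext s
        simp [cup]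
      rw [coboundary_cons, hcone, coboundary_smul]
      simp [coboundary_cons, coboundary_nil, cup]
      ring
  | succ p ih =>
    match z, hz with
    | v :: t, hz =>
      rw [coboundary_cons, funext (cup_succ_cons p u w v), ih _ _ (by simpa using hz)]
      simp only [List.take_succ_cons, List.drop_succ_cons, coboundary_cons, cup]
      ring

end CupProduct

section CrossProduct

open FreeAbelianGroup OrderedChain

variable {X Y : Type*}

/-- The Eilenberg–Zilber shuffle product of two simplices: the signed sum of the monotone lattice
paths through the grid of pairs of their vertices. -/
def shuffle : List X → List Y → OrderedChain (X × Y)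
  | [], [] => 0
  | [], [_] => of []
  | [], _ :: _ :: _ => 0
  | _ :: _, [] => 0
  | x :: s, y :: t =>
    cone (x, y) (shuffle s (y :: t) + (-1 : ℤ) ^ s.length • shuffle (x :: s) t)
termination_by s t => s.length + t.length

/-- The biadditive extension of `shuffle` to chains. -/
def cross : OrderedChain X →+ OrderedChain Y →+ OrderedChain (X × Y) :=
  lift fun s ↦ lift (shuffle s)

@[simp]
theorem cross_of_of (s : List X) (t : List Y) : cross (of s) (of t) = shuffle s t := by
  simp [cross]

theorem shuffle_nil_right (s : List X) : shuffle s ([] : List Y) = 0 := by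
  cases s <;> simp [shuffle]

theorem shuffle_mem_supported (s : List X) (t : List Y) :
    shuffle s t ∈ supported fun z : List (X × Y) ↦
      z.length + 1 = s.length + t.length ∧ ∀ a ∈ z, a.1 ∈ s ∧ a.2 ∈ t := by
  induction s, t using shuffle.induct with
  | case1 => simp [shuffle, zero_mem]
  | case2 y => simpa only [shuffle] using of_mem_supported (by simp)
  | case3 => simp [shuffle, zero_mem]
  | case4 => simp [shuffle, zero_mem]
  | case5 x s y t ihs iht =>
    rw [shuffle]
    refine map_mem_of_mem_supported (P := fun z : List (X × Y) ↦
      z.length + 1 = s.length + t.length + 1 ∧ ∀ a ∈ z, a.1 ∈ x :: s ∧ a.2 ∈ y :: t)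
      (cone (x, y)) ?_ (add_mem (supported_mono ?_ ihs)
        (zsmul_mem (supported_mono ?_ iht) _))
    · rintro z ⟨hlen, hz⟩
      rw [cone_of]
      refine of_mem_supported ⟨by simp; omega, List.forall_mem_cons.2 ⟨by simp, hz⟩⟩
    · rintro z ⟨hlen, hz⟩
      exact ⟨hlen, fun a ha ↦ ⟨List.mem_cons_of_mem _ (hz a ha).1, (hz a ha).2⟩⟩
    · rintro z ⟨hlen, hz⟩
      exact ⟨by simp at hlen; omega, fun a ha ↦ ⟨(hz a ha).1, List.mem_cons_of_mem _ (hz a ha).2⟩⟩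

theorem cross_faceSum_cone (x : X) (s : List X) (y : Y) (t : List Y) :
    cross (cone x (faceSum s)) (of (y :: t)) = cone (x, y) (cross (faceSum s) (of (y :: t)) -
      (-1 : ℤ) ^ s.length • cross (cone x (faceSum s)) (of t)) := by
  refine hom_congr_of_mem_supported (f := (cross.flip (of (y :: t))).comp (cone x))
    (g := (cone (x, y)).comp (cross.flip (of (y :: t)) -
      (-1 : ℤ) ^ s.length • (cross.flip (of t)).comp (cone x))) (fun r hr ↦ ?_)
    (faceSum_mem_supported s)
  simp [shuffle, ← hr.1, pow_succ]

theorem cross_cone_right (x : X) (s : List X) (y : Y) (c : OrderedChain Y) :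
    cross (of (x :: s)) (cone y c) = cone (x, y) (cross (of s) (cone y c) +
      (-1 : ℤ) ^ s.length • cross (of (x :: s)) c) :=
  hom_congr_of (f := (cross (of (x :: s))).comp (cone y)) (g := (cone (x, y)).comp
    ((cross (of s)).comp (cone y) + (-1 : ℤ) ^ s.length • cross (of (x :: s))))
    (fun t ↦ by simp [shuffle]) c

theorem boundary_shuffle (s : List X) (t : List Y) :
    boundary (shuffle s t) = cross (faceSum s) (of t) +
      (-1 : ℤ) ^ (s.length + 1) • cross (of s) (faceSum t) := by
  induction s, t using shuffle.induct with
  | case1 => simp [shuffle, faceSum]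
  | case2 y => simp [shuffle, faceSum]
  | case3 y y' t =>
    have hzero : cross (of ([] : List X)) (cone y (cone y' (faceSum t))) = 0 :=
      hom_congr_of (f := ((cross (of [])).comp (cone y)).comp (cone y')) (g := 0)
        (fun l ↦ by simp [shuffle]) _
    cases t <;> simp_all [shuffle, faceSum]
  | case4 x s =>
    have hzero : cross (faceSum (x :: s)) (of ([] : List Y)) = 0 :=
      hom_congr_of (f := (cross (X := X) (Y := Y)).flip (of [])) (g := 0)
        (fun l ↦ by simp [shuffle_nil_right]) _
    simp [hzero, show faceSum ([] : List Y) = 0 from rfl, shuffle_nil_right]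
  | case5 x s y t ihs iht =>
    rw [shuffle, boundary_cone, map_add, map_zsmul, ihs, iht]
    simp only [faceSum, map_sub, AddMonoidHom.sub_apply, cross_faceSum_cone, cross_cone_right,
      cross_of_of, List.length_cons, pow_succ]
    rcases neg_one_pow_eq_or ℤ s.length with h | h <;> rw [h] <;> simp <;> abel

theorem shuffle_singleton (x : X) {t : List Y} (ht : t ≠ []) :
    shuffle [x] t = of (t.map fun y ↦ (x, y)) := by
  induction t with
  | nil => exact absurd rfl ht
  | cons y t ih =>
    rw [shuffle]
    cases t with
    | nil => simp [shuffle]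
    | cons y' t => simp [ih (by simp), shuffle]

variable {R : Type*} [CommRing R]

/-- The cross product of a `p`-cochain `u` with a cochain `w`. -/
def crossCochain (p : ℕ) (u : List X → R) (w : List Y → R) : List (X × Y) → R :=
  cup p (u ∘ List.map Prod.fst) (w ∘ List.map Prod.snd)

theorem lift_crossCochain_shuffle (w : List Y → R) (p : ℕ) (u : List X → R) (s : List X)
    (t : List Y) (hu : ∀ l, ¬ l.Nodup → u l = 0) (hs : s.length = p + 1) (ht : t ≠ []) :
    lift (crossCochain p u w) (shuffle s t) = u s * w t := by
  have lift_cone (f : List (X × Y) → R) (a : X × Y) (c : OrderedChain (X × Y)) :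
      lift f (cone a c) = lift (fun z ↦ f (a :: z)) c :=
    hom_congr_of (f := (lift f).comp (cone a)) (fun z ↦ by simp) c
  induction p generalizing u s t with
  | zero =>
    obtain ⟨x, rfl⟩ := List.length_eq_one_iff.1 hs
    obtain ⟨y, t, rfl⟩ := List.exists_cons_of_ne_nil ht
    simp [shuffle_singleton, crossCochain, cup, Function.comp_def]
  | succ p ih =>
    obtain ⟨y, t, rfl⟩ := List.exists_cons_of_ne_nil ht
    obtain ⟨x, s, rfl⟩ := List.exists_cons_of_length_eq_add_one hs
    have hcons : ∀ y : Y, (fun z ↦ crossCochain (p + 1) u w ((x, y) :: z)) =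
        crossCochain p (fun l ↦ u (x :: l)) w := fun y ↦ by
      funext z
      simp [crossCochain, cup_succ_cons, Function.comp_def]
    -- A path that moves up first visits `x` twice, so `u` vanishes on its front face.
    have hvertical : lift (crossCochain p (fun l ↦ u (x :: l)) w) (shuffle (x :: s) t) = 0 := by
      cases t with
      | nil => simp [shuffle_nil_right]
      | cons y' t =>
        have hzero : (fun z ↦ crossCochain p (fun l ↦ u (x :: l)) w ((x, y') :: z)) = 0 := by
          funext z
          simp [crossCochain, cup, hu (x :: x :: _)]
        rw [shuffle, lift_cone, hzero]
        exact hom_congr_of (g := 0) (fun z ↦ by simp) _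
    rw [shuffle, lift_cone, hcons, map_add, map_zsmul, hvertical,
      ih (fun l ↦ u (x :: l)) s (y :: t) (fun l hl ↦ hu _ (by simp [hl])) (by simpa using hs) ht,
      smul_zero, add_zero]

/-- The slant product of a cochain on `X × Y` by a functional on cochains of `X`. -/
def slant (φ : (List X → R) →ₗ[R] R) (b : List (X × Y) → R) (t : List Y) : R :=
  φ fun s ↦ lift b (shuffle s t)

theorem coboundary_slant (φ : (List X → R) →ₗ[R] R) (b : List (X × Y) → R) (t : List Y) :
    coboundary (slant φ b) t = φ fun s ↦ lift b (cross (of s) (faceSum t)) := by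
  have hadd (c d : OrderedChain Y) : φ (fun s ↦ lift b (cross (of s) (c + d))) =
      φ (fun s ↦ lift b (cross (of s) c)) + φ (fun s ↦ lift b (cross (of s) d)) := by
    rw [← map_add]
    exact congrArg φ (funext fun s ↦ by simp)
  rw [coboundary_apply]
  exact hom_congr_of (f := lift (slant φ b))
    (g := AddMonoidHom.mk' (fun c ↦ φ fun s ↦ lift b (cross (of s) c)) hadd)
    (fun t ↦ by simp [slant]) (faceSum t)

theorem coboundary_lift_shuffle (b : List (X × Y) → R) (s : List X) (t : List Y) :
    coboundary (fun s ↦ lift b (shuffle s t)) s = lift b (cross (faceSum s) (of t)) := by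
  rw [coboundary_apply]
  exact hom_congr_of (f := lift fun s ↦ lift b (shuffle s t))
    (g := (lift b).comp (cross.flip (of t))) (fun s ↦ by simp) (faceSum s)

end CrossProduct

section CrossProductOfClasses

open FreeAbelianGroup OrderedChain

variable {X Y F : Type*} [PseudoMetricSpace X] [PseudoMetricSpace Y] [Field F] {A : Set X}
  {B : Set Y} {ε : ℝ} {p r : ℕ}

theorem IsSmall.map_fst {z : List (X × Y)} (hz : IsSmall ε z) : IsSmall ε (z.map Prod.fst) := by
  simp only [IsSmall, List.forall_mem_map]
  exact fun a ha b hb ↦ (le_max_left _ _).trans_lt (hz a ha b hb)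

theorem IsSmall.map_snd {z : List (X × Y)} (hz : IsSmall ε z) : IsSmall ε (z.map Prod.snd) := by
  simp only [IsSmall, List.forall_mem_map]
  exact fun a ha b hb ↦ (le_max_right _ _).trans_lt (hz a ha b hb)

theorem IsRelCocycle.crossCochain {u : List X → F} {w : List Y → F} (hu : IsRelCocycle A ε p u)
    (hw : IsRelCocycle B ε r w) :
    IsRelCocycle {z : X × Y | z.1 ∈ A ∨ z.2 ∈ B} ε (p + r) (crossCochain p u w) where
  eq_zero_of_isNear z hz := by
    rintro ⟨⟨a, b⟩, hab, hdist⟩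
    refine mul_eq_zero.2 (hab.imp (fun ha ↦ ?_) (fun hb ↦ ?_))
    · refine hu.eq_zero_of_isNear _ (by simp; omega) ⟨a, ha, List.forall_mem_map.2 fun x hx ↦ ?_⟩
      exact (le_max_left _ _).trans_lt (hdist x (List.mem_of_mem_take hx))
    · refine hw.eq_zero_of_isNear _ (by simp; omega) ⟨b, hb, List.forall_mem_map.2 fun x hx ↦ ?_⟩
      exact (le_max_right _ _).trans_lt (hdist x (List.mem_of_mem_drop hx))
  coboundary_eq_zero z hz hsmall := by
    rw [MeanDimPaper.crossCochain, coboundary_cup _ _ _ _ (by omega), coboundary_comp_map,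
      coboundary_comp_map, Function.comp_apply, Function.comp_apply (f := coboundary w),
      hu.coboundary_eq_zero _ (by simp; omega) (hsmall.subset (List.take_subset _ _)).map_fst,
      hw.coboundary_eq_zero _ (by simp; omega) (hsmall.subset (List.drop_subset _ _)).map_snd]
    simp

theorem IsEssential.exists_separating_functional {u : List X → F} (hu : IsEssential A p u)
    (hε : 0 < ε) : ∃ φ : (List X → F) →ₗ[F] F, φ u = 1 ∧
      ∀ f ∈ relCoboundaries F A ε p, φ f = 0 := by
  let N : Submodule F (List X → F) :=
    { relCoboundaries F A ε p with
      smul_mem' := fun a _ hf ↦ smul_mem_relCoboundaries a hf }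
  obtain ⟨g, hgu, hgN⟩ := Submodule.exists_le_ker_of_notMem (p := N) (hu ε hε)
  exact ⟨(g u)⁻¹ • g, by simp [hgu], fun f hf ↦ by simp [show g f = 0 from hgN hf]⟩

/-- Slanting a coboundary `b` of the cross product by a functional that separates `u` from the
coboundaries exhibits `w` as a coboundary. -/
theorem IsEssential.crossCochain {u : List X → F} {w : List Y → F} (hu : IsEssential A p u)
    (hdeg : ∀ l, ¬ l.Nodup → u l = 0) (hw : IsEssential B r w) :
    IsEssential {z : X × Y | z.1 ∈ A ∨ z.2 ∈ B} (p + r) (crossCochain p u w) := by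
  rintro ε hε ⟨b, hbA, hb⟩
  obtain ⟨φ, hφu, hφ⟩ := hu.exists_separating_functional hε
  refine hw ε hε ⟨(-1 : F) ^ p • slant φ b, fun t ht ↦ ?_, fun t ht htε ↦ ?_⟩
  · rintro ⟨y, hy, hyt⟩
    have hslant : slant φ b t = 0 := hφ _ <| mem_relCoboundaries_of_eq_zero fun s hs hsε ↦ by
      obtain ⟨x, hx⟩ := List.exists_mem_of_length_pos (by omega : 0 < s.length)
      refine hom_congr_of_mem_supported (g := 0) (fun z hz ↦ ?_) (shuffle_mem_supported s t)
      simpa using hbA z (by omega) ⟨(x, y), Or.inr hy, fun a ha ↦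
        max_lt (hsε _ (hz.2 a ha).1 _ hx) (hyt _ (hz.2 a ha).2)⟩
    simp [hslant]
  · obtain ⟨y, hy⟩ := List.exists_mem_of_length_pos (by omega : 0 < t.length)
    have hfst : (fun s ↦ lift b (cross (faceSum s) (of t))) ∈ relCoboundaries F A ε p := by
      refine ⟨fun s ↦ lift b (shuffle s t), ?_, fun s _ _ ↦ (coboundary_lift_shuffle b s t).symm⟩
      rintro s hs ⟨x, hx, hxs⟩
      refine hom_congr_of_mem_supported (g := 0) (fun z hz ↦ ?_) (shuffle_mem_supported s t)
      simpa using hbA z (by omega) ⟨(x, y), Or.inl hx, fun a ha ↦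
        max_lt (hxs _ (hz.2 a ha).1) (htε _ (hz.2 a ha).2 _ hy)⟩
    have hmem : w t • u - (fun s ↦ lift b (cross (faceSum s) (of t))) -
        (-1 : F) ^ p • (fun s ↦ lift b (cross (of s) (faceSum t))) ∈
          relCoboundaries F A ε p := mem_relCoboundaries_of_eq_zero fun s hs hsε ↦ by
      have hboundary : u s * w t = lift b (boundary (shuffle s t)) := by
        rw [← lift_crossCochain_shuffle w p u s t hdeg hs (by rintro rfl; simp at ht)]
        refine hom_congr_of_mem_supported (g := (lift b).comp boundary) (fun z hz ↦ ?_)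
          (shuffle_mem_supported s t)
        simpa [coboundary_apply] using hb z (by omega) fun a ha a' ha' ↦
          max_lt (hsε _ (hz.2 a ha).1 _ (hz.2 a' ha').1) (htε _ (hz.2 a ha).2 _ (hz.2 a' ha').2)
      simp [boundary_shuffle, hs, pow_succ, mul_comm (w t), hboundary]
    have hzero := hφ _ hmem
    rw [map_sub, map_sub, map_smul, map_smul, hφu, hφ _ hfst, ← coboundary_slant] at hzero
    simpa [coboundary_smul, sub_eq_zero] using hzero

theorem HasEssentialClass.prod {ε₀ : ℝ} (hA : HasEssentialClass F A ε₀ p)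
    (hB : HasEssentialClass F B ε r) (hε : 0 < ε) (hε₀ : ε < ε₀) :
    HasEssentialClass F {z : X × Y | z.1 ∈ A ∨ z.2 ∈ B} ε (p + r) := by
  obtain ⟨u, hu, huE, hdeg⟩ := hA.exists_normalized hε hε₀
  obtain ⟨w, hw, hwE⟩ := hB
  exact ⟨crossCochain p u w, hu.crossCochain hw, huE.crossCochain hdeg hwE⟩

end CrossProductOfClasses

section Coefficients

open FreeAbelianGroup OrderedChain

variable {X : Type*} [PseudoMetricSpace X] {A : Set X} {ε : ℝ} {q : ℕ}

theorem IsRelCocycle.hom_comp {F G : Type*} [AddCommGroup F] [AddCommGroup G] {u : List X → F}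
    (hu : IsRelCocycle A ε q u) (g : F →+ G) : IsRelCocycle A ε q (g ∘ u) where
  eq_zero_of_isNear l hl hA := by simp [hu.eq_zero_of_isNear l hl hA]
  coboundary_eq_zero l hl hs := by simp [coboundary_hom_comp, hu.coboundary_eq_zero l hl hs]

theorem IsEssential.exists_prime_smul {F : Type*} [AddCommGroup F] {u : List X → F}
    (hu : IsEssential A q u) {n : ℕ} (hn : n ≠ 0) (h : ¬ IsEssential A q (n • u)) :
    ∃ p : ℕ, p.Prime ∧ ∃ m : ℕ, IsEssential A q (m • u) ∧ ¬ IsEssential A q (p • m • u) := by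
  induction n using induction_on_primes with
  | zero => exact absurd rfl hn
  | one => exact absurd (by simpa using hu) h
  | prime_mul p m hp ih =>
    by_cases hm : IsEssential A q (m • u)
    · exact ⟨p, hp, m, hm, by rwa [← mul_smul]⟩
    · exact ih (right_ne_zero_of_mul hn) hm

/-- If `p • u` bounds `b`, then `b` modulo `p` is a cocycle: this is the Bockstein homomorphism read
backwards. Were `b` modulo `p` the coboundary of `g`, dividing `b - δg'` by `p`, for an integral
lift `g'` of `g`, would exhibit `u` as a coboundary. -/
theorem IsEssential.hasEssentialClass_zmod {u : List X → ℤ} (hu : IsEssential A (q + 1) u) {p : ℕ}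
    (hp : p ≠ 0) (hpu : ¬ IsEssential A (q + 1) (p • u)) :
    ∃ ε > 0, HasEssentialClass (ZMod p) A ε q := by
  have : NeZero p := ⟨hp⟩
  let reduce := Int.castAddHom (ZMod p)
  unfold IsEssential at hpu
  push Not at hpu
  obtain ⟨ε, hε, b, hbA, hb⟩ := hpu
  refine ⟨ε, hε, reduce ∘ b,
    ⟨fun l hl hA ↦ by simp [hbA l hl hA], fun l hl hs ↦ ?_⟩, fun ε' hε' ↦ ?_⟩
  · rw [coboundary_hom_comp, Function.comp_apply, ← hb l hl hs]
    simp [reduce]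
  rintro ⟨g, hgA, hg⟩
  let g' : List X → ℤ := fun l ↦ ((g l).val : ℤ)
  have hg' : reduce ∘ g' = g := by funext l; simp [reduce, g']
  have hdvd (l : List X) (hl : l.length = q + 1) (hs : IsSmall ε' l) :
      (p : ℤ) ∣ b l - coboundary g' l := by
    rw [← ZMod.intCast_zmod_eq_zero_iff_dvd, Int.cast_sub, sub_eq_zero]
    rw [← hg', coboundary_hom_comp] at hg
    exact hg l hl hs
  let quot : List X → ℤ := fun l ↦ (b l - coboundary g' l) / p
  refine hu (min ε ε') (lt_min hε hε') ⟨quot, fun l hl hA ↦ ?_, fun l hl hs ↦ ?_⟩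
  · have hzero : coboundary g' l = 0 := coboundary_eq_zero fun s hsl hsub ↦ by
      simp [g', hgA s (by omega) ((hA.mono (min_le_right _ _)).subset hsub.subset)]
    simp [quot, hzero, hbA l hl (hA.mono (min_le_left _ _))]
  · refine mul_left_cancel₀ (Nat.cast_ne_zero.2 hp : (p : ℤ) ≠ 0) ?_
    calc (p : ℤ) * u l = coboundary b l := by simpa using hb l hl (hs.mono (min_le_left _ _))
      _ = coboundary (b - coboundary g') l := by simp [coboundary_coboundary]
      _ = coboundary ((p : ℤ) • quot) l := coboundary_congr fun s hsl hsub ↦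
          (Int.mul_ediv_cancel'
            (hdvd s (by omega) ((hs.mono (min_le_right _ _)).subset hsub.subset))).symm
      _ = p * coboundary quot l := by simp only [coboundary_smul, Pi.smul_apply, smul_eq_mul]

theorem exists_nat_mul_eq_intCast {ι : Type*} [Finite ι] (f : ι → ℚ) :
    ∃ N : ℕ, N ≠ 0 ∧ ∀ i, ∃ z : ℤ, (z : ℚ) = N * f i := by
  obtain ⟨⟨n, hn⟩, h⟩ :=
    IsLocalization.exist_integer_multiples_of_finite (nonZeroDivisors ℤ) f
  refine ⟨n.natAbs, Int.natAbs_ne_zero.2 (nonZeroDivisors.ne_zero hn), fun i ↦ ?_⟩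
  obtain ⟨z, hz⟩ := h i
  replace hz : (z : ℚ) = n * f i := by simpa using hz
  obtain habs | habs := abs_choice (n : ℚ)
  · exact ⟨z, by rw [Nat.cast_natAbs, Int.cast_abs, habs, hz]⟩
  · exact ⟨-z, by rw [Nat.cast_natAbs, Int.cast_abs, habs, Int.cast_neg, hz, neg_mul]⟩

/- A rational cochain that factors through a finite set has a common denominator. -/
theorem exists_smul_comp_map_mem_relCoboundaries {u : List X → ℤ} {ρ : X → X} {δ η : ℝ}
    (hu : (Int.castAddHom ℚ : ℤ → ℚ) ∘ u ∈ relCoboundaries ℚ A ε q) (hfin : (Set.range ρ).Finite)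
    (hρ : ∀ x, dist (ρ x) x < δ) (hδ : 0 ≤ δ) (h : η + 2 * δ ≤ ε) :
    ∃ N : ℕ, N ≠ 0 ∧ N • (u ∘ List.map ρ) ∈ relCoboundaries ℤ A η q := by
  obtain ⟨b, hbA, hb⟩ := hu
  have hclose (l : List X) : IsClose δ l (l.map ρ) := by
    simpa [IsClose] using fun x hx ↦ ⟨x, hx, hρ x⟩
  have : Finite (Set.range ρ) := hfin
  have : Finite {t : List (Set.range ρ) // t.length = q} := List.finite_length_eq _ q
  obtain ⟨N, hN, hNf⟩ := exists_nat_mul_eq_intCast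
    fun t : {t : List (Set.range ρ) // t.length = q} ↦ b (t.1.map (↑))
  have hNf' (l : List X) : ∃ z : ℤ, l.length = q → (z : ℚ) = N * b (l.map ρ) := by
    by_cases hl : l.length = q
    · obtain ⟨z, hz⟩ := hNf ⟨l.map (Set.rangeFactorization ρ), by simpa using hl⟩
      exact ⟨z, fun _ ↦ by simpa [Function.comp_def] using hz⟩
    · exact ⟨0, fun h ↦ absurd h hl⟩
  choose a ha using hNf'
  refine ⟨N, hN, a, fun l hl hA ↦ ?_, fun l hl hs ↦ ?_⟩
  · rw [← Int.cast_eq_zero (α := ℚ), ha l hl,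
      hbA _ (by simpa using hl) (hA.of_isClose (hclose l) (by linarith)), mul_zero]
  · have hcoboundary : ((coboundary a l : ℤ) : ℚ) = N * u (l.map ρ) := by
      calc Int.castAddHom ℚ (coboundary a l) = coboundary (Int.castAddHom ℚ ∘ a) l := by
            rw [coboundary_hom_comp, Function.comp_apply]
        _ = coboundary ((N : ℚ) • (b ∘ List.map ρ)) l :=
            coboundary_congr fun s hs _ ↦ ha s (by omega)
        _ = N * coboundary b (l.map ρ) := by
            simp only [coboundary_smul, coboundary_comp_map, Pi.smul_apply, smul_eq_mul,
              Function.comp_apply]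
        _ = N * u (l.map ρ) := by
            rw [← hb _ (by simpa using hl) (hs.of_isClose (hclose l) h)]
            rfl
    rw [← Int.cast_inj (α := ℚ), hcoboundary]
    simp

theorem IsRelCocycle.hasEssentialClass_rat [CompactSpace X] {u : List X → ℤ} (hε : 0 < ε)
    (hu : IsRelCocycle A ε q u) (hE : ∀ n : ℕ, n ≠ 0 → IsEssential A q (n • u)) :
    HasEssentialClass ℚ A ε q := by
  refine ⟨Int.castAddHom ℚ ∘ u, hu.hom_comp _, fun ε' hε' hmem ↦ ?_⟩
  obtain ⟨δ, hδ, hδε⟩ : ∃ δ > 0, δ + 2 * δ = min ε ε' :=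
    ⟨min ε ε' / 3, div_pos (lt_min hε hε') three_pos, by ring⟩
  obtain ⟨T, -, hT, hcover⟩ := finite_cover_balls_of_compact (isCompact_univ (X := X)) hδ
  have hnet (x : X) : ∃ t ∈ T, dist t x < δ := by
    simpa [dist_comm] using hcover (Set.mem_univ x)
  choose ρ hρT hρ using hnet
  obtain ⟨N, hN, hpull⟩ := exists_smul_comp_map_mem_relCoboundaries hmem
    (hT.subset (range_subset_iff.2 hρT)) hρ hδ.le (hδε.trans_le (min_le_right _ _))
  have hsub := smul_mem_relCoboundaries N
    (hu.sub_pullback_mem (isApproxId_map hρ) hδ (hδε.trans_le (min_le_left _ _)))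
  refine hE N hN δ hδ ?_
  rw [← sub_add_cancel u (u ∘ List.map ρ), smul_add]
  exact add_mem (by rwa [pullback_map] at hsub) hpull

theorem HasEssentialClass.exists_field [CompactSpace X] (hε : 0 < ε)
    (h : HasEssentialClass ℤ A ε (q + 1)) : ∃ (F : Type) (_ : Field F) (r : ℕ), q ≤ r ∧
      ∃ δ > 0, HasEssentialClass F A δ r := by
  obtain ⟨u, hu, hE⟩ := h
  by_cases hrat : ∀ n : ℕ, n ≠ 0 → IsEssential A (q + 1) (n • u)
  · exact ⟨ℚ, inferInstance, q + 1, q.le_succ, ε, hε, hu.hasEssentialClass_rat hε hrat⟩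
  · push Not at hrat
    obtain ⟨n, hn, hnE⟩ := hrat
    obtain ⟨p, hp, m, hm, hpm⟩ := hE.exists_prime_smul hn hnE
    have : Fact p.Prime := ⟨hp⟩
    exact ⟨ZMod p, inferInstance, q, le_rfl, hm.hasEssentialClass_zmod hp.ne_zero hpm⟩

end Coefficients

section Power

variable {F : Type*} [AddCommGroup F] {X Y : Type*} [PseudoMetricSpace X] [PseudoMetricSpace Y]
  {A : Set X} {B : Set Y} {f : Y → X} {u : List X → F} {ε : ℝ} {q : ℕ} {l : List Y}

theorem IsSmall.map (hl : IsSmall ε l) (hf : LipschitzWith 1 f) : IsSmall ε (l.map f) := by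
  simp only [IsSmall, List.forall_mem_map]
  exact fun x hx y hy ↦ (hf.dist_le_mul x y).trans_lt (by simpa using hl x hx y hy)

theorem IsNear.map (hl : IsNear B ε l) (hf : LipschitzWith 1 f) (hBA : MapsTo f B A) :
    IsNear A ε (l.map f) := by
  obtain ⟨a, ha, hdist⟩ := hl
  refine ⟨f a, hBA ha, ?_⟩
  simp only [List.forall_mem_map]
  exact fun x hx ↦ (hf.dist_le_mul x a).trans_lt (by simpa using hdist x hx)

theorem IsRelCocycle.comp_map (hu : IsRelCocycle A ε q u) (hf : LipschitzWith 1 f)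
    (hBA : MapsTo f B A) : IsRelCocycle B ε q (u ∘ List.map f) where
  eq_zero_of_isNear l hl hB := hu.eq_zero_of_isNear _ (by simpa using hl) (hB.map hf hBA)
  coboundary_eq_zero l hl hs := by
    rw [coboundary_comp_map]
    exact hu.coboundary_eq_zero _ (by simpa using hl) (hs.map hf)

theorem comp_map_mem_relCoboundaries (hu : u ∈ relCoboundaries F A ε q) (hf : LipschitzWith 1 f)
    (hBA : MapsTo f B A) : u ∘ List.map f ∈ relCoboundaries F B ε q := by
  obtain ⟨b, hbA, hb⟩ := hu
  refine ⟨b ∘ List.map f, fun l hl hB ↦ hbA _ (by simpa using hl) (hB.map hf hBA),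
    fun l hl hs ↦ ?_⟩
  rw [coboundary_comp_map]
  exact hb _ (by simpa using hl) (hs.map hf)

theorem HasEssentialClass.preimage_isometryEquiv (h : HasEssentialClass F A ε q) (e : Y ≃ᵢ X) :
    HasEssentialClass F (e ⁻¹' A) ε q := by
  obtain ⟨u, hu, hE⟩ := h
  refine ⟨u ∘ List.map e, hu.comp_map e.isometry.lipschitz (mapsTo_preimage e A),
    fun ε' hε' hmem ↦ hE ε' hε' ?_⟩
  have hback := comp_map_mem_relCoboundaries hmem (B := A) e.symm.isometry.lipschitz
    fun x hx ↦ by simpa using hx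
  simpa [Function.comp_assoc, Function.comp_def] using hback

theorem HasEssentialClass.exists_pi {F : Type*} [Field F] {δ : ℝ}
    (h : HasEssentialClass F A ε q) (hδ : 0 < δ) (hδε : δ < ε) (k : ℕ) :
    ∃ B : Set (Fin (k + 1) → X), HasEssentialClass F B δ ((k + 1) * q) := by
  induction k with
  | zero => exact ⟨_, by
      simpa using (h.mono hδε.le).preimage_isometryEquiv (IsometryEquiv.funUnique (Fin 1) X)⟩
  | succ k ih =>
    obtain ⟨B, hB⟩ := ih
    have hone := h.preimage_isometryEquiv (IsometryEquiv.funUnique (Fin 1) X)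
    rw [add_one_mul (k + 1), add_comm _ q, add_comm (k + 1)]
    exact ⟨_, (hone.prod hB hδ hδε).preimage_isometryEquiv
      (Fin.appendIsometry 1 (k + 1)).symm⟩

end Power

section MinCoord

theorem exists_continuousOn_iUnion_of_isClosed {Z W ι : Type*} [TopologicalSpace Z]
    [TopologicalSpace W] [Finite ι] [Nonempty W] (S : ι → Set Z) (f : ι → Z → W)
    (hS : ∀ i, IsClosed (S i)) (hf : ∀ i, ContinuousOn (f i) (S i))
    (hfS : ∀ i j, ∀ x ∈ S i, x ∈ S j → f i x = f j x) :
    ∃ g : Z → W, ContinuousOn g (⋃ i, S i) ∧ ∀ i, ∀ x ∈ S i, g x = f i x := by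
  classical
  let g : Z → W := fun x ↦ if h : ∃ i, x ∈ S i then f h.choose x else Classical.arbitrary W
  have hg : ∀ i, ∀ x ∈ S i, g x = f i x := by
    intro i x hx
    have h : ∃ i, x ∈ S i := ⟨i, hx⟩
    simp only [g, dif_pos h]
    exact hfS _ _ x h.choose_spec hx
  exact ⟨g, (locallyFinite_of_finite S).continuousOn_iUnion hS
    fun i ↦ (hf i).congr fun x hx ↦ hg i x hx, hg⟩

variable {ι : Type*} [Fintype ι] [Nonempty ι]

/-- The least coordinate of `t`; on a simplex it measures the distance to the boundary. -/
noncomputable def minCoord (t : ι → ℝ) : ℝ :=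
  Finset.univ.inf' Finset.univ_nonempty t

theorem continuous_minCoord : Continuous (minCoord : (ι → ℝ) → ℝ) :=
  Continuous.finset_inf'_apply (f := fun i (t : ι → ℝ) ↦ t i) Finset.univ_nonempty
    fun i _ ↦ continuous_apply i

theorem minCoord_le (t : ι → ℝ) (i : ι) : minCoord t ≤ t i :=
  Finset.inf'_le _ (Finset.mem_univ i)

theorem exists_eq_minCoord (t : ι → ℝ) : ∃ i, t i = minCoord t := by
  obtain ⟨i, -, hi⟩ := Finset.exists_mem_eq_inf' (Finset.univ_nonempty (α := ι)) t
  exact ⟨i, hi.symm⟩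

theorem minCoord_nonneg {t : ι → ℝ} (ht : ∀ i, 0 ≤ t i) : 0 ≤ minCoord t :=
  (Finset.le_inf'_iff _ _).2 fun i _ ↦ ht i

theorem minCoord_eq_zero {t : ι → ℝ} (ht : ∀ i, 0 ≤ t i) {i : ι} (hi : t i = 0) :
    minCoord t = 0 :=
  le_antisymm (hi ▸ minCoord_le t i) (minCoord_nonneg ht)

end MinCoord

section Simplex

variable {n : ℕ}

theorem removeNth_mem_stdSimplex {t : Fin (n + 1) → ℝ} (ht : t ∈ stdSimplex ℝ (Fin (n + 1)))
    (i : Fin (n + 1)) (hi : t i = 0) : i.removeNth t ∈ stdSimplex ℝ (Fin n) := by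
  refine ⟨fun j ↦ ht.1 _, ?_⟩
  have hsum := ht.2
  rwa [Fin.sum_univ_succAbove t i, hi, zero_add] at hsum

theorem val_succAbove (p : Fin (n + 1)) (i : Fin n) :
    (p.succAbove i : ℕ) = if (i : ℕ) < p then (i : ℕ) else i + 1 := by
  simp only [Fin.succAbove, Fin.lt_def, Fin.val_castSucc]
  split_ifs <;> rfl

theorem val_predAbove (p : Fin n) (j : Fin (n + 1)) :
    (p.predAbove j : ℕ) = if (p : ℕ) < j then (j : ℕ) - 1 else j := by
  simp only [Fin.predAbove, Fin.lt_def, Fin.val_castSucc]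
  split_ifs <;> rfl

theorem predAbove_succ_succAbove (p i : Fin n) : p.predAbove (p.succ.succAbove i) = i := by
  rw [Fin.ext_iff, val_predAbove, val_succAbove, Fin.val_succ]
  split_ifs <;> omega

/-- The affine map of simplices induced by the degeneracy `p.predAbove`, which identifies the
vertices `p` and `p + 1`. -/
def collapse (p : Fin n) (t : Fin (n + 1) → ℝ) (i : Fin n) : ℝ :=
  ∑ j with p.predAbove j = i, t j

theorem continuous_collapse (p : Fin n) : Continuous (collapse p) :=
  continuous_pi fun _ ↦ continuous_finsetSum _ fun j _ ↦ continuous_apply j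

theorem sum_collapse (p : Fin n) (t : Fin (n + 1) → ℝ) : ∑ i, collapse p t i = ∑ j, t j :=
  Finset.sum_fiberwise _ _ _

theorem collapse_eq_removeNth {p : Fin n} {j : Fin (n + 1)}
    (hp : ∀ i, p.predAbove (j.succAbove i) = i) {t : Fin (n + 1) → ℝ} (hj : t j = 0) :
    collapse p t = j.removeNth t := by
  funext i
  rw [collapse, Finset.sum_filter, Fin.sum_univ_succAbove _ j]
  simp only [hp, hj, ite_self, zero_add, Finset.sum_ite_eq', Finset.mem_univ, if_true,
    Fin.removeNth]

theorem collapse_predAbove_eq_zero {p : Fin n} {j : Fin (n + 1)} (hcast : j ≠ p.castSucc)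
    (hsucc : j ≠ p.succ) {t : Fin (n + 1) → ℝ} (hj : t j = 0) :
    collapse p t (p.predAbove j) = 0 := by
  refine Finset.sum_eq_zero fun l hl ↦ ?_
  have hl : p.predAbove l = p.predAbove j := (Finset.mem_filter.1 hl).2
  suffices l = j by rw [this, hj]
  rw [Fin.ext_iff, val_predAbove, val_predAbove] at hl
  rw [ne_eq, Fin.ext_iff] at hcast hsucc
  rw [Fin.val_castSucc] at hcast
  rw [Fin.val_succ] at hsucc
  ext
  split_ifs at hl <;> omega

/-- A retraction of the standard simplex of dimension `n` onto its horn opposite to the face `p`,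
restricted to that face. -/
noncomputable def hornLift (p : Fin (n + 2)) (x : Fin (n + 1) → ℝ) : Fin (n + 2) → ℝ :=
  p.insertNth ((n + 1) * minCoord x) fun j ↦ x j - minCoord x

variable {p : Fin (n + 2)} {x : Fin (n + 1) → ℝ}

theorem hornLift_self : hornLift p x p = (n + 1) * minCoord x :=
  Fin.insertNth_apply_same ..

theorem hornLift_succAbove (j : Fin (n + 1)) :
    hornLift p x (p.succAbove j) = x j - minCoord x :=
  Fin.insertNth_apply_succAbove ..

theorem continuous_hornLift (p : Fin (n + 2)) : Continuous (hornLift p) := by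
  have hmin := continuous_minCoord (ι := Fin (n + 1))
  refine continuous_pi fun i ↦ ?_
  rcases Fin.eq_self_or_eq_succAbove p i with rfl | ⟨j, rfl⟩
  · simp only [hornLift_self]
    fun_prop
  · simp only [hornLift_succAbove]
    fun_prop

theorem hornLift_mem_stdSimplex (hx : x ∈ stdSimplex ℝ (Fin (n + 1))) :
    hornLift p x ∈ stdSimplex ℝ (Fin (n + 2)) := by
  refine ⟨fun i ↦ ?_, ?_⟩
  · rcases Fin.eq_self_or_eq_succAbove p i with rfl | ⟨j, rfl⟩
    · rw [hornLift_self]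
      exact mul_nonneg (by positivity) (minCoord_nonneg hx.1)
    · rw [hornLift_succAbove]
      linarith [minCoord_le x j]
  · rw [Fin.sum_univ_succAbove _ p, hornLift_self]
    simp only [hornLift_succAbove, Finset.sum_sub_distrib, hx.2]
    simp

theorem removeNth_hornLift (hx : minCoord x = 0) : p.removeNth (hornLift p x) = x := by
  funext j
  rw [Fin.removeNth, hornLift_succAbove, hx, sub_zero]

end Simplex

section Bubble

variable {k : ℕ} {s l : ℝ} {r : Fin k → ℝ}

/-- The Euclidean space of dimension `k + 2` whose nonzero vectors serve as a model of the
`(k + 1)`-sphere. -/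
abbrev SphereSpace (k : ℕ) := ℂ × (Fin k → ℝ)

/-- The loop `l ↦ exp (2πi l / s) - 1`, damped so that it vanishes when `s = 0` or some
`r i = 0`; the factor is `1` at `r i = s / 2`, `s + ∑ r i = 1`. -/
noncomputable def bubblePhase (k : ℕ) (s l : ℝ) (r : Fin k → ℝ) : ℂ :=
  (((k + 2 : ℝ) ^ (k + 1) / 2 * ∏ i, r i : ℝ) : ℂ) *
    ((s : ℂ) * (Complex.exp ((2 * Real.pi * (l / s) : ℝ) * Complex.I) - 1))

/-- The map whose restriction to `bubble` below has a prescribed degree: the base point `(1, 0)`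
when the phase vanishes, and zero only where the phase is `-1` and all `r i = s / 2`. -/
noncomputable def bubbleCore (k : ℕ) (s l : ℝ) (r : Fin k → ℝ) : SphereSpace k :=
  (1 + bubblePhase k s l r, fun i ↦ ‖bubblePhase k s l r‖ * (2 * r i - s))

theorem continuous_mul_exp_div_sub_one {Z : Type*} [TopologicalSpace Z] {s l : Z → ℝ}
    (hs : Continuous s) (hl : Continuous l) :
    Continuous fun z ↦ (s z : ℂ) *
      (Complex.exp ((2 * Real.pi * (l z / s z) : ℝ) * Complex.I) - 1) := by
  rw [continuous_iff_continuousAt]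
  intro z
  by_cases h : s z = 0
  · have hbound : ∀ w, ‖(s w : ℂ) *
        (Complex.exp ((2 * Real.pi * (l w / s w) : ℝ) * Complex.I) - 1)‖ ≤ |s w| * 2 := by
      intro w
      rw [norm_mul, Complex.norm_real, Real.norm_eq_abs]
      refine mul_le_mul_of_nonneg_left ((norm_sub_le _ _).trans ?_) (abs_nonneg _)
      rw [Complex.norm_exp_ofReal_mul_I]
      norm_num
    have hlim : Tendsto (fun w ↦ |s w| * 2) (nhds z) (nhds 0) := by
      simpa [h] using (show Continuous fun w ↦ |s w| * 2 by fun_prop).tendsto z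
    simpa [ContinuousAt, h] using squeeze_zero_norm hbound hlim
  · have hphase : ContinuousAt (fun w ↦ (2 * Real.pi * (l w / s w) : ℝ)) z :=
      (hl.continuousAt.div hs.continuousAt h).const_mul _
    exact (Complex.continuous_ofReal.continuousAt.comp hs.continuousAt).mul
      ((Complex.continuous_exp.continuousAt.comp
        ((Complex.continuous_ofReal.continuousAt.comp hphase).mul continuousAt_const)).sub
          continuousAt_const)

theorem continuous_bubbleCore {Z : Type*} [TopologicalSpace Z] {s l : Z → ℝ} {r : Z → Fin k → ℝ}
    (hs : Continuous s) (hl : Continuous l) (hr : Continuous r) :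
    Continuous fun z ↦ bubbleCore k (s z) (l z) (r z) := by
  have hri : ∀ i, Continuous fun z ↦ r z i := fun i ↦ (continuous_apply i).comp hr
  have hphase : Continuous fun z ↦ bubblePhase k (s z) (l z) (r z) :=
    Continuous.mul (by fun_prop) (continuous_mul_exp_div_sub_one hs hl)
  unfold bubbleCore
  fun_prop

theorem bubbleCore_of_bubblePhase_eq_zero (h : bubblePhase k s l r = 0) :
    bubbleCore k s l r = (1, 0) := by
  unfold bubbleCore
  rw [h]
  ext <;> simp

theorem bubbleCore_of_eq_zero (i : Fin k) (hi : r i = 0) : bubbleCore k s l r = (1, 0) := by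
  apply bubbleCore_of_bubblePhase_eq_zero
  rw [bubblePhase, Finset.prod_eq_zero (Finset.mem_univ i) hi]
  simp

theorem bubbleCore_zero_left : bubbleCore k 0 l r = (1, 0) :=
  bubbleCore_of_bubblePhase_eq_zero (by simp [bubblePhase])

theorem bubbleCore_add_int_mul (n : ℤ) : bubbleCore k s (l + n * s) r = bubbleCore k s l r := by
  by_cases hs : s = 0
  · rw [hs, bubbleCore_zero_left, bubbleCore_zero_left]
  have hangle : ((2 * Real.pi * ((l + n * s) / s) : ℝ) : ℂ) * Complex.I =
      ((2 * Real.pi * (l / s) : ℝ) : ℂ) * Complex.I + n * (2 * Real.pi * Complex.I) := by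
    rw [add_div, mul_div_cancel_right₀ _ hs]
    push_cast
    ring
  have hphase : bubblePhase k s (l + n * s) r = bubblePhase k s l r := by
    rw [bubblePhase, hangle, Complex.exp_add, Complex.exp_int_mul_two_pi_mul_I, mul_one,
      bubblePhase]
  rw [bubbleCore, hphase, bubbleCore]

theorem bubbleCore_int_mul (n : ℤ) : bubbleCore k s (n * s) r = (1, 0) := by
  rw [← zero_add (n * s), bubbleCore_add_int_mul]
  exact bubbleCore_of_bubblePhase_eq_zero (by simp [bubblePhase])

theorem bubblePhase_of_eq_half (hr : ∀ i, r i = s / 2) (hsum : s + ∑ i, r i = 1) :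
    bubblePhase k s l r = Complex.exp ((2 * Real.pi * (l / s) : ℝ) * Complex.I) - 1 := by
  simp only [hr, Finset.sum_const, Finset.card_univ, Fintype.card_fin, nsmul_eq_mul] at hsum
  have hs : s = 2 / (k + 2) := by
    field_simp
    linarith
  have hfactor : (k + 2 : ℝ) ^ (k + 1) / 2 * (∏ i, r i) * s = 1 := by
    simp only [hr, Finset.prod_const, Finset.card_univ, Fintype.card_fin, hs]
    have : (k + 2 : ℝ) ≠ 0 := by positivity
    rw [div_div, mul_comm (k + 2 : ℝ) 2, ← div_div, div_self two_ne_zero, one_div, inv_pow,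
      pow_succ]
    field_simp
  rw [bubblePhase, ← mul_assoc, ← Complex.ofReal_mul, hfactor, Complex.ofReal_one, one_mul]

theorem bubbleCore_ne_zero (hsum : s + ∑ i, r i = 1) : bubbleCore k s l r ≠ 0 := by
  intro h
  have hfst : 1 + bubblePhase k s l r = 0 := congrArg Prod.fst h
  have hsnd : ∀ i, ‖bubblePhase k s l r‖ * (2 * r i - s) = 0 :=
    fun i ↦ congrFun (congrArg Prod.snd h) i
  have hnorm : ‖bubblePhase k s l r‖ ≠ 0 := by
    intro h0
    rw [norm_eq_zero.1 h0] at hfst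
    simp at hfst
  have hr : ∀ i, r i = s / 2 := fun i ↦ by
    linarith [(mul_eq_zero.1 (hsnd i)).resolve_left hnorm]
  rw [bubblePhase_of_eq_half hr hsum] at hfst
  simp at hfst

/-- The map from the simplex with `k + 2` vertices to the nonzero vectors of `SphereSpace k` which
is constant on the boundary and has degree `a`. -/
noncomputable def bubble (k : ℕ) (a : ℤ) (w : Fin (k + 2) → ℝ) : SphereSpace k :=
  bubbleCore k (w 0 + w 1) (a * w 0) fun i ↦ w i.succ.succ

theorem continuous_bubble (a : ℤ) : Continuous (bubble k a) :=
  continuous_bubbleCore (by fun_prop) (by fun_prop) (by fun_prop)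

theorem bubble_zero (w : Fin (k + 2) → ℝ) : bubble k 0 w = (1, 0) := by
  simpa [bubble] using bubbleCore_int_mul (s := w 0 + w 1) (r := fun i : Fin k ↦ w i.succ.succ) 0

theorem bubble_of_eq_zero (a : ℤ) (w : Fin (k + 2) → ℝ) (i : Fin (k + 2)) (hi : w i = 0) :
    bubble k a w = (1, 0) := by
  unfold bubble
  revert hi
  refine Fin.cases (fun hi ↦ ?_) (fun i ↦ Fin.cases (fun hi ↦ ?_) (fun i hi ↦ ?_) i) i
  · rw [hi]
    simpa using bubbleCore_int_mul (s := 0 + w 1) (r := fun i : Fin k ↦ w i.succ.succ) 0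
  · rw [show w 1 = 0 from hi, add_zero]
    exact bubbleCore_int_mul a
  · exact bubbleCore_of_eq_zero i hi

theorem bubble_ne_zero (a : ℤ) {w : Fin (k + 2) → ℝ} (hw : ∑ i, w i = 1) : bubble k a w ≠ 0 := by
  refine bubbleCore_ne_zero ?_
  rw [← hw, Fin.sum_univ_succ, Fin.sum_univ_succ, ← add_assoc]
  rfl

end Bubble

section Filling

variable {k : ℕ}

/-- `G` extends over the simplex with `k + 3` vertices, as a nowhere vanishing map, the bubbles of
degrees `c` on its facets. -/
structure IsFilling (c : Fin (k + 3) → ℤ) (G : (Fin (k + 3) → ℝ) → SphereSpace k) : Prop where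
  continuousOn : ContinuousOn G (stdSimplex ℝ (Fin (k + 3)))
  ne_zero : ∀ t ∈ stdSimplex ℝ (Fin (k + 3)), G t ≠ 0
  eq_bubble : ∀ t ∈ stdSimplex ℝ (Fin (k + 3)), ∀ j, t j = 0 →
    G t = bubble k (c j) (j.removeNth t)

/-- The degrees `c 0, …, c (k + 2)` on the facets of a simplex with `k + 3` vertices admit a
filling. The degrees are indexed by `ℕ`, so that reindexing them is arithmetic in `ℕ`. -/
def IsFillable (k : ℕ) (c : ℕ → ℤ) : Prop :=
  ∃ G, IsFilling (fun j : Fin (k + 3) ↦ c j) G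

theorem IsFillable.congr {c c' : ℕ → ℤ} (hc : IsFillable k c) (h : ∀ j < k + 3, c j = c' j) :
    IsFillable k c' := by
  obtain ⟨G, hG⟩ := hc
  refine ⟨G, hG.continuousOn, hG.ne_zero, fun t ht j hj ↦ ?_⟩
  rw [hG.eq_bubble t ht j hj, h j j.2]

theorem isFillable_of_degenerate {p : ℕ} (hp : p < k + 2) {c : ℕ → ℤ} (hpp : c p = c (p + 1))
    (hc : ∀ j, j ≠ p → j ≠ p + 1 → c j = 0) : IsFillable k c := by
  let P : Fin (k + 2) := ⟨p, hp⟩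
  refine ⟨fun t ↦ bubble k (c p) (collapse P t),
    ((continuous_bubble _).comp (continuous_collapse P)).continuousOn,
    fun t ht ↦ bubble_ne_zero _ (by rw [sum_collapse, ht.2]), fun t _ j hj ↦ ?_⟩
  by_cases hcast : j = P.castSucc
  · subst hcast
    rw [collapse_eq_removeNth (Fin.predAbove_succAbove P) hj]
    rfl
  by_cases hsucc : j = P.succ
  · subst hsucc
    rw [collapse_eq_removeNth (predAbove_succ_succAbove P) hj, hpp]
    rfl
  · rw [bubble_of_eq_zero _ _ _ (collapse_predAbove_eq_zero hcast hsucc hj),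
      hc j (fun h ↦ hcast (Fin.ext h)) (fun h ↦ hsucc (Fin.ext h)), bubble_zero]

theorem isFillable_pair_of_add (x y : ℤ) :
    IsFillable k fun j ↦
      if j = 0 then x else if j = 1 then x + y else if j = 2 then y else 0 := by
  refine ⟨fun t ↦ bubbleCore k (t 0 + t 1 + t 2) ((x + y : ℤ) * t 0 + x * t 1)
      (fun i ↦ t i.succ.succ.succ),
    (continuous_bubbleCore (by fun_prop) (by fun_prop) (by fun_prop)).continuousOn,
    fun t ht ↦ bubbleCore_ne_zero ?_, fun t _ j ↦ ?_⟩
  · rw [← ht.2, Fin.sum_univ_succ, Fin.sum_univ_succ, Fin.sum_univ_succ, ← add_assoc, ← add_assoc]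
    rfl
  refine Fin.cases (fun h ↦ ?_) (fun j ↦ Fin.cases (fun h ↦ ?_) (fun j ↦ Fin.cases (fun h ↦ ?_)
    (fun j h ↦ ?_) j) j) j
  · have h1 : Fin.removeNth 0 t 0 = t 1 := rfl
    have h2 : Fin.removeNth 0 t 1 = t 2 := rfl
    rw [bubble, h1, h2, h]
    simp [Fin.removeNth]
  · have h1 : Fin.removeNth (Fin.succ 0) t 0 = t 0 := rfl
    have h2 : Fin.removeNth (Fin.succ 0) t 1 = t 2 := rfl
    rw [bubble, h1, h2, show t 1 = 0 from h]
    simp [Fin.removeNth]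
  · have h1 : Fin.removeNth (Fin.succ (Fin.succ 0)) t 0 = t 0 := rfl
    have h2 : Fin.removeNth (Fin.succ (Fin.succ 0)) t 1 = t 1 := rfl
    have hphase : ((x + y : ℤ) : ℝ) * t 0 + x * t 1 = y * t 0 + x * (t 0 + t 1) := by
      push_cast
      ring
    have hval : ((Fin.succ (Fin.succ 0) : Fin (k + 3)) : ℕ) = 2 := rfl
    rw [bubble, h1, h2, show t 2 = 0 from h, add_zero, hphase, bubbleCore_add_int_mul]
    simp only [hval, Fin.removeNth, Fin.succ_succAbove_succ, Fin.succAbove_zero]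
    norm_num
  · rw [bubbleCore_of_eq_zero (r := fun i : Fin k ↦ t i.succ.succ.succ) j h]
    simp [bubble_zero]

variable {P : Fin (k + 4)} {a : Fin (k + 4) → Fin (k + 4) → ℤ}
  {G : Fin (k + 3) → (Fin (k + 3) → ℝ) → SphereSpace k}

theorem IsFilling.eqOn_ridge (ha : ∀ i j, a i j = a j i)
    (hG : ∀ j, IsFilling (fun l ↦ a (P.succAbove j) ((P.succAbove j).succAbove l)) (G j))
    {t : Fin (k + 4) → ℝ} (ht : t ∈ stdSimplex ℝ (Fin (k + 4))) {j j' : Fin (k + 3)}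
    (hj : t (P.succAbove j) = 0) (hj' : t (P.succAbove j') = 0) :
    G j ((P.succAbove j).removeNth t) = G j' ((P.succAbove j').removeNth t) := by
  rcases eq_or_ne j j' with rfl | hne
  · rfl
  obtain ⟨l, hl⟩ := Fin.exists_succAbove_eq
    (fun h ↦ hne (Fin.succAbove_right_injective h).symm : P.succAbove j' ≠ P.succAbove j)
  have hl' : (P.succAbove j').succAbove (l.predAbove (P.succAbove j)) = P.succAbove j := by
    rw [← hl, Fin.succAbove_succAbove_predAbove]
  have hzero : (P.succAbove j).removeNth t l = 0 := by rw [Fin.removeNth, hl, hj']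
  have hzero' : (P.succAbove j').removeNth t (l.predAbove (P.succAbove j)) = 0 := by
    rw [Fin.removeNth, hl', hj]
  rw [(hG j).eq_bubble _ (removeNth_mem_stdSimplex ht _ hj) l hzero,
    (hG j').eq_bubble _ (removeNth_mem_stdSimplex ht _ hj') _ hzero', hl', hl, ha,
    Fin.removeNth_removeNth_eq_swap, hl]

theorem IsFilling.exists_comp_hornLift (ha : ∀ i j, a i j = a j i)
    (hG : ∀ j, IsFilling (fun l ↦ a (P.succAbove j) ((P.succAbove j).succAbove l)) (G j)) :
    ∃ H : (Fin (k + 3) → ℝ) → SphereSpace k, ContinuousOn H (stdSimplex ℝ (Fin (k + 3))) ∧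
      ∀ x ∈ stdSimplex ℝ (Fin (k + 3)), ∀ j, x j = minCoord x →
        H x = G j ((P.succAbove j).removeNth (hornLift P x)) := by
  let S : Fin (k + 3) → Set (Fin (k + 3) → ℝ) :=
    fun j ↦ stdSimplex ℝ (Fin (k + 3)) ∩ {x | x j = minCoord x}
  have hzero : ∀ j, ∀ x ∈ S j, hornLift P x (P.succAbove j) = 0 := fun j x hx ↦ by
    rw [hornLift_succAbove, sub_eq_zero]
    exact hx.2
  obtain ⟨H, hH, hHG⟩ := exists_continuousOn_iUnion_of_isClosed S
    (fun j x ↦ G j ((P.succAbove j).removeNth (hornLift P x)))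
    (fun j ↦ (isClosed_stdSimplex ℝ _).inter
      (isClosed_eq (continuous_apply j) continuous_minCoord))
    (fun j ↦ (hG j).continuousOn.comp (continuous_pi fun i ↦
        (continuous_apply _).comp (continuous_hornLift P)).continuousOn
      fun x hx ↦ removeNth_mem_stdSimplex (hornLift_mem_stdSimplex hx.1) _ (hzero j x hx))
    (fun j j' x hj hj' ↦ IsFilling.eqOn_ridge ha hG (hornLift_mem_stdSimplex hj.1)
      (hzero j x hj) (hzero j' x hj'))
  refine ⟨H, hH.mono fun x hx ↦ ?_, fun x hx j hj ↦ hHG j x ⟨hx, hj⟩⟩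
  obtain ⟨j, hj⟩ := exists_eq_minCoord x
  exact mem_iUnion.2 ⟨j, hx, hj⟩

theorem IsFilling.exists_of_horn (ha : ∀ i j, a i j = a j i)
    (hG : ∀ j, IsFilling (fun l ↦ a (P.succAbove j) ((P.succAbove j).succAbove l)) (G j)) :
    ∃ H, IsFilling (fun l ↦ a P (P.succAbove l)) H := by
  obtain ⟨H, hH, hHG⟩ := IsFilling.exists_comp_hornLift ha hG
  have hface : ∀ x ∈ stdSimplex ℝ (Fin (k + 3)), ∀ j, x j = minCoord x →
      (P.succAbove j).removeNth (hornLift P x) ∈ stdSimplex ℝ (Fin (k + 3)) := fun x hx j hj ↦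
    removeNth_mem_stdSimplex (hornLift_mem_stdSimplex hx) _
      (by rw [hornLift_succAbove, hj, sub_self])
  refine ⟨H, hH, fun x hx ↦ ?_, fun x hx j hj ↦ ?_⟩
  · obtain ⟨j, hj⟩ := exists_eq_minCoord x
    rw [hHG x hx j hj]
    exact (hG j).ne_zero _ (hface x hx j hj)
  · have hmin : minCoord x = 0 := minCoord_eq_zero hx.1 hj
    have hjmin : x j = minCoord x := by rw [hj, hmin]
    have hP : (P.succAbove j).succAbove (j.predAbove P) = P := Fin.succAbove_succAbove_predAbove ..
    have hzero : (P.succAbove j).removeNth (hornLift P x) (j.predAbove P) = 0 := by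
      rw [Fin.removeNth, hP, hornLift_self, hmin, mul_zero]
    rw [hHG x hx j hjmin, (hG j).eq_bubble _ (hface x hx j hjmin) _ hzero, hP, ha,
      ← Fin.removeNth_removeNth_eq_swap, removeNth_hornLift hmin]

theorem IsFillable.of_horn (a : ℕ → ℕ → ℤ) (ha : ∀ i j, a i j = a j i) (p : ℕ) (hp : p < k + 4)
    (h : ∀ i < k + 4, i ≠ p → IsFillable k fun j ↦ a i (if j < i then j else j + 1)) :
    IsFillable k fun j ↦ a p (if j < p then j else j + 1) := by
  let P : Fin (k + 4) := ⟨p, hp⟩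
  choose G hG using fun j ↦
    h (P.succAbove j) (Fin.is_lt _) fun hj ↦ Fin.succAbove_ne P j (Fin.ext hj)
  simp only [← val_succAbove] at hG
  obtain ⟨H, hH⟩ := IsFilling.exists_of_horn (a := fun i j ↦ a i j) (fun i j ↦ ha i j) hG
  exact ⟨H, by simpa only [val_succAbove P, P] using hH⟩

end Filling

section DegreeSum

variable {k p : ℕ}

/-- A simplex is fillable whenever its only facets of nonzero degree are `p`, `p + 1`, `p + 2` and
their alternating degree sum vanishes. -/
def TripleFillable (k p : ℕ) : Prop :=
  ∀ c : ℕ → ℤ, c (p + 1) = c p + c (p + 2) →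
    (∀ j, j ≠ p → j ≠ p + 1 → j ≠ p + 2 → c j = 0) → IsFillable k c

theorem tripleFillable_zero : TripleFillable k 0 := fun c hc hc0 ↦
  (isFillable_pair_of_add (c 0) (c 2)).congr fun j _ ↦ by grind

-- The facets `p` and `p + 1` of a `(k + 3)`-simplex with faces `p + 2` (new) and `p + 3` (old) are
-- triples, and all others are degenerate.
theorem TripleFillable.add_add (hp : p ≤ k) (hT : TripleFillable k p) {c : ℕ → ℤ} (x : ℤ)
    (hc : IsFillable k c) :
    IsFillable k fun j ↦ if j = p ∨ j = p + 1 then c j + x else c j := by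
  let cOld : ℕ → ℤ := fun i ↦ if i < p + 3 then c i else c (i - 1)
  let cNew : ℕ → ℤ := fun i ↦ if i = p ∨ i = p + 1 then cOld i + x else cOld i
  let a : ℕ → ℕ → ℤ := fun i j ↦
    if i = p + 3 then cOld j else if j = p + 3 then cOld i else
    if i = p + 2 then cNew j else if j = p + 2 then cNew i else
    if (i = p ∧ j = p + 1) ∨ (i = p + 1 ∧ j = p) then x else 0
  have ha : ∀ i j, a i j = a j i := by
    intro i j
    simp only [a]
    grind
  refine (IsFillable.of_horn a ha (p + 2) (by omega) fun i hi hip ↦ ?_).congr fun j _ ↦ by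
    simp only [a, cNew, cOld]
    grind
  rcases (by omega : i = p + 3 ∨ (i = p ∨ i = p + 1) ∨ i < p ∨ p + 3 < i) with h | h | h | h
  · exact hc.congr fun j _ ↦ by simp only [a, cOld]; grind
  · apply hT <;> simp only [a, cNew, cOld] <;> grind
  · apply isFillable_of_degenerate (p := p + 1) (by omega) <;> simp only [a, cNew, cOld] <;> grind
  · apply isFillable_of_degenerate (p := p + 2) (by omega) <;> simp only [a, cNew, cOld] <;> grind

theorem TripleFillable.sub_add (hp : p ≤ k) (hT : TripleFillable k p) {c : ℕ → ℤ} (x : ℤ)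
    (hc : IsFillable k c) :
    IsFillable k fun j ↦ if j = p then c j - x else if j = p + 2 then c j + x else c j := by
  let cOld : ℕ → ℤ := fun i ↦ if i < p + 2 then c i else c (i - 1)
  let cNew : ℕ → ℤ := fun i ↦
    if i = p then cOld i - x else if i = p + 3 then cOld i + x else cOld i
  let a : ℕ → ℕ → ℤ := fun i j ↦
    if i = p + 2 then cOld j else if j = p + 2 then cOld i else
    if i = p + 1 then cNew j else if j = p + 1 then cNew i else
    if (i = p ∧ j = p + 3) ∨ (i = p + 3 ∧ j = p) then x else 0
  have ha : ∀ i j, a i j = a j i := by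
    intro i j
    simp only [a]
    grind
  refine (IsFillable.of_horn a ha (p + 1) (by omega) fun i _ hip ↦ ?_).congr fun j _ ↦ by
    simp only [a, cNew, cOld]
    grind
  rcases (by omega : i = p + 2 ∨ (i = p ∨ i = p + 3) ∨ i < p ∨ p + 3 < i) with h | h | h | h
  · exact hc.congr fun j _ ↦ by simp only [a, cOld]; grind
  · apply hT <;> simp only [a, cNew, cOld] <;> grind
  · apply isFillable_of_degenerate (p := p) (by omega) <;> simp only [a, cNew, cOld] <;> grind
  · apply isFillable_of_degenerate (p := p + 1) (by omega) <;> simp only [a, cNew, cOld] <;> grind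

theorem TripleFillable.add_add_succ (hp : p ≤ k) (hT : TripleFillable k p) {c : ℕ → ℤ} (x : ℤ)
    (hc : IsFillable k c) :
    IsFillable k fun j ↦ if j = p + 1 ∨ j = p + 2 then c j + x else c j :=
  (hT.sub_add hp x (hT.add_add hp x hc)).congr fun j _ ↦ by grind

theorem tripleFillable (hp : p ≤ k) : TripleFillable k p := by
  induction p with
  | zero => exact tripleFillable_zero
  | succ p ih =>
    intro c hc hc0
    have hdeg : IsFillable k fun j ↦ if j = p + 2 ∨ j = p + 3 then c (p + 3) else 0 :=
      isFillable_of_degenerate (p := p + 2) (by omega) (by grind) (by grind)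
    exact ((ih (by omega)).add_add_succ (by omega) (c (p + 1)) hdeg).congr fun j _ ↦ by grind

theorem IsFillable.add_add (hp : p ≤ k + 1) {c : ℕ → ℤ} (x : ℤ) (hc : IsFillable k c) :
    IsFillable k fun j ↦ if j = p ∨ j = p + 1 then c j + x else c j := by
  rcases Nat.lt_or_ge k p with h | h
  · obtain rfl : p = k + 1 := by omega
    exact (tripleFillable le_rfl).add_add_succ le_rfl x hc
  · exact (tripleFillable h).add_add h x hc

theorem isFillable_of_support (hp : p ≤ k + 2) {c : ℕ → ℤ} (hc : ∀ j, p < j → c j = 0)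
    (hsum : ∑ j ∈ Finset.range (p + 1), (-1) ^ j * c j = 0) : IsFillable k c := by
  induction p generalizing c with
  | zero =>
    have h0 : c 0 = 0 := by simpa using hsum
    exact isFillable_of_degenerate (p := 0) (by omega) (by grind) (by grind)
  | succ p ih =>
    let c' : ℕ → ℤ := fun j ↦ if j = p then c p - c (p + 1) else if j ≤ p then c j else 0
    have hsum' : ∑ j ∈ Finset.range (p + 1), (-1) ^ j * c' j = 0 := by
      have hlt : ∑ j ∈ Finset.range p, (-1) ^ j * c' j = ∑ j ∈ Finset.range p, (-1) ^ j * c j :=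
        Finset.sum_congr rfl fun j hj ↦ by grind
      rw [Finset.sum_range_succ, Finset.sum_range_succ] at hsum
      rw [Finset.sum_range_succ, hlt, ← hsum, pow_succ]
      simp only [c', if_true]
      ring
    refine ((ih (by omega) (by grind) hsum').add_add (p := p) (by omega) (c (p + 1))).congr
      fun j _ ↦ ?_
    have := hc j
    grind

theorem isFillable_of_alternating_sum_eq_zero {c : ℕ → ℤ}
    (h : ∑ j ∈ Finset.range (k + 3), (-1) ^ j * c j = 0) : IsFillable k c := by
  refine (isFillable_of_support (c := fun j ↦ if j < k + 3 then c j else 0) le_rfl (by grind)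
    ?_).congr fun j hj ↦ if_pos hj
  rw [← h]
  exact Finset.sum_congr rfl fun j hj ↦ by rw [if_pos (Finset.mem_range.1 hj)]

end DegreeSum

section Barycenter

variable {k : ℕ} {t : Fin (k + 3) → ℝ} {s : ℝ}

/-- Linear coordinates on the vectors modulo constants; they vanish at the barycenter of the simplex
with `k + 3` vertices and at no other point of it. -/
noncomputable def barycenterCoord (k : ℕ) : (Fin (k + 3) → ℝ) →ₗ[ℝ] SphereSpace k where
  toFun t := (⟨(k + 2) * t 0 - ∑ i : Fin (k + 2), t i.succ, t 2 - t 1⟩,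
    fun i ↦ 2 * t i.succ.succ.succ - t 1 - t 2)
  map_add' t u := by
    refine Prod.ext (Complex.ext ?_ ?_) (funext fun i ↦ ?_) <;>
      simp only [Pi.add_apply, Prod.fst_add, Prod.snd_add, Complex.add_re, Complex.add_im,
        Finset.sum_add_distrib] <;> ring
  map_smul' c t := by
    refine Prod.ext (Complex.ext ?_ ?_) (funext fun i ↦ ?_) <;>
      simp [← Finset.mul_sum] <;> ring

theorem fst_barycenterCoord_re (t : Fin (k + 3) → ℝ) :
    (barycenterCoord k t).1.re = (k + 2) * t 0 - ∑ i : Fin (k + 2), t i.succ := rfl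

theorem fst_barycenterCoord_im (t : Fin (k + 3) → ℝ) :
    (barycenterCoord k t).1.im = t 2 - t 1 := rfl

theorem snd_barycenterCoord (t : Fin (k + 3) → ℝ) (i : Fin k) :
    (barycenterCoord k t).2 i = 2 * t i.succ.succ.succ - t 1 - t 2 := rfl

theorem continuous_barycenterCoord : Continuous (barycenterCoord k) :=
  LinearMap.continuous_of_finiteDimensional _

theorem apply_succ_eq (h : t 2 = t 1) (hi : ∀ i : Fin k, 2 * t i.succ.succ.succ = t 1 + t 2)
    (i : Fin (k + 2)) : t i.succ = t 1 := by
  induction i using Fin.cases with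
  | zero => rfl
  | succ i =>
    induction i using Fin.cases with
    | zero => exact h
    | succ i => linarith [hi i]

theorem barycenterCoord_eq_zero_iff : barycenterCoord k t = 0 ↔ ∀ i, t i = t 0 := by
  refine ⟨fun h ↦ ?_, fun h ↦ ?_⟩
  · have hre : (k + 2) * t 0 - ∑ i : Fin (k + 2), t i.succ = 0 :=
      congrArg (fun v : SphereSpace k ↦ v.1.re) h
    have him : t 2 - t 1 = 0 := congrArg (fun v : SphereSpace k ↦ v.1.im) h
    have hsnd : ∀ i : Fin k, 2 * t i.succ.succ.succ - t 1 - t 2 = 0 :=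
      fun i ↦ congrFun (congrArg Prod.snd h) i
    have htail := apply_succ_eq (t := t) (by linarith) fun i ↦ by linarith [hsnd i]
    simp only [htail, Finset.sum_const, Finset.card_univ, Fintype.card_fin, nsmul_eq_mul] at hre
    push_cast at hre
    have hk : (k : ℝ) + 2 ≠ 0 := by positivity
    have h01 : t 0 = t 1 := mul_left_cancel₀ hk (by linarith)
    exact fun i ↦ Fin.cases rfl (fun i ↦ by rw [htail, h01]) i
  · refine Prod.ext (Complex.ext ?_ ?_) (funext fun i ↦ ?_)
    · rw [fst_barycenterCoord_re]
      simp [h]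
    · rw [fst_barycenterCoord_im, h 2, h 1]
      exact sub_self _
    · rw [snd_barycenterCoord, h i.succ.succ.succ, h 2, h 1, two_mul, add_sub_cancel_right]
      exact sub_self _

theorem surjective_barycenterCoord : Function.Surjective (barycenterCoord k) := by
  have hker : LinearMap.ker (barycenterCoord k) = Submodule.span ℝ {1} := by
    ext t
    rw [LinearMap.mem_ker, barycenterCoord_eq_zero_iff, Submodule.mem_span_singleton]
    refine ⟨fun h ↦ ⟨t 0, funext fun i ↦ by simp [h i]⟩, ?_⟩
    rintro ⟨c, rfl⟩ i
    rfl
  have hone : (1 : Fin (k + 3) → ℝ) ≠ 0 := one_ne_zero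
  have hrank := LinearMap.finrank_range_add_finrank_ker (barycenterCoord k)
  rw [hker, finrank_span_singleton hone, Module.finrank_fin_fun] at hrank
  refine LinearMap.range_eq_top.1 (Submodule.eq_top_of_finrank_eq ?_)
  rw [Module.finrank_prod, Complex.finrank_real_complex, Module.finrank_fin_fun]
  omega

theorem barycenterCoord_lineMap_ne_zero {u : Fin (k + 3) → ℝ} (hu : u ∈ stdSimplex ℝ (Fin (k + 3)))
    (ht : t ∈ stdSimplex ℝ (Fin (k + 3))) {j : Fin (k + 3)} (hj : t j = 0)
    (huj : (k + 3) * u j < 1) (hs0 : 0 ≤ s) :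
    barycenterCoord k ((1 - s) • u + s • t) ≠ 0 := by
  intro h
  have hconst := barycenterCoord_eq_zero_iff.1 h
  have hsum : ∑ i, ((1 - s) • u + s • t) i = 1 := by
    simp only [Pi.add_apply, Pi.smul_apply, smul_eq_mul, Finset.sum_add_distrib, ← Finset.mul_sum,
      hu.2, ht.2]
    ring
  rw [Finset.sum_congr rfl fun i _ ↦ (hconst i).trans (hconst j).symm] at hsum
  simp only [Pi.add_apply, Pi.smul_apply, hj, smul_eq_mul, mul_zero, add_zero, Finset.sum_const,
    Finset.card_univ, Fintype.card_fin, nsmul_eq_mul, Nat.cast_add, Nat.cast_ofNat] at hsum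
  have : 0 ≤ ((k : ℝ) + 3) * u j := mul_nonneg (by positivity) (hu.1 j)
  nlinarith

/-- The map from the boundary of the simplex with `k + 3` vertices to the sphere which has degree
one on the facet `0` and is constant on the other facets. -/
noncomputable def tailBubble (k : ℕ) (t : Fin (k + 3) → ℝ) : SphereSpace k :=
  bubble k 1 (Fin.tail t)

theorem continuous_tailBubble : Continuous (tailBubble k) :=
  (continuous_bubble 1).comp (continuous_pi fun i ↦ continuous_apply i.succ)

theorem tailBubble_of_eq_zero (i : Fin (k + 2)) (hi : t i.succ = 0) : tailBubble k t = (1, 0) :=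
  bubble_of_eq_zero 1 _ i hi

theorem tailBubble_ne_zero (ht : t ∈ stdSimplex ℝ (Fin (k + 3))) (h : ∃ j, t j = 0) :
    tailBubble k t ≠ 0 := by
  obtain ⟨j, hj⟩ := h
  induction j using Fin.cases with
  | zero =>
    have hsum := ht.2
    rw [Fin.sum_univ_succ, hj, zero_add] at hsum
    exact bubble_ne_zero _ hsum
  | succ i =>
    rw [tailBubble_of_eq_zero i hj]
    exact fun h ↦ one_ne_zero (congrArg Prod.fst h)

theorem eq_of_sub_add_mul_sin_eq_zero {a b D : ℝ} (ha : 0 < a) (hb : 0 < b) (hs0 : 0 ≤ s)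
    (hs1 : s < 1) (hD : 0 ≤ D)
    (h : (1 - s) * (b - a) + s * (D * Real.sin (2 * Real.pi * (a / (a + b)))) = 0) : b = a := by
  have hab : 0 < a + b := by linarith
  have hpi := Real.pi_pos
  set θ : ℝ := 2 * Real.pi * (a / (a + b))
  have hθpos : 0 < θ := by positivity
  rcases lt_trichotomy a b with hlt | heq | hlt
  · have hratio : a / (a + b) < 1 / 2 := by
      rw [div_lt_div_iff₀ hab (by norm_num)]
      linarith
    have hsin := Real.sin_pos_of_pos_of_lt_pi hθpos (by nlinarith)
    have : 0 ≤ s * (D * Real.sin θ) := by positivity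
    nlinarith
  · exact heq.symm
  · have hratio : 1 / 2 < a / (a + b) := by
      rw [div_lt_div_iff₀ (by norm_num) hab]
      linarith
    have hratio' : a / (a + b) < 1 := by
      rw [div_lt_one hab]
      linarith
    have hsin : 0 ≤ -Real.sin θ := by
      rw [← Real.sin_sub_two_pi]
      exact neg_nonneg.2 (Real.sin_nonpos_of_nonpos_of_neg_pi_le (by nlinarith) (by nlinarith))
    have : 0 ≤ s * (D * -Real.sin θ) := by positivity
    nlinarith

theorem bubblePhase_im (l : ℝ) (r : Fin k → ℝ) :
    (bubblePhase k s l r).im =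
      (k + 2 : ℝ) ^ (k + 1) / 2 * (∏ i, r i) * s * Real.sin (2 * Real.pi * (l / s)) := by
  rw [bubblePhase, Complex.im_ofReal_mul, Complex.im_ofReal_mul, Complex.sub_im,
    Complex.exp_ofReal_mul_I_im, Complex.one_im, sub_zero]
  ring

theorem mix_ne_zero_of_tail_eq_zero (ht : t ∈ stdSimplex ℝ (Fin (k + 3))) {i : Fin (k + 2)}
    (hi : t i.succ = 0) (hs0 : 0 ≤ s) (hs1 : s < 1) :
    (1 - s) • barycenterCoord k t + s • tailBubble k t ≠ 0 := by
  intro h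
  rw [tailBubble_of_eq_zero i hi] at h
  have hre : (1 - s) * ((k + 2) * t 0 - ∑ i : Fin (k + 2), t i.succ) + s * 1 = 0 := by
    simpa [fst_barycenterCoord_re] using congrArg (fun v : SphereSpace k ↦ v.1.re) h
  have him : (1 - s) * (t 2 - t 1) = 0 := by
    simpa [fst_barycenterCoord_im] using congrArg (fun v : SphereSpace k ↦ v.1.im) h
  have hsnd : ∀ i : Fin k, (1 - s) * (2 * t i.succ.succ.succ - t 1 - t 2) = 0 := fun i ↦ by
    simpa [snd_barycenterCoord] using congrFun (congrArg Prod.snd h) i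
  have hs : 1 - s ≠ 0 := by linarith
  have htail := apply_succ_eq (t := t) (by linarith [(mul_eq_zero.1 him).resolve_left hs])
    fun i ↦ by linarith [(mul_eq_zero.1 (hsnd i)).resolve_left hs]
  have htail0 : ∀ j : Fin (k + 2), t j.succ = 0 := fun j ↦ by rw [htail, ← htail i, hi]
  have ht0 : t 0 = 1 := by simpa [Fin.sum_univ_succ, htail0] using ht.2
  simp only [htail0, ht0, Finset.sum_const_zero, mul_one, sub_zero] at hre
  have : 0 < (1 - s) * ((k : ℝ) + 2) := mul_pos (by linarith) (by positivity)
  linarith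

theorem mix_ne_zero_of_tail_pos (ht : t ∈ stdSimplex ℝ (Fin (k + 3))) (ht0 : t 0 = 0)
    (hpos : ∀ i : Fin (k + 2), 0 < t i.succ) (hs0 : 0 ≤ s) (hs1 : s < 1) :
    (1 - s) • barycenterCoord k t + s • tailBubble k t ≠ 0 := by
  intro h
  set r : Fin k → ℝ := fun i ↦ t i.succ.succ.succ with hr
  set w : ℂ := bubblePhase k (t 1 + t 2) (t 1) r with hw
  have hbubble : tailBubble k t = (1 + w, fun i ↦ ‖w‖ * (2 * r i - (t 1 + t 2))) := by
    simp [tailBubble, bubble, bubbleCore, Fin.tail, hw, hr]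
  rw [hbubble] at h
  have hsum : ∑ i : Fin (k + 2), t i.succ = 1 := by simpa [Fin.sum_univ_succ, ht0] using ht.2
  have hre : -(1 - s) + (s + s * w.re) = 0 := by
    simpa [fst_barycenterCoord_re, ht0, hsum] using congrArg (fun v : SphereSpace k ↦ v.1.re) h
  have him : (1 - s) * (t 2 - t 1) + s * w.im = 0 := by
    simpa [fst_barycenterCoord_im] using congrArg (fun v : SphereSpace k ↦ v.1.im) h
  have hsnd : ∀ i, (1 - s) * (2 * r i - t 1 - t 2) + s * (‖w‖ * (2 * r i - (t 1 + t 2))) = 0 :=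
    fun i ↦ by simpa [snd_barycenterCoord] using congrFun (congrArg Prod.snd h) i
  have hhalf : ∀ i, 2 * r i = t 1 + t 2 := fun i ↦ by
    have hfactor : (1 - s + s * ‖w‖) * (2 * r i - (t 1 + t 2)) = 0 := by linarith [hsnd i]
    have : 0 < 1 - s + s * ‖w‖ := add_pos_of_pos_of_nonneg (by linarith) (by positivity)
    linarith [(mul_eq_zero.1 hfactor).resolve_left this.ne']
  have h1 : 0 < t 1 := hpos 0
  have h2 : 0 < t 2 := hpos 1
  have hprod : 0 < ∏ i, r i := Finset.prod_pos fun i _ ↦ hpos _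
  have h12 : t 2 = t 1 := by
    rw [hw, bubblePhase_im] at him
    exact eq_of_sub_add_mul_sin_eq_zero h1 h2 hs0 hs1 (by positivity) him
  have hwre : w.re = -2 := by
    have hangle : 2 * Real.pi * (t 1 / (t 1 + t 2)) = Real.pi := by
      rw [h12]
      field_simp
      norm_num
    rw [hw, bubblePhase_of_eq_half (fun i ↦ by linarith [hhalf i])
      (by simpa [Fin.sum_univ_succ, add_assoc] using hsum), hangle, Complex.exp_pi_mul_I]
    norm_num
  rw [hwre] at hre
  linarith

theorem mix_ne_zero (ht : t ∈ stdSimplex ℝ (Fin (k + 3))) (h : ∃ j, t j = 0) (hs0 : 0 ≤ s)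
    (hs1 : s ≤ 1) : (1 - s) • barycenterCoord k t + s • tailBubble k t ≠ 0 := by
  rcases hs1.eq_or_lt with rfl | hs1
  · simpa using tailBubble_ne_zero ht h
  by_cases htail : ∃ i : Fin (k + 2), t i.succ = 0
  · obtain ⟨i, hi⟩ := htail
    exact mix_ne_zero_of_tail_eq_zero ht hi hs0 hs1
  · push Not at htail
    obtain ⟨j, hj⟩ := h
    obtain rfl : j = 0 := by_contra fun hj0 ↦ by
      obtain ⟨i, rfl⟩ := Fin.exists_succ_eq.2 hj0
      exact htail i hj
    exact mix_ne_zero_of_tail_pos ht hj (fun i ↦ (ht.1 _).lt_of_ne' (htail i)) hs0 hs1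

end Barycenter

section Inessential

/-- An inessential map to a simplex, in the sense of Alexandrov: some map agreeing with `φ` over the
boundary takes all its values in the boundary. The values are not normalized to sum to one. -/
def IsInessential {S ι : Type*} [TopologicalSpace S] (φ : S → ι → ℝ) : Prop :=
  ∃ ψ : S → ι → ℝ, Continuous ψ ∧ ∀ x, (∀ i, 0 ≤ ψ x i) ∧ (∃ i, ψ x i = 0) ∧
    (∃ i, 0 < ψ x i) ∧ ((∃ i, φ x i = 0) → ψ x = φ x)

variable {S : Type*} [TopologicalSpace S] {k : ℕ} {φ t : S → Fin (k + 3) → ℝ}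

theorem IsInessential.of_eq_barycenterCoord (hφ : ∀ x i, 0 ≤ φ x i) {G : S → SphereSpace k}
    (hG : Continuous G) (hG0 : ∀ x, G x ≠ 0)
    (hGφ : ∀ x, (∃ i, φ x i = 0) → G x = barycenterCoord k (φ x)) : IsInessential φ := by
  obtain ⟨Z, hZ⟩ := LinearMap.exists_rightInverse_of_surjective _
    (LinearMap.range_eq_top.2 (surjective_barycenterCoord (k := k)))
  have hZ : ∀ v, barycenterCoord k (Z v) = v := LinearMap.congr_fun hZ
  have hZc : Continuous fun x ↦ Z (G x) := (LinearMap.continuous_of_finiteDimensional Z).comp hG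
  refine ⟨fun x i ↦ Z (G x) i - minCoord (Z (G x)), continuous_pi fun i ↦
    ((continuous_apply i).comp hZc).sub (continuous_minCoord.comp hZc), fun x ↦
    ⟨fun i ↦ sub_nonneg.2 (minCoord_le _ i), ?_, ?_, ?_⟩⟩
  · obtain ⟨j, hj⟩ := exists_eq_minCoord (Z (G x))
    exact ⟨j, sub_eq_zero.2 hj⟩
  · by_contra! hmin
    have hconst : ∀ i, Z (G x) i = minCoord (Z (G x)) :=
      fun i ↦ le_antisymm (sub_nonpos.1 (hmin i)) (minCoord_le _ i)
    refine hG0 x ?_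
    rw [← hZ (G x), barycenterCoord_eq_zero_iff]
    exact fun i ↦ (hconst i).trans (hconst 0).symm
  · rintro ⟨i, hi⟩
    have hdiff : barycenterCoord k (Z (G x) - φ x) = 0 := by
      rw [map_sub, hZ, hGφ x ⟨i, hi⟩, sub_self]
    set c := (Z (G x) - φ x) 0
    have hc : ∀ j, Z (G x) j = φ x j + c := fun j ↦ by
      have hj : Z (G x) j - φ x j = c := barycenterCoord_eq_zero_iff.1 hdiff j
      linarith
    have hmin : minCoord (Z (G x)) = c := by
      obtain ⟨j, hj⟩ := exists_eq_minCoord (Z (G x))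
      refine le_antisymm ?_ ?_
      · simpa [hc i, hi] using minCoord_le (Z (G x)) i
      · linarith [hc j, hφ x j]
    funext j
    change Z (G x) j - minCoord (Z (G x)) = φ x j
    rw [hmin, hc j, add_sub_cancel_right]

-- A homotopy from `barycenterCoord ∘ φ` through `barycenterCoord ∘ t` and `tailBubble ∘ t`
-- to `ψ`, in terms of the distance to the boundary.
theorem IsInessential.of_eq_tailBubble (hφc : Continuous φ) (htc : Continuous t)
    (hφ : ∀ x, φ x ∈ stdSimplex ℝ (Fin (k + 3))) (ht : ∀ x, t x ∈ stdSimplex ℝ (Fin (k + 3)))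
    {η : ℝ} (hη : 0 < η)
    (hφt : ∀ x, minCoord (φ x) ≤ η → ∃ j, t x j = 0 ∧ (k + 3) * φ x j < 1)
    {ψ : S → SphereSpace k} (hψ : Continuous ψ) (hψ0 : ∀ x, ψ x ≠ 0)
    (hψt : ∀ x, minCoord (φ x) ≤ η → ψ x = tailBubble k (t x)) : IsInessential φ := by
  let μ : S → ℝ := fun x ↦ minCoord (φ x)
  let s₁ : S → ℝ := fun x ↦ min 1 (2 * (μ x / η))
  let s₂ : S → ℝ := fun x ↦ max 0 (min 1 (2 * (μ x / η) - 1))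
  have hμ : Continuous μ := continuous_minCoord.comp hφc
  have hs₁ : Continuous s₁ := by fun_prop
  have hs₂ : Continuous s₂ := by fun_prop
  have hbc := continuous_barycenterCoord (k := k)
  refine .of_eq_barycenterCoord (fun x ↦ (hφ x).1)
    (G := fun x ↦ (1 - s₂ x) • barycenterCoord k ((1 - s₁ x) • φ x + s₁ x • t x) + s₂ x • ψ x)
    (by fun_prop) (fun x ↦ ?_) ?_
  · rcases le_or_gt (μ x) η with hx | hx
    · obtain ⟨j, hj, hφj⟩ := hφt x hx
      rcases le_or_gt (2 * (μ x / η)) 1 with hhalf | hhalf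
      · have hs₂x : s₂ x = 0 := max_eq_left ((min_le_right _ _).trans (by linarith))
        have hμ0 : 0 ≤ μ x := minCoord_nonneg (hφ x).1
        simp only [hs₂x, sub_zero, one_smul, zero_smul, add_zero]
        exact barycenterCoord_lineMap_ne_zero (hφ x) (ht x) hj hφj
          (le_min zero_le_one (by positivity))
      · have hs₁x : s₁ x = 1 := min_eq_left hhalf.le
        simp only [hs₁x, sub_self, zero_smul, one_smul, zero_add, hψt x hx]
        exact mix_ne_zero (ht x) ⟨j, hj⟩ (le_max_left _ _) (max_le zero_le_one (min_le_left _ _))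
    · have hratio : 1 ≤ μ x / η := (one_le_div hη).2 hx.le
      have hs₂x : s₂ x = 1 := by
        simp only [s₂]
        rw [min_eq_left (by linarith), max_eq_right zero_le_one]
      simpa [hs₂x] using hψ0 x
  · rintro x ⟨i, hi⟩
    have hμx : μ x = 0 := minCoord_eq_zero (hφ x).1 hi
    simp [s₁, s₂, hμx]

end Inessential

section Nerve

variable {S : Type*} [TopologicalSpace S] {k N : ℕ} {Λ : Fin N → Fin (k + 3)}
  {θ : PartitionOfUnity (Fin N) S} {x : S} {σ : Finset (Fin N)} {z : (Fin (k + 2) → Fin N) → ℤ}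

theorem isClosed_setOf_finsupport_subset : IsClosed {x | θ.finsupport x ⊆ σ} := by
  have : {x | θ.finsupport x ⊆ σ} = ⋂ i : Fin N, ⋂ _ : i ∉ σ, {x | θ i x = 0} := by
    ext x
    simp only [mem_ofPred_eq, mem_iInter, Finset.subset_iff, PartitionOfUnity.mem_finsupport,
      Function.mem_support]
    exact forall_congr' fun i ↦ not_imp_comm
  rw [this]
  exact isClosed_iInter fun i ↦ isClosed_iInter fun _ ↦
    isClosed_eq (θ i).continuous continuous_const

theorem sum_orderEmbOfFin_eq_one {n : ℕ} (h : σ.card = n) (hx : θ.finsupport x ⊆ σ) :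
    ∑ i, θ (σ.orderEmbOfFin h i) x = 1 := by
  rw [← θ.sum_finsupport' (mem_univ x) hx]
  conv_rhs => rw [← Finset.map_orderEmbOfFin_univ σ h, Finset.sum_map]
  rfl

theorem exists_orderEmbOfFin_eq_zero {n : ℕ} (h : σ.card = n) (hx : θ.finsupport x ⊂ σ) :
    ∃ j, θ (σ.orderEmbOfFin h j) x = 0 := by
  obtain ⟨i, hi, hix⟩ := Finset.exists_of_ssubset hx
  obtain ⟨j, rfl⟩ : i ∈ range (σ.orderEmbOfFin h) := by rwa [Finset.range_orderEmbOfFin]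
  exact ⟨j, by simpa using hix⟩

theorem orderEmbOfFin_erase {n : ℕ} (h : σ.card = n + 1) (j : Fin (n + 1))
    (h' : (σ.erase (σ.orderEmbOfFin h j)).card = n) :
    ⇑((σ.erase (σ.orderEmbOfFin h j)).orderEmbOfFin h') =
      fun i ↦ σ.orderEmbOfFin h (j.succAbove i) :=
  (Finset.orderEmbOfFin_unique h'
    (fun i ↦ Finset.mem_erase.2 ⟨fun he ↦ Fin.succAbove_ne j i ((σ.orderEmbOfFin h).injective he),
      Finset.orderEmbOfFin_mem _ _ _⟩)
    ((σ.orderEmbOfFin h).strictMono.comp (Fin.strictMono_succAbove j))).symm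

theorem exists_forall_ne_succ (hΛ : Monotone Λ) (hσ : σ.card ≤ k + 2)
    (h : ¬∃ h : σ.card = k + 2, ∀ i, Λ (σ.orderEmbOfFin h i) = i.succ) :
    ∃ i : Fin (k + 2), ∀ u ∈ σ, Λ u ≠ i.succ := by
  contrapose! h
  choose r hr hΛr using h
  have hmono : StrictMono r := fun i j hij ↦
    hΛ.reflect_lt (by rw [hΛr, hΛr]; exact Fin.succ_lt_succ_iff.2 hij)
  have hle : k + 2 ≤ σ.card := by
    simpa using Finset.card_le_card_of_injOn (s := Finset.univ) r (fun i _ ↦ hr i)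
      hmono.injective.injOn
  refine ⟨hσ.antisymm hle, fun i ↦ ?_⟩
  rw [← Finset.orderEmbOfFin_unique (hσ.antisymm hle) hr hmono, hΛr]

/-- The push-forward of the barycentric coordinates `θ` under the labelling `Λ` of the vertices. -/
noncomputable def labelSum (Λ : Fin N → Fin (k + 3)) (θ : PartitionOfUnity (Fin N) S) (x : S)
    (j : Fin (k + 3)) : ℝ :=
  ∑ i with Λ i = j, θ i x

theorem labelSum_eq_zero {j : Fin (k + 3)} (h : ∀ i ∈ θ.finsupport x, Λ i ≠ j) :
    labelSum Λ θ x j = 0 := by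
  refine Finset.sum_eq_zero fun i hi ↦ ?_
  by_contra hne
  exact h i ((θ.mem_finsupport x).2 hne) (Finset.mem_filter.1 hi).2

theorem labelSum_mem_stdSimplex : labelSum Λ θ x ∈ stdSimplex ℝ (Fin (k + 3)) := by
  refine ⟨fun j ↦ Finset.sum_nonneg fun i _ ↦ θ.nonneg i x, ?_⟩
  rw [← θ.sum_finsupport' (mem_univ x) (Finset.subset_univ _)]
  exact Finset.sum_fiberwise _ _ _

theorem continuous_labelSum : Continuous (labelSum Λ θ) :=
  continuous_pi fun _ ↦ continuous_finsetSum _ fun i _ ↦ (θ i).continuous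

/-- The map on the `(k + 1)`-skeleton of the nerve which has degree `z τ` on each simplex `τ` with
`k + 2` vertices and is constant on the `k`-skeleton, as a function of the barycentric coordinates
`θ` along `τ`. -/
noncomputable def skeletonMap (z : (Fin (k + 2) → Fin N) → ℤ) (θ : PartitionOfUnity (Fin N) S)
    (τ : Finset (Fin N)) (x : S) : SphereSpace k :=
  if h : τ.card = k + 2 then
    bubble k (z (τ.orderEmbOfFin h)) fun i ↦ θ (τ.orderEmbOfFin h i) x
  else (1, 0)

theorem continuous_skeletonMap : Continuous (skeletonMap z θ σ) := by
  unfold skeletonMap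
  split_ifs
  · exact (continuous_bubble _).comp (continuous_pi fun i ↦ (θ _).continuous)
  · exact continuous_const

theorem skeletonMap_ne_zero (hx : θ.finsupport x ⊆ σ) : skeletonMap z θ σ x ≠ 0 := by
  unfold skeletonMap
  split_ifs with h
  · exact bubble_ne_zero _ (sum_orderEmbOfFin_eq_one h hx)
  · exact fun h ↦ one_ne_zero (congrArg Prod.fst h)

theorem skeletonMap_eq_of_finsupport_subset (hσ : σ.card ≤ k + 2) (hx : θ.finsupport x ⊆ σ) :
    skeletonMap z θ σ x = skeletonMap z θ (θ.finsupport x) x := by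
  obtain rfl | hlt := hx.eq_or_ssubset
  · rfl
  have hcard := Finset.card_lt_card hlt
  rw [skeletonMap, skeletonMap, dif_neg (show (θ.finsupport x).card ≠ k + 2 by omega)]
  split_ifs with h
  · obtain ⟨j, hj⟩ := exists_orderEmbOfFin_eq_zero h hlt
    exact bubble_of_eq_zero _ _ j hj
  · rfl

/-- The degrees `z` of a map on the skeleton of the nerve agree, on the family `Q` of simplices,
with those of the simplicial map given by a monotone labelling `Λ` of the vertices followed by
`tailBubble`. This simplicial map takes `Q` to the boundary of the standard simplex. -/
structure IsLabelDegree (Λ : Fin N → Fin (k + 3)) (Q : Finset (Fin N) → Prop)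
    (z : (Fin (k + 2) → Fin N) → ℤ) : Prop where
  monotone : Monotone Λ
  subset {σ τ : Finset (Fin N)} : Q σ → τ ⊆ σ → Q τ
  exists_ne {σ : Finset (Fin N)} : Q σ → ∃ j, ∀ u ∈ σ, Λ u ≠ j
  eq_ite {τ : Finset (Fin N)} : Q τ → ∀ h : τ.card = k + 2,
    z (τ.orderEmbOfFin h) = if ∀ i, Λ (τ.orderEmbOfFin h i) = i.succ then 1 else 0

variable {Q : Finset (Fin N) → Prop}

theorem labelSum_succ (h : (θ.finsupport x).card = k + 2)
    (hΛ : ∀ i, Λ ((θ.finsupport x).orderEmbOfFin h i) = i.succ) (i : Fin (k + 2)) :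
    labelSum Λ θ x i.succ = θ ((θ.finsupport x).orderEmbOfFin h i) x := by
  refine Finset.sum_eq_single _ (fun u hu hne ↦ ?_) fun hi ↦ absurd (by simp [hΛ i]) hi
  by_contra hux
  obtain ⟨j, rfl⟩ : u ∈ range ((θ.finsupport x).orderEmbOfFin h) := by
    rw [Finset.range_orderEmbOfFin]
    exact (θ.mem_finsupport x).2 hux
  rw [Finset.mem_filter, hΛ] at hu
  exact hne (by rw [Fin.succ_injective _ hu.2])

theorem IsLabelDegree.tailBubble_labelSum (hz : IsLabelDegree Λ Q z) (hx : Q (θ.finsupport x))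
    (hcard : (θ.finsupport x).card ≤ k + 2) :
    tailBubble k (labelSum Λ θ x) = skeletonMap z θ (θ.finsupport x) x := by
  by_cases H : ∃ h : (θ.finsupport x).card = k + 2,
      ∀ i, Λ ((θ.finsupport x).orderEmbOfFin h i) = i.succ
  · obtain ⟨h, hΛ⟩ := H
    rw [skeletonMap, dif_pos h, hz.eq_ite hx h, if_pos hΛ, tailBubble]
    exact congrArg _ (funext fun i ↦ labelSum_succ h hΛ i)
  · obtain ⟨i, hi⟩ := exists_forall_ne_succ hz.monotone hcard H
    rw [tailBubble_of_eq_zero i (labelSum_eq_zero hi), skeletonMap]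
    split_ifs with h
    · rw [hz.eq_ite hx h, if_neg fun hΛ ↦ H ⟨h, hΛ⟩, bubble_zero]
    · rfl

/-- A nowhere zero extension `G` of the skeleton map to the part of the space lying over the closed
simplex `σ` of the nerve, prescribed on the simplices of `Q`. -/
structure IsNervePiece (Λ : Fin N → Fin (k + 3)) (Q : Finset (Fin N) → Prop)
    (z : (Fin (k + 2) → Fin N) → ℤ) (θ : PartitionOfUnity (Fin N) S) (σ : Finset (Fin N))
    (G : S → SphereSpace k) : Prop where
  continuousOn : ContinuousOn G {x | θ.finsupport x ⊆ σ}
  ne_zero {x : S} : θ.finsupport x ⊆ σ → G x ≠ 0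
  eq_skeletonMap {x : S} : θ.finsupport x ⊆ σ → (θ.finsupport x).card ≤ k + 2 →
    G x = skeletonMap z θ (θ.finsupport x) x
  eq_tailBubble {x : S} : Q σ → θ.finsupport x ⊆ σ → G x = tailBubble k (labelSum Λ θ x)

theorem IsLabelDegree.isNervePiece_tailBubble (hz : IsLabelDegree Λ Q z) (hσ : Q σ) :
    IsNervePiece Λ Q z θ σ fun x ↦ tailBubble k (labelSum Λ θ x) where
  continuousOn := (continuous_tailBubble.comp continuous_labelSum).continuousOn
  ne_zero {x} hx := by
    obtain ⟨j, hj⟩ := hz.exists_ne hσ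
    exact tailBubble_ne_zero labelSum_mem_stdSimplex
      ⟨j, labelSum_eq_zero fun u hu ↦ hj u (hx hu)⟩
  eq_skeletonMap hx hcard := hz.tailBubble_labelSum (hz.subset hσ hx) hcard
  eq_tailBubble _ _ := rfl

theorem isNervePiece_skeletonMap (hσ : ¬Q σ) (hcard : σ.card ≤ k + 2) :
    IsNervePiece Λ Q z θ σ (skeletonMap z θ σ) where
  continuousOn := continuous_skeletonMap.continuousOn
  ne_zero := skeletonMap_ne_zero
  eq_skeletonMap hx _ := skeletonMap_eq_of_finsupport_subset hcard hx
  eq_tailBubble h := absurd h hσ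

theorem exists_isNervePiece_of_card_eq (hσ : ¬Q σ) (hcard : σ.card = k + 3)
    (hz : ∑ j : Fin (k + 3),
      (-1) ^ (j : ℕ) * z (fun i ↦ σ.orderEmbOfFin hcard (j.succAbove i)) = 0) :
    ∃ G, IsNervePiece Λ Q z θ σ G := by
  let d (j : ℕ) : ℤ := if h : j < k + 3 then
    z (fun i ↦ σ.orderEmbOfFin hcard ((⟨j, h⟩ : Fin (k + 3)).succAbove i)) else 0
  have hd (j : Fin (k + 3)) : d j = z (fun i ↦ σ.orderEmbOfFin hcard (j.succAbove i)) :=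
    dif_pos j.2
  obtain ⟨G, hG⟩ := isFillable_of_alternating_sum_eq_zero (c := d)
    (by rw [Finset.sum_range, ← hz]; exact Finset.sum_congr rfl fun j _ ↦ by rw [hd])
  have hmem {x} (hx : θ.finsupport x ⊆ σ) :
      (fun i ↦ θ (σ.orderEmbOfFin hcard i) x) ∈ stdSimplex ℝ (Fin (k + 3)) :=
    ⟨fun i ↦ θ.nonneg _ x, sum_orderEmbOfFin_eq_one hcard hx⟩
  refine ⟨fun x ↦ G fun i ↦ θ (σ.orderEmbOfFin hcard i) x,
    hG.continuousOn.comp (continuous_pi fun i ↦ (θ _).continuous).continuousOn fun x ↦ hmem,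
    fun hx ↦ hG.ne_zero _ (hmem hx), fun {x} hx hxcard ↦ ?_, fun h ↦ absurd h hσ⟩
  have hlt : θ.finsupport x ⊂ σ := hx.ssubset_of_ne fun h ↦ by rw [h] at hxcard; omega
  obtain ⟨j, hj⟩ := exists_orderEmbOfFin_eq_zero hcard hlt
  have hface : (σ.erase (σ.orderEmbOfFin hcard j)).card = k + 2 := by
    rw [Finset.card_erase_of_mem (Finset.orderEmbOfFin_mem _ _ _), hcard]
    rfl
  have hxface : θ.finsupport x ⊆ σ.erase (σ.orderEmbOfFin hcard j) := fun u hu ↦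
    Finset.mem_erase.2 ⟨fun h ↦ (θ.mem_finsupport x).1 hu (h ▸ hj), hx hu⟩
  rw [← skeletonMap_eq_of_finsupport_subset hface.le hxface, skeletonMap, dif_pos hface,
    orderEmbOfFin_erase, ← hd, hG.eq_bubble _ (hmem hx) j hj]
  rfl

theorem IsLabelDegree.exists_continuous_ne_zero (hz : IsLabelDegree Λ Q z)
    (hcocycle : ∀ x, ∀ h : (θ.finsupport x).card = k + 3, ∑ j : Fin (k + 3),
      (-1) ^ (j : ℕ) * z (fun i ↦ (θ.finsupport x).orderEmbOfFin h (j.succAbove i)) = 0)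
    (hcard : ∀ x, (θ.finsupport x).card ≤ k + 3) :
    ∃ ψ : S → SphereSpace k, Continuous ψ ∧ (∀ x, ψ x ≠ 0) ∧
      ∀ x, Q (θ.finsupport x) → ψ x = tailBubble k (labelSum Λ θ x) := by
  have hpiece (σ : range θ.finsupport) : ∃ G, IsNervePiece Λ Q z θ σ G := by
    obtain ⟨_, y, rfl⟩ := σ
    by_cases hQ : Q (θ.finsupport y)
    · exact ⟨_, hz.isNervePiece_tailBubble hQ⟩
    obtain hlt | heq := (hcard y).lt_or_eq
    · exact ⟨_, isNervePiece_skeletonMap hQ (Nat.le_of_lt_succ hlt)⟩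
    · exact exists_isNervePiece_of_card_eq hQ heq (hcocycle y heq)
  choose G hG using hpiece
  have hagree (σ τ : range θ.finsupport) (x : S) (hxσ : θ.finsupport x ⊆ σ)
      (hxτ : θ.finsupport x ⊆ τ) : G σ x = G τ x := by
    by_cases hle : (θ.finsupport x).card ≤ k + 2
    · rw [(hG σ).eq_skeletonMap hxσ hle, (hG τ).eq_skeletonMap hxτ hle]
    have heq (ρ : range θ.finsupport) (hxρ : θ.finsupport x ⊆ ρ) : θ.finsupport x = ρ := by
      obtain ⟨_, y, rfl⟩ := ρ
      exact Finset.eq_of_subset_of_card_le hxρ ((hcard y).trans (by omega))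
    rw [Subtype.ext ((heq σ hxσ).symm.trans (heq τ hxτ))]
  obtain ⟨ψ, hψ, hψG⟩ := exists_continuousOn_iUnion_of_isClosed
    (fun σ : range θ.finsupport ↦ {x | θ.finsupport x ⊆ σ}) G
    (fun _ ↦ isClosed_setOf_finsupport_subset) (fun σ ↦ (hG σ).continuousOn) hagree
  have hψG' (x : S) : ψ x = G ⟨θ.finsupport x, mem_range_self x⟩ x :=
    hψG ⟨_, mem_range_self x⟩ x (Finset.Subset.refl _)
  have hcover : ⋃ σ : range θ.finsupport, {x | θ.finsupport x ⊆ σ} = univ :=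
    eq_univ_of_forall fun x ↦ mem_iUnion.2 ⟨⟨_, mem_range_self x⟩, Finset.Subset.refl _⟩
  rw [hcover, continuousOn_univ] at hψ
  refine ⟨ψ, hψ, fun x ↦ ?_, fun x hx ↦ ?_⟩
  · exact hψG' x ▸ (hG _).ne_zero subset_rfl
  · exact (hψG' x).trans ((hG _).eq_tailBubble hx subset_rfl)

end Nerve

section CoveringDim

/-- The metric space `X` has covering dimension at most `m`: it has finite open covers by
arbitrarily small sets, in which every point belongs to at most `m + 1` members. -/
def CoveringDimLE (m : ℕ) (X : Type*) [MetricSpace X] : Prop :=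
  ∀ δ > (0 : ℝ), ∃ (N : ℕ) (U : Fin N → Set X), (∀ i, IsOpen (U i)) ∧ (∀ x, ∃ i, x ∈ U i) ∧
    (∀ i, ∀ x ∈ U i, ∀ y ∈ U i, dist x y < δ) ∧
    ∀ x, ∀ s : Finset (Fin N), (∀ i ∈ s, x ∈ U i) → s.card ≤ m + 1

variable {S : Type*} [MetricSpace S] {m : ℕ} {δ : ℝ}

theorem CoveringDimLE.exists_partitionOfUnity (hS : CoveringDimLE m S) (hδ : 0 < δ) :
    ∃ (N : ℕ) (θ : PartitionOfUnity (Fin N) S), (∀ x, (θ.finsupport x).card ≤ m + 1) ∧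
      ∀ i x y, i ∈ θ.finsupport x → i ∈ θ.finsupport y → dist x y < δ := by
  obtain ⟨N, U, hUo, hUc, hUδ, hUm⟩ := hS δ hδ
  obtain ⟨θ, hθ⟩ := PartitionOfUnity.exists_isSubordinate isClosed_univ U hUo
    fun x _ ↦ mem_iUnion.2 (hUc x)
  have hmem (x : S) (i : Fin N) (hi : i ∈ θ.finsupport x) : x ∈ U i :=
    hθ i (subset_tsupport _ ((θ.mem_finsupport x).1 hi))
  exact ⟨N, θ, fun x ↦ hUm x _ (hmem x),
    fun i x y hx hy ↦ hUδ i x (hmem x i hx) y (hmem y i hy)⟩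

theorem CoveringDimLE.exists_partitionOfUnity_monotone [Nonempty S] (hS : CoveringDimLE m S)
    (hδ : 0 < δ) {ι : Type*} [LinearOrder ι] (label : S → ι) :
    ∃ (N : ℕ) (θ : PartitionOfUnity (Fin N) S) (p : Fin N → S), Monotone (label ∘ p) ∧
      (∀ x, (θ.finsupport x).card ≤ m + 1) ∧ ∀ x, ∀ i ∈ θ.finsupport x, dist (p i) x < δ := by
  obtain ⟨N, U, hUo, hUc, hUδ, hUm⟩ := hS δ hδ
  have hcenter (i : Fin N) : ∃ p, (U i).Nonempty → p ∈ U i :=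
    (em (U i).Nonempty).elim (fun h ↦ ⟨h.some, fun _ ↦ h.some_mem⟩)
      fun h ↦ ⟨Classical.arbitrary S, fun h' ↦ absurd h' h⟩
  choose p hp using hcenter
  let π := Tuple.sort (label ∘ p)
  obtain ⟨θ, hθ⟩ := PartitionOfUnity.exists_isSubordinate isClosed_univ (U ∘ π)
    (fun _ ↦ hUo _) fun x _ ↦ by
      obtain ⟨i, hi⟩ := hUc x
      exact mem_iUnion.2 ⟨π.symm i, by simpa using hi⟩
  have hmem (x : S) (i : Fin N) (hi : i ∈ θ.finsupport x) : x ∈ U (π i) :=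
    hθ i (subset_tsupport _ ((θ.mem_finsupport x).1 hi))
  refine ⟨N, θ, p ∘ π, Tuple.monotone_sort (label ∘ p), fun x ↦ ?_, fun x i hi ↦
    hUδ _ _ (hp _ ⟨x, hmem x i hi⟩) x (hmem x i hi)⟩
  rw [← Finset.card_map π.toEmbedding]
  refine hUm x _ fun i hi ↦ ?_
  obtain ⟨j, hj, rfl⟩ := Finset.mem_map.1 hi
  exact hmem x j hj

end CoveringDim

section Hopf

open FreeAbelianGroup OrderedChain

theorem faceSum_ofFn {V : Type*} {n : ℕ} (f : Fin (n + 1) → V) : faceSum (List.ofFn f) =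
    ∑ j : Fin (n + 1), (-1 : ℤ) ^ (j : ℕ) • of (List.ofFn fun i ↦ f (j.succAbove i)) := by
  induction n with
  | zero => simp [faceSum]
  | succ n ih =>
    rw [Fin.sum_univ_succ, List.ofFn_succ, faceSum, ih, map_sum, sub_eq_add_neg,
      ← Finset.sum_neg_distrib]
    refine congrArg₂ (· + ·) (by simp) (Finset.sum_congr rfl fun j _ ↦ ?_)
    rw [map_zsmul, Fin.val_succ, pow_succ, mul_neg_one, neg_smul, List.ofFn_succ]
    simp

theorem coboundary_ofFn {V F : Type*} [AddCommGroup F] (u : List V → F) {n : ℕ}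
    (f : Fin (n + 1) → V) : coboundary u (List.ofFn f) =
      ∑ j : Fin (n + 1), (-1 : ℤ) ^ (j : ℕ) • u (List.ofFn fun i ↦ f (j.succAbove i)) := by
  simp only [coboundary_apply, faceSum_ofFn, map_sum, map_zsmul, lift_apply_of]

/-- The alternating cochain on the standard simplex with `k + 3` vertices which is `1` on the facet
`[1, …, k + 2]` and `0` on the other facets. -/
def facetCochain (k : ℕ) : List (Fin (k + 3)) → ℤ :=
  pullback sort fun l ↦ if l = List.ofFn (Fin.succ : Fin (k + 2) → Fin (k + 3)) then 1 else 0

variable {k : ℕ}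

theorem facetCochain_ofFn_of_monotone {f : Fin (k + 2) → Fin (k + 3)} (hf : Monotone f) :
    facetCochain k (List.ofFn f) = if ∀ i, f i = i.succ then 1 else 0 := by
  rw [facetCochain, pullback_apply]
  by_cases hinj : Function.Injective f
  · rw [sort_of_sorted (List.pairwise_ofFn.2 fun _ _ ↦ (hf.strictMono_of_injective hinj ·)),
      lift_apply_of]
    simp only [List.ofFn_inj, funext_iff]
  · rw [sort_eq_zero_of_not_nodup (mt List.nodup_ofFn.1 hinj), map_zero, if_neg]
    exact fun h ↦ hinj (funext h ▸ Fin.succ_injective _)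

theorem coboundary_facetCochain_eq_zero {l : List (Fin (k + 3))} (hl : l.length = k + 3)
    {j : Fin (k + 3)} (hj : j ∉ l) : coboundary (facetCochain k) l = 0 := by
  rw [facetCochain, coboundary_pullback boundary_sort, pullback_apply,
    sort_eq_zero_of_card_lt (s := Finset.univ.erase j), map_zero]
  · exact fun x hx ↦ Finset.mem_erase.2 ⟨fun h ↦ hj (h ▸ hx), Finset.mem_univ _⟩
  · rw [Finset.card_erase_of_mem (Finset.mem_univ _), Finset.card_fin, hl]
    omega

variable {S : Type*} [MetricSpace S] {A : Set S} {δ ε : ℝ} {label : S → Fin (k + 3)}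

theorem isRelCocycle_coboundary_facetCochain
    (hA : ∀ a ∈ A, ∃ j, ∀ y, dist y a < ε → label y ≠ j) :
    IsRelCocycle A ε (k + 2) (coboundary (facetCochain k ∘ List.map label)) where
  eq_zero_of_isNear l hl := by
    rintro ⟨a, ha, hla⟩
    obtain ⟨j, hj⟩ := hA a ha
    rw [← pullback_map, coboundary_pullback (boundary_map label), pullback_map]
    refine coboundary_facetCochain_eq_zero (by simp [hl]) (j := j) fun hjl ↦ ?_
    obtain ⟨y, hy, hyj⟩ := List.mem_map.1 hjl
    exact hj y (hla y hy) hyj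
  coboundary_eq_zero l _ _ := by rw [coboundary_coboundary]; rfl

theorem isLabelDegree_facetCochain_sub {N : ℕ} {p : Fin N → S} {b : List S → ℤ}
    (hp : Monotone (label ∘ p)) (hA : ∀ a ∈ A, ∃ j, ∀ y, dist y a < δ → label y ≠ j)
    (hb : ∀ l, l.length = k + 2 → IsNear A δ l → b l = 0) :
    IsLabelDegree (label ∘ p) (fun σ ↦ ∃ a ∈ A, ∀ i ∈ σ, dist (p i) a < δ)
      fun f ↦ (facetCochain k ∘ List.map label - b) (List.ofFn (p ∘ f)) where
  monotone := hp
  subset := fun ⟨a, ha, haσ⟩ hτσ ↦ ⟨a, ha, fun i hi ↦ haσ i (hτσ hi)⟩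
  exists_ne := fun ⟨a, ha, haσ⟩ ↦
    let ⟨j, hj⟩ := hA a ha
    ⟨j, fun i hi ↦ hj _ (haσ i hi)⟩
  eq_ite {τ} := by
    rintro ⟨a, ha, haτ⟩ h
    have hnear : IsNear A δ (List.ofFn (p ∘ τ.orderEmbOfFin h)) := ⟨a, ha, fun x hx ↦ by
      obtain ⟨i, rfl⟩ := (List.mem_ofFn' _ _).1 hx
      exact haτ _ (Finset.orderEmbOfFin_mem τ h i)⟩
    rw [Pi.sub_apply, hb _ (List.length_ofFn ..) hnear, sub_zero, Function.comp_apply,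
      List.map_ofFn]
    exact facetCochain_ofFn_of_monotone (hp.comp (τ.orderEmbOfFin h).monotone)

theorem CoveringDimLE.exists_eq_tailBubble [Nonempty S] (hS : CoveringDimLE (k + 2) S)
    (hδ : 0 < δ) (hA : ∀ a ∈ A, ∃ j, ∀ y, dist y a < δ → label y ≠ j) (hε : 0 < ε)
    (hu : coboundary (facetCochain k ∘ List.map label) ∈ relCoboundaries ℤ A ε (k + 2)) :
    ∃ (t : S → Fin (k + 3) → ℝ) (ψ : S → SphereSpace k), Continuous t ∧
      (∀ x, t x ∈ stdSimplex ℝ (Fin (k + 3))) ∧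
      (∀ x j, (∀ y, dist y x < δ → label y ≠ j) → t x j = 0) ∧
      Continuous ψ ∧ (∀ x, ψ x ≠ 0) ∧ ∀ a ∈ A, ψ a = tailBubble k (t a) := by
  obtain ⟨b, hbA, hb⟩ := hu
  set δ' := min δ (ε / 2)
  have hδ'δ : δ' ≤ δ := min_le_left _ _
  have hδ'ε : δ' ≤ ε / 2 := min_le_right _ _
  obtain ⟨N, θ, p, hp, hcard, hpθ⟩ :=
    hS.exists_partitionOfUnity_monotone (lt_min hδ (half_pos hε)) label
  have hdeg := isLabelDegree_facetCochain_sub (A := A) (δ := δ') hp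
    (fun a ha ↦ (hA a ha).imp fun j hj y hy ↦ hj y (hy.trans_le hδ'δ))
    fun l hl hnear ↦ hbA l hl (hnear.mono (by linarith))
  obtain ⟨ψ, hψ, hψ0, hψA⟩ := hdeg.exists_continuous_ne_zero (θ := θ) (by
    intro x h
    set e := (θ.finsupport x).orderEmbOfFin h
    have he (i) : dist (p (e i)) x < ε / 2 :=
      (hpθ x _ (Finset.orderEmbOfFin_mem _ h i)).trans_le hδ'ε
    have hsmall : IsSmall ε (List.ofFn (p ∘ e)) := fun y hy y' hy' ↦ by
      obtain ⟨i, rfl⟩ := (List.mem_ofFn' _ _).1 hy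
      obtain ⟨i', rfl⟩ := (List.mem_ofFn' _ _).1 hy'
      exact (dist_triangle_right _ _ x).trans_lt ((add_lt_add (he i) (he i')).trans_eq
        (add_halves ε))
    have hzero := sub_eq_zero.2 (hb _ (List.length_ofFn ..) hsmall)
    rw [← Pi.sub_apply, ← map_sub, coboundary_ofFn] at hzero
    simpa only [smul_eq_mul, Function.comp_def] using hzero) hcard
  exact ⟨labelSum (label ∘ p) θ, ψ, continuous_labelSum, fun x ↦ labelSum_mem_stdSimplex,
    fun x j hj ↦ labelSum_eq_zero fun i hi ↦ hj _ ((hpθ x i hi).trans_le hδ'δ), hψ, hψ0,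
    fun a ha ↦ hψA a ⟨a, ha, hpθ a⟩⟩

theorem exists_inv_le_apply {t : Fin (k + 3) → ℝ} (ht : t ∈ stdSimplex ℝ (Fin (k + 3))) :
    ∃ j, ((k : ℝ) + 3)⁻¹ ≤ t j := by
  obtain ⟨j, hj⟩ := Finite.exists_max t
  refine ⟨j, (inv_le_iff_one_le_mul₀ (by positivity)).2 ?_⟩
  calc 1 = ∑ i, t i := ht.2.symm
    _ ≤ ∑ _i : Fin (k + 3), t j := Finset.sum_le_sum fun i _ ↦ hj i
    _ = t j * (k + 3) := by simp [mul_comm]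

variable {φ : S → Fin (k + 3) → ℝ}

theorem exists_forall_label_ne_of_uniformContinuous {r : ℝ} (hr : 0 < r) (hφ : UniformContinuous φ)
    (hlabel : ∀ x, 2 * r ≤ φ x (label x)) : ∃ δ > 0, ∀ a j, φ a j ≤ r →
      ∀ y, dist y a < δ → label y ≠ j := by
  obtain ⟨δ, hδ, hφδ⟩ := Metric.uniformContinuous_iff.1 hφ r hr
  refine ⟨δ, hδ, ?_⟩
  rintro a _ haj y hya rfl
  have hdist := (dist_le_pi_dist (φ y) (φ a) (label y)).trans_lt (hφδ hya)
  rw [Real.dist_eq] at hdist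
  linarith [(abs_lt.1 hdist).2, hlabel y]

theorem CoveringDimLE.exists_hasEssentialClass [CompactSpace S] (hS : CoveringDimLE (k + 2) S)
    (hφc : Continuous φ) (hφ : ∀ x, φ x ∈ stdSimplex ℝ (Fin (k + 3))) (hess : ¬IsInessential φ) :
    ∃ A : Set S, ∃ ε > 0, HasEssentialClass ℤ A ε (k + 2) := by
  have : Nonempty S := by
    by_contra h
    rw [not_nonempty_iff] at h
    exact hess ⟨φ, hφc, h.elim⟩
  choose label hlabel using fun x ↦ exists_inv_le_apply (hφ x)
  set r : ℝ := ((k : ℝ) + 3)⁻¹ / 2 with hr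
  have hr0 : 0 < r := by positivity
  obtain ⟨δ, hδ, hne⟩ := exists_forall_label_ne_of_uniformContinuous hr0
    (CompactSpace.uniformContinuous_of_continuous hφc)
    fun x ↦ (mul_div_cancel₀ _ two_ne_zero).trans_le (hlabel x)
  have hA (a : S) (ha : minCoord (φ a) ≤ r) :
      ∃ j, φ a j ≤ r ∧ ∀ y, dist y a < δ → label y ≠ j := by
    obtain ⟨j, hj⟩ := exists_eq_minCoord (φ a)
    exact ⟨j, hj ▸ ha, hne a j (hj ▸ ha)⟩
  refine ⟨{x | minCoord (φ x) ≤ r}, δ, hδ, _,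
    isRelCocycle_coboundary_facetCochain fun a ha ↦ (hA a ha).imp fun _ ↦ And.right,
    fun ε hε hu ↦ hess ?_⟩
  obtain ⟨t, ψ, htc, ht, htzero, hψ, hψ0, hψt⟩ := hS.exists_eq_tailBubble hδ
    (fun a ha ↦ (hA a ha).imp fun _ ↦ And.right) hε hu
  refine .of_eq_tailBubble hφc htc hφ ht hr0 (fun x hx ↦ ?_) hψ hψ0 hψt
  obtain ⟨j, hj, hjne⟩ := hA x hx
  refine ⟨j, htzero x j hjne, ?_⟩
  calc ((k : ℝ) + 3) * φ x j ≤ (k + 3) * r := by gcongr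
    _ = 1 / 2 := by rw [hr]; field_simp
    _ < 1 := by norm_num

end Hopf

section Reduction

variable {S : Type*} [TopologicalSpace S] {n N : ℕ} {θ : PartitionOfUnity (Fin N) S}
  {ρ : Finset (Fin N)} {x : S}

/-- Replace the family `θ`, over the part of the space lying over the simplex `ρ` of the nerve, by
the values of a map `ψ` to the space spanned by the `n` vertices of `ρ`. -/
noncomputable def replaceOver (θ : PartitionOfUnity (Fin N) S) (h : ρ.card = n)
    (ψ : {x | θ.finsupport x ⊆ ρ} → Fin n → ℝ) (x : S) (i : Fin N) : ℝ :=
  open Classical in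
  if hx : θ.finsupport x ⊆ ρ then Function.extend (ρ.orderEmbOfFin h) (ψ ⟨x, hx⟩) 0 i else θ i x

variable {h : ρ.card = n} {ψ : {x | θ.finsupport x ⊆ ρ} → Fin n → ℝ}

theorem replaceOver_orderEmbOfFin (x : {x | θ.finsupport x ⊆ ρ}) (j : Fin n) :
    replaceOver θ h ψ x (ρ.orderEmbOfFin h j) = ψ x j := by
  rw [replaceOver, dif_pos (show θ.finsupport x ⊆ ρ from x.2)]
  exact (ρ.orderEmbOfFin h).injective.extend_apply _ _ j

theorem replaceOver_of_notMem (hx : θ.finsupport x ⊆ ρ) {i : Fin N} (hi : i ∉ ρ) :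
    replaceOver θ h ψ x i = 0 := by
  rw [replaceOver, dif_pos hx, Function.extend_apply']
  · rfl
  · rintro ⟨j, rfl⟩
    exact hi (Finset.orderEmbOfFin_mem _ _ _)

theorem exists_orderEmbOfFin_eq (h : ρ.card = n) {i : Fin N} (hi : i ∈ ρ) :
    ∃ j, ρ.orderEmbOfFin h j = i := by
  rwa [← mem_range, Finset.range_orderEmbOfFin]

theorem replaceOver_eq_self
    (hψ : ∀ x : {x | θ.finsupport x ⊆ ρ}, (∃ j, θ (ρ.orderEmbOfFin h j) x = 0) →
      ψ x = fun j ↦ θ (ρ.orderEmbOfFin h j) x)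
    (hx : ∃ i ∈ ρ, θ i x = 0) : replaceOver θ h ψ x = fun i ↦ θ i x := by
  by_cases hxρ : θ.finsupport x ⊆ ρ
  · obtain ⟨i, hi, hix⟩ := hx
    obtain ⟨j, rfl⟩ := exists_orderEmbOfFin_eq h hi
    funext i
    by_cases hi : i ∈ ρ
    · obtain ⟨j', rfl⟩ := exists_orderEmbOfFin_eq h hi
      rw [replaceOver_orderEmbOfFin ⟨x, hxρ⟩, hψ ⟨x, hxρ⟩ ⟨j, hix⟩]
    · rw [replaceOver_of_notMem hxρ hi]
      by_contra hne
      exact hi (hxρ ((θ.mem_finsupport x).2 (Ne.symm hne)))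
  · funext i
    rw [replaceOver, dif_neg hxρ]

theorem finsupport_subset_or_exists_eq_zero (hcard : (θ.finsupport x).card ≤ ρ.card) :
    θ.finsupport x ⊆ ρ ∨ ∃ i ∈ ρ, θ i x = 0 := by
  by_contra! hcon
  exact hcon.1 (Finset.eq_of_subset_of_card_le
    (fun i hi ↦ (θ.mem_finsupport x).2 (hcon.2 i hi)) hcard).ge

theorem continuous_replaceOver (hψc : Continuous ψ)
    (hψ : ∀ x : {x | θ.finsupport x ⊆ ρ}, (∃ j, θ (ρ.orderEmbOfFin h j) x = 0) →
      ψ x = fun j ↦ θ (ρ.orderEmbOfFin h j) x)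
    (hcard : ∀ x, (θ.finsupport x).card ≤ ρ.card) : Continuous (replaceOver θ h ψ) := by
  have hin : ContinuousOn (replaceOver θ h ψ) {x | θ.finsupport x ⊆ ρ} := by
    rw [continuousOn_iff_continuous_domRestrict]
    refine continuous_pi fun i ↦ ?_
    by_cases hi : i ∈ ρ
    · obtain ⟨j, rfl⟩ := exists_orderEmbOfFin_eq h hi
      exact ((continuous_apply j).comp hψc).congr fun x ↦ (replaceOver_orderEmbOfFin x j).symm
    · exact continuous_const.congr fun x ↦ (replaceOver_of_notMem x.2 hi).symm
  have hout : ContinuousOn (replaceOver θ h ψ) (⋃ i ∈ ρ, {x | θ i x = 0}) :=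
    (continuous_pi fun i ↦ (θ i).continuous).continuousOn.congr fun x hx ↦
      replaceOver_eq_self hψ (by simpa using hx)
  have hclosed : IsClosed (⋃ i ∈ ρ, {x | θ i x = 0}) :=
    ρ.finite_toSet.isClosed_biUnion fun i _ ↦ isClosed_eq (θ i).continuous continuous_const
  rw [← continuousOn_univ]
  convert hin.union_of_isClosed hout isClosed_setOf_finsupport_subset hclosed
  exact (eq_univ_of_forall fun x ↦ (finsupport_subset_or_exists_eq_zero (hcard x)).imp_right
    fun hx ↦ by simpa using hx).symm

theorem exists_continuous_vanishing_on_face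
    (hess : IsInessential fun (x : {x | θ.finsupport x ⊆ ρ}) j ↦ θ (ρ.orderEmbOfFin h j) x)
    (hcard : ∀ x, (θ.finsupport x).card ≤ ρ.card) :
    ∃ F : S → Fin N → ℝ, Continuous F ∧ ∀ x, (∀ i, 0 ≤ F x i) ∧ (∃ i, 0 < F x i) ∧
      (∀ i, θ i x = 0 → F x i = 0) ∧ ∃ i ∈ ρ, F x i = 0 := by
  obtain ⟨ψ, hψc, hψ⟩ := hess
  have hψeq := fun x ↦ (hψ x).2.2.2
  refine ⟨replaceOver θ h ψ, continuous_replaceOver hψc hψeq hcard, fun x ↦ ?_⟩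
  by_cases hx : ∃ i ∈ ρ, θ i x = 0
  · rw [replaceOver_eq_self hψeq hx]
    exact ⟨fun i ↦ θ.nonneg i x, θ.exists_pos (mem_univ x), fun _ ↦ id, hx⟩
  have hxρ := (finsupport_subset_or_exists_eq_zero (hcard x)).resolve_right hx
  obtain ⟨hnonneg, ⟨j₀, hj₀⟩, ⟨j₁, hj₁⟩, -⟩ := hψ ⟨x, hxρ⟩
  refine ⟨fun i ↦ ?_, ⟨_, hj₁.trans_eq (replaceOver_orderEmbOfFin ⟨x, hxρ⟩ j₁).symm⟩,
    fun i hi ↦ replaceOver_of_notMem hxρ fun hiρ ↦ hx ⟨i, hiρ, hi⟩,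
    _, Finset.orderEmbOfFin_mem _ h j₀, (replaceOver_orderEmbOfFin ⟨x, hxρ⟩ j₀).trans hj₀⟩
  by_cases hi : i ∈ ρ
  · obtain ⟨j, rfl⟩ := exists_orderEmbOfFin_eq h hi
    exact (hnonneg j).trans_eq (replaceOver_orderEmbOfFin ⟨x, hxρ⟩ j).symm
  · exact (replaceOver_of_notMem hxρ hi).ge

theorem exists_partitionOfUnity_eq_zero_iff {F : S → Fin N → ℝ} (hF : Continuous F)
    (hF0 : ∀ x i, 0 ≤ F x i) (hFpos : ∀ x, ∃ i, 0 < F x i) :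
    ∃ θ : PartitionOfUnity (Fin N) S, ∀ i x, θ i x = 0 ↔ F x i = 0 := by
  have hsum (x : S) : 0 < ∑ i, F x i :=
    let ⟨i, hi⟩ := hFpos x
    Finset.sum_pos' (fun i _ ↦ hF0 x i) ⟨i, Finset.mem_univ _, hi⟩
  have hFi (i : Fin N) : Continuous fun x ↦ F x i := (continuous_apply i).comp hF
  have hone (x : S) : ∑ i, F x i / ∑ j, F x j = 1 := by
    rw [← Finset.sum_div, div_self (hsum x).ne']
  refine ⟨⟨fun i ↦ ⟨fun x ↦ F x i / ∑ j, F x j, (hFi i).div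
    (continuous_finsetSum _ fun j _ ↦ hFi j) fun x ↦ (hsum x).ne'⟩, locallyFinite_of_finite _,
    fun i x ↦ div_nonneg (hF0 x i) (hsum x).le, fun x _ ↦ ?_, fun x ↦ ?_⟩, fun i x ↦ ?_⟩
  · exact (finsum_eq_sum_of_fintype _).trans (hone x)
  · exact ((finsum_eq_sum_of_fintype _).trans (hone x)).le
  · exact div_eq_zero_iff.trans (or_iff_left (hsum x).ne')

theorem exists_finsupport_ne
    (hess : IsInessential fun (x : {x | θ.finsupport x ⊆ ρ}) j ↦ θ (ρ.orderEmbOfFin h j) x)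
    (hcard : ∀ x, (θ.finsupport x).card ≤ ρ.card) :
    ∃ θ' : PartitionOfUnity (Fin N) S, ∀ x,
      θ'.finsupport x ⊆ θ.finsupport x ∧ θ'.finsupport x ≠ ρ := by
  obtain ⟨F, hFc, hF⟩ := exists_continuous_vanishing_on_face hess hcard
  obtain ⟨θ', hθ'⟩ :=
    exists_partitionOfUnity_eq_zero_iff hFc (fun x ↦ (hF x).1) fun x ↦ (hF x).2.1
  have hmem (x : S) (i : Fin N) : i ∈ θ'.finsupport x ↔ F x i ≠ 0 := by
    rw [PartitionOfUnity.mem_finsupport, Function.mem_support, ne_eq, hθ']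
  refine ⟨θ', fun x ↦ ⟨fun i hi ↦ (θ.mem_finsupport x).2 fun h ↦
    (hmem x i).1 hi ((hF x).2.2.1 i h), fun heq ↦ ?_⟩⟩
  obtain ⟨i, hi, hix⟩ := (hF x).2.2.2
  exact (hmem x i).1 (heq ▸ hi) hix

theorem exists_finsupport_card_lt
    (hess : ∀ A : Set S, IsClosed A → ∀ φ : A → Fin n → ℝ, Continuous φ →
      (∀ x, φ x ∈ stdSimplex ℝ (Fin n)) → IsInessential φ)
    (θ : PartitionOfUnity (Fin N) S) (hcard : ∀ x, (θ.finsupport x).card ≤ n) :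
    ∃ θ' : PartitionOfUnity (Fin N) S, ∀ x,
      θ'.finsupport x ⊆ θ.finsupport x ∧ (θ'.finsupport x).card < n := by
  suffices key : ∀ R : Finset (Finset (Fin N)), (∀ ρ ∈ R, ρ.card = n) →
      ∃ θ' : PartitionOfUnity (Fin N) S, ∀ x,
        θ'.finsupport x ⊆ θ.finsupport x ∧ θ'.finsupport x ∉ R by
    obtain ⟨θ', hθ'⟩ := key (Finset.univ.powersetCard n) fun ρ hρ ↦
      (Finset.mem_powersetCard.1 hρ).2
    refine ⟨θ', fun x ↦ ⟨(hθ' x).1, ((Finset.card_le_card (hθ' x).1).trans (hcard x)).lt_of_ne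
      fun h ↦ (hθ' x).2 (Finset.mem_powersetCard.2 ⟨Finset.subset_univ _, h⟩)⟩⟩
  intro R
  induction R using Finset.induction_on with
  | empty => exact fun _ ↦ ⟨θ, fun x ↦ ⟨Finset.Subset.refl _, Finset.notMem_empty _⟩⟩
  | insert ρ R _ ih =>
    intro hR
    obtain ⟨θ₁, hθ₁⟩ := ih fun τ hτ ↦ hR τ (Finset.mem_insert_of_mem hτ)
    have hρ : ρ.card = n := hR ρ (Finset.mem_insert_self _ _)
    have hcard₁ (x : S) : (θ₁.finsupport x).card ≤ n :=
      (Finset.card_le_card (hθ₁ x).1).trans (hcard x)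
    obtain ⟨θ₂, hθ₂⟩ := exists_finsupport_ne (h := hρ)
      (hess _ isClosed_setOf_finsupport_subset _
        (continuous_pi fun j ↦ (θ₁ _).continuous.comp continuous_subtype_val)
        fun x ↦ ⟨fun j ↦ θ₁.nonneg _ _, sum_orderEmbOfFin_eq_one hρ x.2⟩)
      fun x ↦ (hcard₁ x).trans hρ.ge
    refine ⟨θ₂, fun x ↦ ⟨(hθ₂ x).1.trans (hθ₁ x).1, fun hx ↦ ?_⟩⟩
    obtain heq | hxR := Finset.mem_insert.1 hx
    · exact (hθ₂ x).2 heq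
    · have heq := Finset.eq_of_subset_of_card_le (hθ₂ x).1 ((hcard₁ x).trans (hR _ hx).ge)
      exact (hθ₁ x).2 (heq ▸ hxR)

end Reduction

section EssentialMap

variable {X : Type*} [MetricSpace X] {m : ℕ}

theorem CoveringDimLE.exists_not_isInessential (hX : CoveringDimLE (m + 1) X)
    (hX' : ¬CoveringDimLE m X) :
    ∃ A : Set X, IsClosed A ∧ ∃ φ : A → Fin (m + 2) → ℝ, Continuous φ ∧
      (∀ x, φ x ∈ stdSimplex ℝ (Fin (m + 2))) ∧ ¬IsInessential φ := by
  by_contra! hess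
  refine hX' fun δ hδ ↦ ?_
  obtain ⟨N, θ, hcard, hdist⟩ := hX.exists_partitionOfUnity hδ
  obtain ⟨θ', hθ'⟩ := exists_finsupport_card_lt hess θ hcard
  have hmem (x : X) (i : Fin N) (hi : θ' i x ≠ 0) : i ∈ θ.finsupport x :=
    (hθ' x).1 ((θ'.mem_finsupport x).2 hi)
  refine ⟨N, fun i ↦ {x | θ' i x ≠ 0}, fun i ↦ isOpen_ne_fun (θ' i).continuous continuous_const,
    fun x ↦ (θ'.exists_pos (mem_univ x)).imp fun i ↦ ne_of_gt,
    fun i x hx y hy ↦ hdist i x y (hmem x i hx) (hmem y i hy), fun x s hs ↦ ?_⟩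
  exact (Finset.card_le_card fun i hi ↦ (θ'.mem_finsupport x).2 (hs i hi)).trans
    (Nat.le_of_lt_succ (hθ' x).2)

theorem CoveringDimLE.subtype (hX : CoveringDimLE m X) (A : Set X) : CoveringDimLE m A := by
  intro δ hδ
  obtain ⟨N, U, hUo, hUc, hUδ, hUm⟩ := hX δ hδ
  exact ⟨N, fun i ↦ Subtype.val ⁻¹' U i, fun i ↦ (hUo i).preimage continuous_subtype_val,
    fun x ↦ hUc x, fun i x hx y hy ↦ hUδ i x hx y hy, fun x ↦ hUm x⟩

end EssentialMap

section Covers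

theorem exists_le_of_biInf_le {ι : Type*} {s : Set ι} {f : ι → ℕ∞} {m : ℕ}
    (h : ⨅ i ∈ s, f i ≤ m) : ∃ i ∈ s, f i ≤ m := by
  simp only [← ENat.lt_natCast_add_one_iff] at h ⊢
  simpa only [iInf_lt_iff, exists_prop] using h

theorem covD_le_iff {X : Type*} [TopologicalSpace X] {α : Set (Set X)} {m : ℕ} :
    covD α ≤ m ↔ ∃ β, IsOpenCover β ∧ Refines β α ∧ ord β ≤ m := by
  constructor
  · intro h
    obtain ⟨β, ⟨hβ, hβα⟩, hord⟩ := exists_le_of_biInf_le h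
    exact ⟨β, hβ, hβα, hord⟩
  · rintro ⟨β, hβ, hβα, hord⟩
    exact (iInf₂_le β ⟨hβ, hβα⟩).trans hord

variable {X : Type*} [MetricSpace X] [CompactSpace X] {m : ℕ}

theorem coveringDimLE_of_topDim_le (h : topDim X ≤ m) : CoveringDimLE m X := by
  intro δ hδ
  have hballs : IsOpenCover (range fun x : X ↦ Metric.ball x (δ / 2)) :=
    ⟨by rintro _ ⟨x, rfl⟩; exact Metric.isOpen_ball,
      eq_univ_of_forall fun x ↦ ⟨_, ⟨x, rfl⟩, Metric.mem_ball_self (half_pos hδ)⟩⟩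
  obtain ⟨β, hβ, hβα, hord⟩ := covD_le_iff.1 ((le_iSup₂ (f := fun α _ ↦ covD α) _ hballs).trans h)
  obtain ⟨t, ht⟩ := isCompact_univ.elim_finite_subcover (fun V : β ↦ V.1) (fun V ↦ hβ.1 _ V.2)
    (by rw [← sUnion_eq_iUnion, hβ.2])
  have hinj : Function.Injective fun i : Fin t.card ↦ (t.equivFin.symm i).1.1 :=
    Subtype.val_injective.comp (Subtype.val_injective.comp t.equivFin.symm.injective)
  refine ⟨t.card, fun i ↦ (t.equivFin.symm i).1.1, fun i ↦ hβ.1 _ (t.equivFin.symm i).1.2,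
    fun x ↦ ?_, fun i x hx y hy ↦ ?_, fun x s hs ↦ ?_⟩
  · obtain ⟨V, hVt, hx⟩ := mem_iUnion₂.1 (ht (mem_univ x))
    exact ⟨t.equivFin ⟨V, hVt⟩, by simpa using hx⟩
  · obtain ⟨_, ⟨z, rfl⟩, hz⟩ := hβα _ (t.equivFin.symm i).1.2
    linarith [Metric.mem_ball.1 (hz hx), Metric.mem_ball.1 (hz hy), dist_triangle_right x y z]
  · rw [← Finset.card_map ⟨_, hinj⟩]
    refine ord_le_iff.1 hord _ (fun V hV ↦ ?_) ⟨x, fun V hV ↦ ?_⟩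
    · obtain ⟨i, -, rfl⟩ := Finset.mem_map.1 hV
      exact (t.equivFin.symm i).1.2
    · obtain ⟨i, hi, rfl⟩ := Finset.mem_map.1 hV
      exact hs i hi

theorem topDim_le_of_forall_exists_cover
    (h : ∀ δ > 0, ∃ β : Set (Set X), IsOpenCover β ∧ ord β ≤ m ∧
      ∀ V ∈ β, V.Nonempty ∧ ∀ x ∈ V, ∀ y ∈ V, dist x y < δ) : topDim X ≤ m := by
  refine iSup₂_le fun α hα ↦ ?_
  obtain ⟨δ, hδ, hball⟩ := lebesgue_number_lemma_of_metric_sUnion isCompact_univ hα.1 hα.2.ge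
  obtain ⟨β, hβ, hord, hsmall⟩ := h δ hδ
  refine covD_le_iff.2 ⟨β, hβ, fun V hV ↦ ?_, hord⟩
  obtain ⟨⟨x, hx⟩, hdist⟩ := hsmall V hV
  obtain ⟨U, hU, hxU⟩ := hball x (mem_univ x)
  exact ⟨U, hU, fun y hy ↦ hxU (hdist y hy x hx)⟩

end Covers

section Ostrand

variable {X Z ι : Type*} [TopologicalSpace X] {N m : ℕ}
  {θ : PartitionOfUnity (Fin N) X} {x : X} {t : ℝ} {R R' : Finset (Fin N)}

/-- The points at which the members of `θ` with index in `R` exceed the threshold `t` and the others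
lie below it. -/
def levelCell (θ : PartitionOfUnity (Fin N) X) (t : ℝ) (R : Finset (Fin N)) : Set X :=
  {x | (∀ i ∈ R, t < θ i x) ∧ ∀ i ∉ R, θ i x < t}

theorem isOpen_levelCell : IsOpen (levelCell θ t R) := by
  simp only [levelCell, ofPred_and, ofPred_forall]
  exact (isOpen_biInter_finset fun i _ ↦ isOpen_lt continuous_const (θ i).continuous).inter
    (isOpen_iInter_of_finite fun i ↦ isOpen_iInter_of_finite fun _ ↦
      isOpen_lt (θ i).continuous continuous_const)

theorem mem_iff_of_mem_levelCell (hx : x ∈ levelCell θ t R) {i : Fin N} : i ∈ R ↔ t < θ i x :=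
  ⟨hx.1 i, fun h ↦ by_contra fun hi ↦ (hx.2 i hi).not_gt h⟩

theorem eq_of_mem_levelCell (hx : x ∈ levelCell θ t R) (hx' : x ∈ levelCell θ t R') : R = R' := by
  ext i
  rw [mem_iff_of_mem_levelCell hx, mem_iff_of_mem_levelCell hx']

theorem exists_mem_levelCell (hx : ∀ i, θ i x ≠ t) : ∃ R, x ∈ levelCell θ t R := by
  classical
  exact ⟨Finset.univ.filter fun i ↦ t < θ i x, fun i hi ↦ (Finset.mem_filter.1 hi).2,
    fun i hi ↦ (hx i).lt_of_le (by simpa using hi)⟩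

theorem exists_inv_le_of_card_finsupport_le (hx : (θ.finsupport x).card ≤ m + 1) :
    ∃ i, ((m : ℝ) + 1)⁻¹ ≤ θ i x := by
  obtain ⟨i₀, hi₀⟩ := θ.exists_pos (mem_univ x)
  have hsum : ∑ _i ∈ θ.finsupport x, ((m : ℝ) + 1)⁻¹ ≤ ∑ i ∈ θ.finsupport x, θ i x := by
    rw [θ.sum_finsupport (mem_univ x), Finset.sum_const, nsmul_eq_mul, ← div_eq_mul_inv,
      div_le_one (by positivity)]
    exact_mod_cast hx
  obtain ⟨i, -, hi⟩ := Finset.exists_le_of_sum_le ⟨i₀, (θ.mem_finsupport x).2 hi₀.ne'⟩ hsum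
  exact ⟨i, hi⟩

theorem exists_mem_finsupport_of_mem_levelCell {y : X} (hcard : (θ.finsupport x).card ≤ m + 1)
    (ht : t ∈ Ioo 0 ((m : ℝ) + 1)⁻¹) (hx : x ∈ levelCell θ t R) (hy : y ∈ levelCell θ t R) :
    ∃ i, i ∈ θ.finsupport x ∧ i ∈ θ.finsupport y := by
  obtain ⟨i, hi⟩ := exists_inv_le_of_card_finsupport_le hcard
  have hlt := ht.2.trans_le hi
  have hlt' := hy.1 i ((mem_iff_of_mem_levelCell hx).2 hlt)
  exact ⟨i, (θ.mem_finsupport x).2 (ht.1.trans hlt).ne', (θ.mem_finsupport y).2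
    (ht.1.trans hlt').ne'⟩

open Classical in
theorem card_filter_exists_eq_le (hcard : (θ.finsupport x).card ≤ m + 1) {T : Finset ℝ}
    (hT : (T : Set ℝ) ⊆ Ioo 0 ((m : ℝ) + 1)⁻¹) :
    (T.filter fun t ↦ ∃ i, θ i x = t).card ≤ m := by
  obtain ⟨i₀, hi₀⟩ := exists_inv_le_of_card_finsupport_le hcard
  have hsub : T.filter (fun t ↦ ∃ i, θ i x = t) ⊆
      ((θ.finsupport x).erase i₀).image fun i ↦ θ i x := by
    intro t ht
    obtain ⟨htT, i, rfl⟩ := Finset.mem_filter.1 ht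
    refine Finset.mem_image.2 ⟨i, Finset.mem_erase.2 ⟨?_, ?_⟩, rfl⟩
    · rintro rfl
      exact (hT htT).2.not_ge hi₀
    · exact (θ.mem_finsupport x).2 (hT htT).1.ne'
  have hi₀mem : i₀ ∈ θ.finsupport x :=
    (θ.mem_finsupport x).2 ((inv_pos.2 (by positivity)).trans_le hi₀).ne'
  calc _ ≤ _ := Finset.card_le_card hsub
    _ ≤ ((θ.finsupport x).erase i₀).card := Finset.card_image_le
    _ ≤ m := by rw [Finset.card_erase_of_mem hi₀mem]; omega

/-- The points which each map `π j` sends to the cell `R j` at level `t`. -/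
def productCell (θ : PartitionOfUnity (Fin N) X) (π : ι → Z → X) (t : ℝ)
    (R : ι → Finset (Fin N)) : Set Z :=
  {z | ∀ j, π j z ∈ levelCell θ t (R j)}

variable {π : ι → Z → X}

theorem isOpen_productCell [TopologicalSpace Z] [Finite ι] (hπ : ∀ j, Continuous (π j))
    (R : ι → Finset (Fin N)) : IsOpen (productCell θ π t R) := by
  rw [productCell, ofPred_forall]
  exact isOpen_iInter_of_finite fun j ↦ isOpen_levelCell.preimage (hπ j)

theorem exists_mem_productCell [Fintype ι] (hcard : ∀ x, (θ.finsupport x).card ≤ m + 1)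
    {T : Finset ℝ} (hT : (T : Set ℝ) ⊆ Ioo 0 ((m : ℝ) + 1)⁻¹)
    (hTcard : Fintype.card ι * m < T.card) (z : Z) : ∃ t ∈ T, ∃ R, z ∈ productCell θ π t R := by
  classical
  obtain ⟨t, htT, ht⟩ := Finset.exists_mem_notMem_of_card_lt_card <|
    (Finset.card_biUnion_le_card_mul Finset.univ
      (fun j ↦ T.filter fun t ↦ ∃ i, θ i (π j z) = t) m
      fun j _ ↦ card_filter_exists_eq_le (hcard _) hT).trans_lt hTcard
  have hne (j : ι) (i : Fin N) : θ i (π j z) ≠ t := fun h ↦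
    ht (Finset.mem_biUnion.2 ⟨j, Finset.mem_univ _, Finset.mem_filter.2 ⟨htT, i, h⟩⟩)
  choose R hR using fun j ↦ exists_mem_levelCell (hne j)
  exact ⟨t, htT, R, hR⟩

theorem CoveringDimLE.exists_isOpenCover_of_forall_continuous {X : Type*} [MetricSpace X]
    [TopologicalSpace Z] [Fintype ι] {π : ι → Z → X} (hX : CoveringDimLE m X)
    (hπ : ∀ j, Continuous (π j)) {δ : ℝ} (hδ : 0 < δ) :
    ∃ β : Set (Set Z), IsOpenCover β ∧ ord β ≤ (Fintype.card ι * m : ℕ) ∧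
      ∀ V ∈ β, V.Nonempty ∧ ∀ x ∈ V, ∀ y ∈ V, ∀ j, dist (π j x) (π j y) < δ := by
  obtain ⟨N, θ, hcard, hdist⟩ := hX.exists_partitionOfUnity hδ
  obtain ⟨T, hT, hTcard⟩ := (Ioo_infinite (a := (0 : ℝ)) (b := ((m : ℝ) + 1)⁻¹)
    (by positivity)).exists_subset_card_eq (Fintype.card ι * m + 1)
  refine ⟨{V | V.Nonempty ∧ ∃ t ∈ T, ∃ R, V = productCell θ π t R}, ⟨?_, ?_⟩, ?_, ?_⟩
  · rintro _ ⟨-, t, -, R, rfl⟩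
    exact isOpen_productCell hπ R
  · refine eq_univ_of_forall fun z ↦ ?_
    obtain ⟨t, ht, R, hz⟩ := exists_mem_productCell (π := π) hcard hT (by omega) z
    exact ⟨_, ⟨⟨z, hz⟩, t, ht, R, rfl⟩, hz⟩
  · refine ord_le_iff.2 fun s hs ⟨z, hz⟩ ↦ hTcard ▸ Finset.card_le_card_of_forall_subsingleton
      (fun V t ↦ ∃ R, V = productCell θ π t R) (fun V hV ↦ (hs hV).2) ?_
    rintro t - _ ⟨hV, R, rfl⟩ _ ⟨hV', R', rfl⟩
    exact congrArg _ (funext fun j ↦ eq_of_mem_levelCell (hz _ hV j) (hz _ hV' j))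
  · rintro _ ⟨hne, t, ht, R, rfl⟩
    refine ⟨hne, fun x hx y hy j ↦ ?_⟩
    obtain ⟨i, hi, hi'⟩ := exists_mem_finsupport_of_mem_levelCell (hcard _) (hT ht) (hx j) (hy j)
    exact hdist i _ _ hi hi'

variable {X : Type*} [MetricSpace X] [CompactSpace X]

theorem topDim_le_iff : topDim X ≤ m ↔ CoveringDimLE m X := by
  refine ⟨coveringDimLE_of_topDim_le, fun h ↦ topDim_le_of_forall_exists_cover fun δ hδ ↦ ?_⟩
  obtain ⟨β, hβ, hord, hsmall⟩ :=
    h.exists_isOpenCover_of_forall_continuous (fun _ : Unit ↦ continuous_id) hδ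
  exact ⟨β, hβ, by simpa using hord,
    fun V hV ↦ ⟨(hsmall V hV).1, fun x hx y hy ↦ (hsmall V hV).2 x hx y hy ()⟩⟩

theorem CoveringDimLE.topDim_pi_le [Fintype ι] (h : CoveringDimLE m X) :
    topDim (ι → X) ≤ (Fintype.card ι * m : ℕ) :=
  topDim_le_of_forall_exists_cover fun δ hδ ↦ by
    obtain ⟨β, hβ, hord, hsmall⟩ := h.exists_isOpenCover_of_forall_continuous
      (fun j : ι ↦ continuous_apply (A := fun _ ↦ X) j) hδ
    exact ⟨β, hβ, hord, fun V hV ↦ ⟨(hsmall V hV).1,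
      fun x hx y hy ↦ (dist_pi_lt_iff hδ).2 ((hsmall V hV).2 x hx y hy)⟩⟩

end Ostrand

namespace IsCompatMetric

variable {Z : Type*} [TopologicalSpace Z] {d : Z → Z → ℝ}

theorem continuous (hd : IsCompatMetric d) : Continuous fun p : Z × Z ↦ d p.1 p.2 := by
  let _ : PseudoMetricSpace Z :=
    PseudoMetricSpace.ofDistTopology d hd.refl hd.symm hd.triangle hd.isOpen_iff
  exact continuous_dist

theorem exists_forall_le [CompactSpace Z] (hd : IsCompatMetric d) : ∃ C, ∀ x y, d x y ≤ C := by
  obtain ⟨C, hC⟩ := (isCompact_range hd.continuous).bddAbove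
  exact ⟨C, fun x y ↦ hC ⟨(x, y), rfl⟩⟩

theorem exists_forall_dist_lt [CompactSpace Z] (hd : IsCompatMetric d) {K : Type*}
    [PseudoMetricSpace K] {f : Z → K} (hf : Continuous f) {η : ℝ} (hη : 0 < η) :
    ∃ ε > 0, ∀ x y, d x y < ε → dist (f x) (f y) < η := by
  let _ : PseudoMetricSpace Z :=
    PseudoMetricSpace.ofDistTopology d hd.refl hd.symm hd.triangle hd.isOpen_iff
  obtain ⟨ε, hε, h⟩ :=
    Metric.uniformContinuous_iff.1 (CompactSpace.uniformContinuous_of_continuous hf) η hη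
  exact ⟨ε, hε, fun x y hxy ↦ h hxy⟩

theorem exists_finset_forall_lt {ι K : Type*} [PseudoMetricSpace K] [CompactSpace K]
    {d : (ι → K) → (ι → K) → ℝ} (hd : IsCompatMetric d) {ε : ℝ} (hε : 0 < ε) :
    ∃ J : Finset ι, ∃ δ > 0, ∀ x y, (∀ i ∈ J, dist (x i) (y i) < δ) → d x y < ε := by
  have hmem : {p : (ι → K) × (ι → K) | d p.1 p.2 < ε} ∈ uniformity (ι → K) := by
    rw [← nhdsSet_diagonal_eq_uniformity]
    refine (isOpen_lt hd.continuous continuous_const).mem_nhdsSet.2 ?_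
    rintro ⟨x, y⟩ (rfl : x = y)
    simpa only [mem_ofPred_eq, hd.refl] using hε
  rw [Pi.uniformity] at hmem
  obtain ⟨⟨J, δ⟩, ⟨hJ, hδ⟩, hsub⟩ := (HasBasis.iInf' fun i ↦
    Metric.uniformity_basis_dist.comap fun p : (ι → K) × (ι → K) ↦ (p.1 i, p.2 i)).mem_iff.1 hmem
  obtain ⟨η, hη, hη0⟩ := (((eventually_all_finite hJ).2 fun i hi ↦ Ioo_mem_nhdsGT (hδ i hi)).and
    (self_mem_nhdsWithin (s := Ioi (0 : ℝ)))).exists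
  refine ⟨hJ.toFinset, η, hη0, fun x y hxy ↦ ?_⟩
  refine (hsub : _ ⊆ {p | _}) (a := (x, y)) (mem_iInter₂.2 fun i hi ↦ ?_)
  exact (hxy i (hJ.mem_toFinset.2 hi)).trans (hη i hi).2

theorem exists_natAbs_forall_lt {K : Type*} [PseudoMetricSpace K] [CompactSpace K]
    {d : (ℤ → K) → (ℤ → K) → ℝ} (hd : IsCompatMetric d) {ε : ℝ} (hε : 0 < ε) :
    ∃ M : ℕ, ∃ δ > 0, ∀ x y, (∀ i : ℤ, i.natAbs ≤ M → dist (x i) (y i) < δ) → d x y < ε := by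
  obtain ⟨J, δ, hδ, h⟩ := hd.exists_finset_forall_lt hε
  exact ⟨J.sup Int.natAbs, δ, hδ, fun x y hxy ↦ h x y fun i hi ↦ hxy i (Finset.le_sup hi)⟩

end IsCompatMetric

section Widim

variable {Z : Type*} {d : Z → Z → ℝ} {T : Z → Z} {N : ℕ} {r ε : ℝ} {α β : Set (Set Z)}

theorem le_dynDist {i : ℕ} (hi : i < N) (x y : Z) :
    d (T^[i] x) (T^[i] y) ≤ dynDist d T N x y := by
  refine le_csSup ?_ ⟨i, hi, rfl⟩
  refine (((finite_Iio N).image fun i ↦ d (T^[i] x) (T^[i] y)).subset ?_).bddAbove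
  rintro _ ⟨j, hj, rfl⟩
  exact ⟨j, hj, rfl⟩

theorem dynDist_le (hr : 0 ≤ r) {x y : Z} (h : ∀ i < N, d (T^[i] x) (T^[i] y) ≤ r) :
    dynDist d T N x y ≤ r :=
  Real.sSup_le (by rintro _ ⟨i, hi, rfl⟩; exact h i hi) hr

theorem mesh_le (hr : 0 ≤ r) (h : ∀ V ∈ α, ∀ x ∈ V, ∀ y ∈ V, d x y ≤ r) : mesh d α ≤ r := by
  refine Real.sSup_le ?_ hr
  rintro _ ⟨V, hV, rfl⟩
  refine Real.sSup_le ?_ hr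
  rintro _ ⟨x, hx, y, hy, rfl⟩
  exact h V hV x hx y hy

theorem le_mesh (hr : 0 ≤ r) (hd : ∀ x y, d x y ≤ r) {V : Set Z} (hV : V ∈ α) {x y : Z}
    (hx : x ∈ V) (hy : y ∈ V) : d x y ≤ mesh d α :=
  calc d x y ≤ diamD d V := by
        refine le_csSup ⟨r, ?_⟩ ⟨x, hx, y, hy, rfl⟩
        rintro _ ⟨x, -, y, -, rfl⟩
        exact hd x y
    _ ≤ mesh d α := by
        refine le_csSup ⟨r, ?_⟩ ⟨V, hV, rfl⟩
        rintro _ ⟨V, -, rfl⟩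
        refine Real.sSup_le ?_ hr
        rintro _ ⟨x, -, y, -, rfl⟩
        exact hd x y

variable [TopologicalSpace Z]

theorem widim_le_ord (hβ : IsOpenCover β) (hr : 0 ≤ r) (hrε : r < ε)
    (h : ∀ V ∈ β, ∀ x ∈ V, ∀ y ∈ V, d x y ≤ r) : widim ε d ≤ ord β :=
  (iInf₂_le β ⟨hβ, (mesh_le hr h).trans_lt hrε⟩).trans
    (iInf₂_le β ⟨hβ, fun V hV ↦ ⟨V, hV, Subset.rfl⟩⟩)

theorem le_widim (hr : 0 ≤ r) (hd : ∀ x y, d x y ≤ r) {q : ℕ∞}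
    (h : ∀ β, IsOpenCover β → (∀ V ∈ β, ∀ x ∈ V, ∀ y ∈ V, d x y < ε) → q ≤ ord β) :
    q ≤ widim ε d := by
  refine le_iInf₂ fun α hα ↦ le_iInf₂ fun β hβ ↦ h β hβ.1 fun V hV x hx y hy ↦ ?_
  obtain ⟨U, hU, hVU⟩ := hβ.2 V hV
  exact (le_mesh hr hd hU (hVU hx) (hVU hy)).trans_lt hα.2

variable {Y : Type*} [TopologicalSpace Y] {f : Y → Z}

theorem IsOpenCover.preimage (hβ : IsOpenCover β) (hf : Continuous f) :
    IsOpenCover (preimage f '' β) := by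
  refine ⟨?_, by rw [sUnion_image, ← preimage_iUnion₂, ← sUnion_eq_biUnion, hβ.2, preimage_univ]⟩
  rintro _ ⟨V, hV, rfl⟩
  exact (hβ.1 V hV).preimage hf

theorem ord_image_preimage_le {Y Z : Type*} (f : Y → Z) (β : Set (Set Z)) :
    ord (preimage f '' β) ≤ ord β := by
  refine iSup₂_le fun n ⟨g, hg, hgβ, y, hy⟩ ↦ ?_
  choose V hVβ hV using hgβ
  refine le_iSup₂_of_le n ⟨V, fun i j hij ↦ hg ?_, hVβ, f y, mem_iInter.2 fun i ↦ ?_⟩ le_rfl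
  · rw [← hV, ← hV, hij]
  · exact (hV i).ge (mem_iInter.1 hy i)

end Widim

section FullShift

variable {K : Type*}

theorem shift_iterate_apply (N : ℕ) (x : ℤ → K) (i : ℤ) : (shift K)^[N] x i = x (i + N) := by
  induction N generalizing i with
  | zero => simp only [Function.iterate_zero, id, Nat.cast_zero, add_zero]
  | succ N ih =>
    rw [Function.iterate_succ_apply', shift, ih, Nat.cast_succ, add_right_comm, add_assoc]

/-- The sequence listing the entries of the blocks `y 0, …, y (k - 1)` one after the other from
position `0` on. Its other entries are irrelevant. -/
def concatBlocks {k n : ℕ} [NeZero k] [NeZero n] (y : Fin k → Fin n → K) : ℤ → K :=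
  fun l ↦ y (Fin.ofNat k (l.toNat / n)) (Fin.ofNat n (l.toNat % n))

theorem concatBlocks_apply {k n : ℕ} [NeZero k] [NeZero n] (y : Fin k → Fin n → K) (b : Fin k)
    (j : Fin n) : concatBlocks y ((b * n + j : ℕ) : ℤ) = y b j := by
  have hdiv : ((b : ℕ) * n + j) / n = b := by
    rw [mul_comm, Nat.mul_add_div (NeZero.pos n), Nat.div_eq_of_lt j.2, add_zero]
  have hmod : ((b : ℕ) * n + j) % n = j := by
    rw [mul_comm, Nat.mul_add_mod, Nat.mod_eq_of_lt j.2]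
  simp only [concatBlocks, Int.toNat_natCast, hdiv, hmod, Fin.ofNat_val_eq_self]

variable {n : ℕ} [NeZero n]

theorem continuous_concatBlocks [TopologicalSpace K] {k : ℕ} [NeZero k] :
    Continuous (concatBlocks : (Fin k → Fin n → K) → ℤ → K) :=
  continuous_pi fun _ ↦ (continuous_apply _).comp (continuous_apply _)

variable [MetricSpace K] [CompactSpace K] {d : (ℤ → K) → (ℤ → K) → ℝ}

theorem CoveringDimLE.exists_widim_dynDist_le (hd : IsCompatMetric d) {m : ℕ}
    (h : CoveringDimLE m (Fin n → K)) {ε : ℝ} (hε : 0 < ε) :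
    ∃ C, ∀ N, widim ε (dynDist d (shift K) N) ≤ ((N / n + C) * m : ℕ) := by
  obtain ⟨M, δ, hδ, hM⟩ := hd.exists_natAbs_forall_lt (half_pos hε)
  refine ⟨2 * M + 1, fun N ↦ ?_⟩
  let π (b : Fin (N / n + (2 * M + 1))) (z : ℤ → K) (j : Fin n) : K :=
    z ((b * n + j : ℕ) - M)
  obtain ⟨β, hβ, hord, hsmall⟩ := h.exists_isOpenCover_of_forall_continuous (π := π)
    (fun b ↦ continuous_pi fun j ↦ continuous_apply _) hδ
  rw [Fintype.card_fin] at hord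
  refine (widim_le_ord hβ (half_pos hε).le (half_lt_self hε) fun V hV x hx y hy ↦ ?_).trans hord
  refine dynDist_le (half_pos hε).le fun l hl ↦ (hM _ _ fun i hi ↦ ?_).le
  obtain ⟨c, hc⟩ : ∃ c : ℕ, i + l = c - M := ⟨(i + l + M).toNat, by omega⟩
  have hcdiv : c / n < N / n + (2 * M + 1) := by
    calc c / n ≤ (N + 2 * M * n) / n := Nat.div_le_div_right <| by
          have := Nat.le_mul_of_pos_right (2 * M) (NeZero.pos n)
          omega
      _ = N / n + 2 * M := Nat.add_mul_div_right _ _ (NeZero.pos n)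
      _ < _ := by omega
  have hdist := (dist_pi_lt_iff hδ).1 ((hsmall V hV).2 x hx y hy ⟨c / n, hcdiv⟩)
    ⟨c % n, Nat.mod_lt _ (NeZero.pos n)⟩
  simp only [π, Nat.div_add_mod'] at hdist
  rwa [shift_iterate_apply, shift_iterate_apply, hc]

theorem HasEssentialClass.exists_le_widim_dynDist (hd : IsCompatMetric d) {S : Set (Fin n → K)}
    [CompactSpace S] {F : Type*} [Field F] {A : Set S} {ε₀ : ℝ} {q : ℕ}
    (h : HasEssentialClass F A ε₀ q) (hε₀ : 0 < ε₀) :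
    ∃ ε > 0, ∀ N, ((N / n * q : ℕ) : ℕ∞) ≤ widim ε (dynDist d (shift K) N) := by
  have hη : 0 < ε₀ / 2 / 3 := by positivity
  obtain ⟨ε, hε, hcoord⟩ := hd.exists_forall_dist_lt (continuous_apply 0) hη
  obtain ⟨C, hC⟩ := hd.exists_forall_le
  refine ⟨ε, hε, fun N ↦ ?_⟩
  rcases hk : N / n with _ | k
  · simp only [zero_mul, Nat.cast_zero, zero_le]
  obtain ⟨B, hB⟩ := h.exists_pi (half_pos hε₀) (half_lt_self hε₀) k
  refine le_widim (le_max_right C 0)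
    (fun x y ↦ dynDist_le (le_max_right C 0) fun i _ ↦ (hC _ _).trans (le_max_left C 0))
    fun β hβ hsmall ↦ ?_
  let J (y : Fin (k + 1) → S) : ℤ → K := concatBlocks fun b ↦ (y b).1
  have hJ : Continuous J := continuous_concatBlocks.comp
    (continuous_pi fun b ↦ continuous_subtype_val.comp (continuous_apply b))
  refine (hB.le_ord (half_pos hε₀) (hβ.preimage hJ) ?_).trans (ord_image_preimage_le J β)
  rintro _ ⟨V, hV, rfl⟩ x hx y hy
  refine (dist_pi_lt_iff hη).2 fun b ↦ (dist_pi_lt_iff hη).2 fun j ↦ ?_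
  have hlt : (b * n + j : ℕ) < N :=
    calc (b * n + j : ℕ) < (b + 1) * n := by rw [add_one_mul]; omega
      _ ≤ N / n * n := Nat.mul_le_mul_right n (by omega)
      _ ≤ N := Nat.div_mul_le_self N n
  have hdist := hcoord _ _ ((le_dynDist hlt (J x) (J y)).trans_lt (hsmall V hV _ hx _ hy))
  simpa only [J, shift_iterate_apply, zero_add, concatBlocks_apply] using hdist

theorem tendsto_natDiv_add_mul_div (n C m : ℕ) [NeZero n] :
    Tendsto (fun N : ℕ ↦ (((N / n + C) * m : ℕ) : ℝ≥0∞) / N) atTop (nhds ((m : ℝ≥0∞) / n)) := by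
  have hn : (0 : ℝ) < n := by exact_mod_cast NeZero.pos n
  have hfloor : Tendsto (fun N : ℕ ↦ ((N / n : ℕ) : ℝ) / N) atTop (nhds (n : ℝ)⁻¹) := by
    refine ((tendsto_nat_floor_mul_div_atTop (inv_nonneg.2 hn.le)).comp
      tendsto_natCast_atTop_atTop).congr fun N ↦ ?_
    rw [Function.comp_apply, inv_mul_eq_div, Nat.floor_div_eq_div]
  have hreal := ENNReal.tendsto_ofReal
    ((hfloor.add (tendsto_const_div_atTop_nhds_zero_nat (C : ℝ))).mul_const (m : ℝ))
  have hlim : ENNReal.ofReal (((n : ℝ)⁻¹ + 0) * m) = (m : ℝ≥0∞) / n := by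
    rw [add_zero, inv_mul_eq_div, ENNReal.ofReal_div_of_pos hn, ENNReal.ofReal_natCast,
      ENNReal.ofReal_natCast]
  refine (hlim ▸ hreal).congr' ?_
  filter_upwards [eventually_gt_atTop 0] with N hN
  rw [← add_div, div_mul_eq_mul_div, ENNReal.ofReal_div_of_pos (Nat.cast_pos.2 hN),
    ENNReal.ofReal_natCast]
  norm_cast

theorem CoveringDimLE.mdim_shift_le (hd : IsCompatMetric d) {m : ℕ}
    (h : CoveringDimLE m (Fin n → K)) : mdim (shift K) d ≤ m / n := by
  refine iSup₂_le fun ε hε ↦ ?_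
  obtain ⟨C, hC⟩ := h.exists_widim_dynDist_le hd hε
  rw [← (tendsto_natDiv_add_mul_div n C m).liminf_eq]
  exact liminf_le_liminf (.of_forall fun N ↦
    ENNReal.div_le_div_right (by exact_mod_cast ENat.toENNReal_le.2 (hC N)) _)

theorem HasEssentialClass.le_mdim_shift (hd : IsCompatMetric d) {S : Set (Fin n → K)}
    [CompactSpace S] {F : Type*} [Field F] {A : Set S} {ε₀ : ℝ} {q : ℕ}
    (h : HasEssentialClass F A ε₀ q) (hε₀ : 0 < ε₀) : (q : ℝ≥0∞) / n ≤ mdim (shift K) d := by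
  obtain ⟨ε, hε, hle⟩ := h.exists_le_widim_dynDist hd hε₀
  refine le_iSup₂_of_le ε hε ?_
  rw [← (tendsto_natDiv_add_mul_div n 0 q).liminf_eq]
  exact liminf_le_liminf (.of_forall fun N ↦
    ENNReal.div_le_div_right (by exact_mod_cast ENat.toENNReal_le.2 (hle N)) _)

theorem CoveringDimLE.exists_field_hasEssentialClass {X : Type*} [MetricSpace X]
    [CompactSpace X] {k : ℕ} (h : CoveringDimLE (k + 2) X) (h' : ¬CoveringDimLE (k + 1) X) :
    ∃ S : Set X, IsClosed S ∧ ∃ (F : Type) (_ : Field F) (q : ℕ), k + 1 ≤ q ∧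
      ∃ (A : Set S) (ε : ℝ), 0 < ε ∧ HasEssentialClass F A ε q := by
  obtain ⟨S, hS, φ, hφc, hφ, hess⟩ := h.exists_not_isInessential h'
  have : CompactSpace S := isCompact_iff_compactSpace.1 hS.isCompact
  obtain ⟨A, ε, hε, hA⟩ := (h.subtype S).exists_hasEssentialClass hφc hφ hess
  obtain ⟨F, _, q, hq, δ, hδ, hF⟩ := hA.exists_field hε
  exact ⟨S, hS, F, _, q, hq, A, δ, hδ, hF⟩

end FullShift

/-- for a finite dimensional compact metric space `K` and every `n ≥ 1`,
`(dim Kⁿ - 1)/n ≤ mdim(K^ℤ, σ) ≤ (dim Kⁿ)/n`. -/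
theorem mdim_fullshift_bounds {K : Type*} [MetricSpace K] [CompactSpace K]
    (hfin : topDim K ≠ ⊤)
    (d : (ℤ → K) → (ℤ → K) → ℝ) (hd : IsCompatMetric d) (n : ℕ) (hn : 1 ≤ n) :
    ((topDim (Fin n → K) : ℝ≥0∞) - 1) / (n : ℝ≥0∞) ≤ mdim (shift K) d ∧
      mdim (shift K) d ≤ (topDim (Fin n → K) : ℝ≥0∞) / (n : ℝ≥0∞) := by
  have : NeZero n := ⟨by omega⟩
  obtain ⟨r, hr⟩ := ENat.ne_top_iff_exists.1 hfin
  obtain ⟨m, hm⟩ := ENat.ne_top_iff_exists.1 <|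
    ne_top_of_le_ne_top (ENat.natCast_ne_top _) ((topDim_le_iff.1 hr.ge).topDim_pi_le (ι := Fin n))
  have hdim : CoveringDimLE m (Fin n → K) := topDim_le_iff.1 hm.ge
  rw [← hm, ENat.toENNReal_coe]
  refine ⟨?_, hdim.mdim_shift_le hd⟩
  rcases m with _ | _ | k
  · simp
  · simp
  have hdim' : ¬CoveringDimLE (k + 1) (Fin n → K) := by
    rw [← topDim_le_iff, ← hm, Nat.cast_le]
    omega
  obtain ⟨S, hS, F, _, q, hq, A, ε, hε, hA⟩ := hdim.exists_field_hasEssentialClass hdim'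
  have : CompactSpace S := isCompact_iff_compactSpace.1 hS.isCompact
  calc (((k + 1 + 1 : ℕ) : ℝ≥0∞) - 1) / n = ((k + 1 : ℕ) : ℝ≥0∞) / n := by
        rw [Nat.cast_succ, ENNReal.add_sub_cancel_right ENNReal.one_ne_top]
    _ ≤ q / n := ENNReal.div_le_div_right (Nat.cast_le.2 hq) _
    _ ≤ mdim (shift K) d := hA.le_mdim_shift hd hε

end MeanDimPaper
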